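/- arXiv:1511.06808 — 2 statements merged into one kernel-verified Lean document; each statement's English description precedes it below -/
import Mathlib

section
/- Let D be a face-convex good drawing of K_n with outer face F and let uv be an edge of K_n such that both Side(uv,1) and Side(uv,2) contain at least three vertices. Then Δ_{Side(uv,1)} ∩ Δ_{Side(uv,2)} = D[{u,v}] ∪ D[uv], i.e. the intersection of the two convex hulls consists exactly of the edge-arc D[uv] together with the points of u and v. -/
open Set Topology

noncomputable section

abbrev Plane : Type := EuclideanSpace ℝ (Fin 2)

abbrev SpherePt : Type := ↥(Metric.sphere (0 : EuclideanSpace ℝ (Fin 3)) 1)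

/-- `γ` crosses the curve `σ` at `p`: `p` lies on both sets, and in every neighbourhood of `p`
there is a smaller neighbourhood `V` such that `V \ σ` splits into two connected "sides",
both of which meet `γ`. -/
def CrossesAt {X : Type*} [TopologicalSpace X] (σ γ : Set X) (p : X) : Prop :=
  p ∈ σ ∧ p ∈ γ ∧ ∀ U ∈ nhds p, ∃ V ∈ nhds p, V ⊆ U ∧
    ∃ C₁ C₂ : Set X, V \ σ = C₁ ∪ C₂ ∧ Disjoint C₁ C₂ ∧
      IsPreconnected C₁ ∧ IsPreconnected C₂ ∧ (γ ∩ C₁).Nonempty ∧ (γ ∩ C₂).Nonempty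

/-- `Δ` is one of the closed regions ("closed discs") bounded by the curve `C`:
it is the union of `C` with a connected component of the complement of `C`. -/
def IsClosedSide {X : Type*} [TopologicalSpace X] (C Δ : Set X) : Prop :=
  ∃ q, q ∉ C ∧ Δ = connectedComponentIn Cᶜ q ∪ C

/-- `Δ` is one of the open regions ("open discs") bounded by the curve `C`. -/
def IsOpenSide {X : Type*} [TopologicalSpace X] (C Δ : Set X) : Prop :=
  ∃ q, q ∉ C ∧ Δ = connectedComponentIn Cᶜ q

/-- `G` is a face (a connected component of the complement) of the point set `A`. -/
def IsFaceOf {X : Type*} [TopologicalSpace X] (A G : Set X) : Prop :=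
  ∃ q, q ∉ A ∧ G = connectedComponentIn Aᶜ q

/-- A good drawing of the complete graph `K_n` in the space `X`. -/
structure GoodDrawing (n : ℕ) (X : Type*) [TopologicalSpace X] where
  vtx : Fin n → X
  arc : Fin n → Fin n → Set X
  vtx_inj : Function.Injective vtx
  arc_symm : ∀ u v, arc u v = arc v u
  isArc : ∀ u v, u ≠ v → ∃ f : ℝ → X, ContinuousOn f (Set.Icc 0 1) ∧
    Set.InjOn f (Set.Icc 0 1) ∧ f 0 = vtx u ∧ f 1 = vtx v ∧ arc u v = f '' Set.Icc 0 1
  vtx_not_mem : ∀ u v w, u ≠ v → w ≠ u → w ≠ v → vtx w ∉ arc u v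
  adj_arcs : ∀ u v w, u ≠ v → u ≠ w → v ≠ w → arc u v ∩ arc u w = {vtx u}
  indep_arcs : ∀ u v x y : Fin n, u ≠ v → x ≠ y → u ≠ x → u ≠ y → v ≠ x → v ≠ y →
    (arc u v ∩ arc x y).Subsingleton ∧
      ∀ p ∈ arc u v ∩ arc x y,
        CrossesAt (arc u v) (arc x y) p ∧ CrossesAt (arc x y) (arc u v) p
  no_triple_pt : ∀ p : X, p ∉ Set.range vtx → ∀ u v x y s t : Fin n,
    u ≠ v → x ≠ y → s ≠ t →
    ({u, v} : Finset (Fin n)) ≠ {x, y} → ({u, v} : Finset (Fin n)) ≠ {s, t} →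
    ({x, y} : Finset (Fin n)) ≠ {s, t} →
    ¬(p ∈ arc u v ∧ p ∈ arc x y ∧ p ∈ arc s t)

namespace GoodDrawing

variable {n : ℕ} {X : Type*} [TopologicalSpace X]

/-- The point set of the subdrawing induced by the set `W` of vertices. -/
def image (D : GoodDrawing n X) (W : Set (Fin n)) : Set X :=
  (D.vtx '' W) ∪ ⋃ u ∈ W, ⋃ v ∈ W, ⋃ (_ : u ≠ v), D.arc u v

/-- The simple closed curve that is the drawing of the 3-cycle on `a`, `b`, `c`. -/
def tri (D : GoodDrawing n X) (a b c : Fin n) : Set X :=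
  D.arc a b ∪ D.arc b c ∪ D.arc a c

/-- `Δ` is convex: it contains the arc between any two vertex points it contains. -/
def ConvexDisc (D : GoodDrawing n X) (Δ : Set X) : Prop :=
  ∀ x y : Fin n, x ≠ y → D.vtx x ∈ Δ → D.vtx y ∈ Δ → D.arc x y ⊆ Δ

/-- `F` is a face of the drawing `D`. -/
def IsFace (D : GoodDrawing n X) (F : Set X) : Prop :=
  IsFaceOf (D.image Set.univ) F

/-- `D` is face-convex with outer face `F`. -/
def FaceConvex (D : GoodDrawing n X) (F : Set X) : Prop :=
  D.IsFace F ∧ ∀ a b c : Fin n, a ≠ b → a ≠ c → b ≠ c →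
    ∀ Δ : Set X, IsClosedSide (D.tri a b c) Δ → ¬F ⊆ Δ → D.ConvexDisc Δ

/-- `D` is a convex drawing: every 3-cycle has at least one convex closed side. -/
def IsConvex (D : GoodDrawing n X) : Prop :=
  ∀ a b c : Fin n, a ≠ b → a ≠ c → b ≠ c →
    ∃ Δ : Set X, IsClosedSide (D.tri a b c) Δ ∧ D.ConvexDisc Δ

/-- The closed curve drawn by the cycle `c 0, c 1, …, c (m-1), c 0` of `K_n`. -/
def cycCurve (D : GoodDrawing n X) {m : ℕ} [NeZero m] (c : Fin m → Fin n) : Set X :=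
  ⋃ i : Fin m, D.arc (c i) (c (i + 1))

/-- `Δ` is the convex hull `Δ_W` of the vertex set `W` (relative to the outer face `F`):
the face of the subdrawing `D[W]` containing `F` is bounded by a cycle `C_W` on vertices
of `W`, and `Δ` is the closed disc bounded by `D[C_W]` disjoint from `F`. -/
def IsHull (D : GoodDrawing n X) (F : Set X) (W : Set (Fin n)) (Δ : Set X) : Prop :=
  ∃ (m : ℕ) (c : Fin (m + 3) → Fin n), Function.Injective c ∧ (∀ i, c i ∈ W) ∧
    (∃ G : Set X, IsFaceOf (D.image W) G ∧ F ⊆ G ∧ frontier G = D.cycCurve c) ∧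
    IsClosedSide (D.cycCurve c) Δ ∧ Disjoint F Δ

/-- The data of the two local sides `C 0`, `C 1` of the arc `D[uv]` at an interior
point `p` of the arc. -/
def LocalSides (D : GoodDrawing n X) (u v : Fin n) (p : X) (C : Fin 2 → Set X) : Prop :=
  p ∈ D.arc u v ∧ p ≠ D.vtx u ∧ p ≠ D.vtx v ∧
    ∃ V ∈ nhds p, C 0 ∪ C 1 = V \ D.arc u v ∧ Disjoint (C 0) (C 1) ∧
      IsPreconnected (C 0) ∧ IsPreconnected (C 1) ∧ (C 0).Nonempty ∧ (C 1).Nonempty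

/-- Relative to the outer face `F` and the local sides `C` of `D[uv]` at `p`, the
vertex `w` is on side `i` of `uv`: the closed disc bounded by `D[{u,v,w}]` not
containing `F` lies locally on side `i` of `D[uv]`. -/
def OnSide (D : GoodDrawing n X) (F : Set X) (u v : Fin n) (p : X) (C : Fin 2 → Set X)
    (i : Fin 2) (w : Fin n) : Prop :=
  w ≠ u ∧ w ≠ v ∧ ∃ Δ : Set X, IsClosedSide (D.tri u v w) Δ ∧ ¬F ⊆ Δ ∧
    ∃ V ∈ nhds p, C i ∩ V ⊆ Δ

/-- `Side(uv, i)`: the set consisting of `u`, `v` and all vertices on side `i` of `uv`. -/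
def SideSet (D : GoodDrawing n X) (F : Set X) (u v : Fin n) (p : X) (C : Fin 2 → Set X)
    (i : Fin 2) : Set (Fin n) :=
  {u, v} ∪ {w : Fin n | D.OnSide F u v p C i w}

/-- The edge-arcs `D[uv]` and `D[xy]` cross: they share a non-vertex point. -/
def Crosses (D : GoodDrawing n X) (u v x y : Fin n) : Prop :=
  ∃ p : X, p ∈ D.arc u v ∩ D.arc x y ∧ p ∉ Set.range D.vtx

/-- The set of empty triangles of `D`: pairs of a 3-set of vertices together with an
open disc bounded by the corresponding triangle containing no vertex point. -/
def emptyTriangles (D : GoodDrawing n X) : Set (Finset (Fin n) × Set X) :=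
  {T | ∃ a b c : Fin n, a ≠ b ∧ a ≠ c ∧ b ≠ c ∧ T.1 = {a, b, c} ∧
    IsOpenSide (D.tri a b c) T.2 ∧ ∀ i, D.vtx i ∉ T.2}

end GoodDrawing

/-- A pseudoline in the plane. -/
def IsPseudoline (σ : Set Plane) : Prop :=
  IsClosed σ ∧ Nonempty (↥σ ≃ₜ ℝ) ∧ ¬IsPreconnected σᶜ

/-- An arrangement of pseudolines: any two distinct members meet in exactly one
point, at which they cross. -/
def IsArrangement (A : Finset (Set Plane)) : Prop :=
  (∀ σ ∈ A, IsPseudoline σ) ∧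
    ∀ σ ∈ A, ∀ τ ∈ A, σ ≠ τ →
      ∃ p : Plane, σ ∩ τ = {p} ∧ CrossesAt σ τ p ∧ CrossesAt τ σ p

/-- A planar good drawing of `K_n` is pseudolinear if some arrangement of pseudolines
contains, for each edge, a distinct pseudoline containing that edge-arc. -/
def GoodDrawing.Pseudolinear {n : ℕ} (D : GoodDrawing n Plane) : Prop :=
  ∃ (A : Finset (Set Plane)) (L : Fin n → Fin n → Set Plane), IsArrangement A ∧
    (∀ u v, u ≠ v → L u v ∈ A ∧ D.arc u v ⊆ L u v) ∧
    (∀ u v, L u v = L v u) ∧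
    ∀ u v x y : Fin n, u ≠ v → x ≠ y →
      ({u, v} : Finset (Fin n)) ≠ {x, y} → L u v ≠ L x y

/-!
Put the pole of a stereographic projection into the outer face. Every point off a closed curve then
has a winding number, read off from a continuous logarithm, and for the curve `D[{a, b, c}]` it is
`0` on the side of the pole and a nonzero constant, the orientation of the triangle, on the other.
Since the winding numbers of the triangles `uvw` and `uvw'` jump alike across the arc `D[uv]`, the
vertices `w` and `w'` are on different sides of `uv` exactly if the two orientations differ.

Convexity makes two triangles spanned by vertices on opposite closed sides of `uv` meet only in
`D[uv]`. On the other hand, cutting the boundary polygon of a hull into triangles with a common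
apex writes its winding number as a sum of winding numbers of triangles; hence every point of
the hull is in one of these closed triangles, and the intersection of the two hulls is in `D[uv]`.
-/

/-! ### Normalised continuous logarithms -/

/-- The exponential `w ↦ exp (2πiw)`, normalised to have period `1`, so that increments of its
continuous inverses count turns about the origin. -/
def turnExp (w : ℂ) : ℂ := Complex.exp (2 * Real.pi * Complex.I * w)

theorem turnExp_ne_zero (w : ℂ) : turnExp w ≠ 0 := Complex.exp_ne_zero _

@[fun_prop]
theorem continuous_turnExp : Continuous turnExp := by unfold turnExp; fun_prop

theorem turnExp_add (w w' : ℂ) : turnExp (w + w') = turnExp w * turnExp w' := by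
  rw [turnExp, mul_add, Complex.exp_add, turnExp, turnExp]

theorem turnExp_sub (w w' : ℂ) : turnExp (w - w') = turnExp w / turnExp w' := by
  rw [turnExp, mul_sub, Complex.exp_sub, turnExp, turnExp]

theorem turnExp_int_mul (k : ℤ) (w : ℂ) : turnExp (k * w) = turnExp w ^ k := by
  rw [turnExp, mul_left_comm, Complex.exp_int_mul, turnExp]

theorem turnExp_eq_one_iff {w : ℂ} : turnExp w = 1 ↔ ∃ k : ℤ, w = k := by
  simp only [turnExp, Complex.exp_eq_one_iff, mul_comm _ w,
    mul_left_inj' Complex.two_pi_I_ne_zero]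

/-- The branch of the inverse of `turnExp` coming from the principal logarithm. -/
def turnLog (z : ℂ) : ℂ := Complex.log z / (2 * Real.pi * Complex.I)

theorem turnExp_turnLog {z : ℂ} (hz : z ≠ 0) : turnExp (turnLog z) = z := by
  rw [turnExp, turnLog, mul_div_cancel₀ _ Complex.two_pi_I_ne_zero, Complex.exp_log hz]

theorem turnLog_one : turnLog 1 = 0 := by rw [turnLog, Complex.log_one, zero_div]

theorem continuousAt_turnLog {z : ℂ} (hz : z ∈ Complex.slitPlane) : ContinuousAt turnLog z :=
  (continuousAt_clog hz).div_const _

theorem one_sub_mem_slitPlane {w : ℂ} (hw : ‖w‖ < 1) : 1 - w ∈ Complex.slitPlane := by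
  simpa only [sub_eq_add_neg] using
    Complex.mem_slitPlane_of_norm_lt_one (z := -w) (by rwa [norm_neg])

theorem eq_of_continuousOn_of_intValued {X : Type*} [TopologicalSpace X] {S : Set X}
    (hS : IsPreconnected S) {f : X → ℂ} (hf : ContinuousOn f S) (hint : ∀ z ∈ S, ∃ k : ℤ, f z = k)
    {x y : X} (hx : x ∈ S) (hy : y ∈ S) : f x = f y := by
  have hdisc : DiscreteTopology (range ((↑) : ℤ → ℂ)) :=
    Complex.isClosedEmbedding_intCast.isEmbedding.toHomeomorph.discreteTopology
  exact hS.constant_of_mapsTo ⟨hdisc⟩ hf (fun z hz => (hint z hz).imp fun _ hk => hk.symm) hx hy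

/-- `g` is a continuous branch, along `K`, of the normalised logarithm of `Φ`. -/
def IsLogOn {X : Type*} [TopologicalSpace X] (K : Set X) (Φ g : X → ℂ) : Prop :=
  ContinuousOn g K ∧ ∀ z ∈ K, turnExp (g z) = Φ z

namespace IsLogOn

variable {X : Type*} [TopologicalSpace X] {K K' : Set X} {Φ Φ' g g' : X → ℂ}

theorem mono (hg : IsLogOn K Φ g) (h : K' ⊆ K) : IsLogOn K' Φ g :=
  ⟨hg.1.mono h, fun z hz => hg.2 z (h hz)⟩

theorem congr (hg : IsLogOn K Φ g) (h : EqOn Φ Φ' K) : IsLogOn K Φ' g :=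
  ⟨hg.1, fun _ hz => (hg.2 _ hz).trans (h hz)⟩

theorem ne_zero (hg : IsLogOn K Φ g) {z : X} (hz : z ∈ K) : Φ z ≠ 0 :=
  hg.2 z hz ▸ turnExp_ne_zero _

theorem mul (hg : IsLogOn K Φ g) (hg' : IsLogOn K Φ' g') :
    IsLogOn K (fun z => Φ z * Φ' z) (fun z => g z + g' z) :=
  ⟨hg.1.add hg'.1, fun z hz => by rw [turnExp_add, hg.2 z hz, hg'.2 z hz]⟩

theorem div (hg : IsLogOn K Φ g) (hg' : IsLogOn K Φ' g') :
    IsLogOn K (fun z => Φ z / Φ' z) (fun z => g z - g' z) :=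
  ⟨hg.1.sub hg'.1, fun z hz => by rw [turnExp_sub, hg.2 z hz, hg'.2 z hz]⟩

theorem zpow (hg : IsLogOn K Φ g) (k : ℤ) :
    IsLogOn K (fun z => Φ z ^ k) fun z => k * g z :=
  ⟨continuousOn_const.mul hg.1, fun z hz => by rw [turnExp_int_mul, hg.2 z hz]⟩

theorem comp {Y : Type*} [TopologicalSpace Y] {L : Set Y} {f : Y → X} (hg : IsLogOn K Φ g)
    (hf : ContinuousOn f L) (hLK : MapsTo f L K) : IsLogOn L (Φ ∘ f) (g ∘ f) :=
  ⟨hg.1.comp hf hLK, fun _ hz => hg.2 _ (hLK hz)⟩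

theorem const {w : ℂ} (hw : w ≠ 0) : IsLogOn K (fun _ => w) (fun _ => turnLog w) :=
  ⟨continuousOn_const, fun _ _ => turnExp_turnLog hw⟩

theorem one_sub {f : X → ℂ} (hf : ContinuousOn f K) (hlt : ∀ z ∈ K, ‖f z‖ < 1) :
    IsLogOn K (fun z => 1 - f z) (fun z => turnLog (1 - f z)) := by
  have hslit : ∀ z ∈ K, 1 - f z ∈ Complex.slitPlane := fun z hz => one_sub_mem_slitPlane (hlt z hz)
  exact ⟨((continuousOn_const.sub hf).clog hslit).div_const _,
    fun z hz => turnExp_turnLog (Complex.slitPlane_ne_zero (hslit z hz))⟩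

theorem sub_eq_sub (hg : IsLogOn K Φ g) (hg' : IsLogOn K Φ g') (hK : IsPreconnected K) {x y : X}
    (hx : x ∈ K) (hy : y ∈ K) : g y - g x = g' y - g' x := by
  have hint : ∀ z ∈ K, ∃ k : ℤ, g z - g' z = k := fun z hz => turnExp_eq_one_iff.1 <| by
    rw [turnExp_sub, hg.2 z hz, hg'.2 z hz, div_self (hg.ne_zero hz)]
  have hconst : g x - g' x = g y - g' y :=
    eq_of_continuousOn_of_intValued hK (hg.1.sub hg'.1) hint hx hy
  linear_combination -hconst

theorem exists_union (hg : IsLogOn K Φ g) (hg' : IsLogOn K' Φ g') (hK : IsClosed K)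
    (hK' : IsClosed K') {c : X} (hc : c ∈ K ∩ K')
    (hconst : ∀ z ∈ K ∩ K', g z - g c = g' z - g' c) : ∃ G, IsLogOn (K ∪ K') Φ G := by
  classical
  let G : X → ℂ := fun z => if z ∈ K then g z else g' z + (g c - g' c)
  have hGK : EqOn G g K := fun z hz => if_pos hz
  have hGK' : EqOn G (fun z => g' z + (g c - g' c)) K' := fun z hz => by
    by_cases hzK : z ∈ K
    · rw [hGK hzK]
      linear_combination hconst z ⟨hzK, hz⟩
    · exact if_neg hzK
  refine ⟨G, (hg.1.congr hGK).union_of_isClosed ((hg'.1.add continuousOn_const).congr hGK') hK hK',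
    ?_⟩
  rintro z (hz | hz)
  · rw [hGK hz, hg.2 z hz]
  · rw [hGK' hz, turnExp_add, turnExp_sub, hg.2 c hc.1, hg'.2 c hc.2, hg'.2 z hz,
      div_self (hg.ne_zero hc.1), mul_one]

end IsLogOn

theorem exists_isLogOn_univ {A : Type*} [TopologicalSpace A] [SimplyConnectedSpace A]
    [LocallyPathConnectedSpace A] {Φ : A → ℂ} (hΦ : Continuous Φ) (hne : ∀ a, Φ a ≠ 0) :
    ∃ g, IsLogOn univ Φ g := by
  obtain ⟨a₀⟩ : Nonempty A := inferInstance
  obtain ⟨G, ⟨-, hG⟩, -⟩ := Complex.isCoveringMap_exp.existsUnique_continuousMap_lifts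
    (⟨fun a => ⟨Φ a, hne a⟩, by fun_prop⟩ : C(A, {z : ℂ // z ≠ 0})) a₀ (Complex.log (Φ a₀))
    (by simp [Complex.exp_log (hne a₀)])
  refine ⟨fun a => G a / (2 * Real.pi * Complex.I), by fun_prop, fun a _ => ?_⟩
  rw [turnExp, mul_div_cancel₀ _ Complex.two_pi_I_ne_zero]
  exact congrArg Subtype.val (congrFun hG a)

theorem exists_isLogOn_Icc {s t : ℝ} (hst : s ≤ t) {Φ : ℝ → ℂ} (hΦ : ContinuousOn Φ (Icc s t))
    (hne : ∀ x ∈ Icc s t, Φ x ≠ 0) : ∃ g, IsLogOn (Icc s t) Φ g := by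
  obtain ⟨g, hg⟩ := exists_isLogOn_univ (Φ := fun x => Φ (projIcc s t hst x))
    (hΦ.domRestrict.comp continuous_projIcc) fun x => hne _ (projIcc s t hst x).2
  exact ⟨g, (hg.mono (subset_univ _)).congr fun x hx => by simp only [projIcc_of_mem hst hx]⟩

theorem not_isLogOn_sphere {c : ℂ} {r : ℝ} (hr : 0 < r) {l : ℤ} (hl : l ≠ 0) (g : ℂ → ℂ) :
    ¬IsLogOn (Metric.sphere c r) (fun z => (z - c) ^ l) g := by
  intro hg
  have hlinear : IsLogOn univ (fun t : ℝ => (circleMap c r t - c) ^ l)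
      (fun t => l * (turnLog r + t / (2 * Real.pi))) := by
    refine ⟨by fun_prop, fun t _ => ?_⟩
    beta_reduce
    rw [turnExp_int_mul, turnExp_add, turnExp_turnLog (by exact_mod_cast hr.ne'),
      circleMap_sub_center, circleMap_zero, turnExp]
    congr 3
    field_simp
  have hincr := (hg.comp (continuous_circleMap c r).continuousOn
    fun t _ => circleMap_mem_sphere c hr.le t).sub_eq_sub hlinear isPreconnected_univ
    (mem_univ 0) (mem_univ (2 * Real.pi))
  have hperiod : circleMap c r (2 * Real.pi) = circleMap c r 0 := by
    simpa using periodic_circleMap c r 0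
  have hpi : (Real.pi : ℂ) ≠ 0 := by exact_mod_cast Real.pi_ne_zero
  simp only [Function.comp_apply, hperiod] at hincr
  push_cast at hincr
  field_simp at hincr
  exact mul_ne_zero (Int.cast_ne_zero.2 hl) hpi (by linear_combination -hincr / 2)

/-- The Tietze extension of such a logarithm would let `z ↦ (z - p) ^ l`, restricted to the
complement of `U`, extend to a nonvanishing map of the whole plane. -/
theorem not_isLogOn_frontier {U : Set ℂ} (hU : Bornology.IsBounded U) {p : ℂ} (hp : p ∈ interior U)
    {l : ℤ} (hl : l ≠ 0) {h : ℂ → ℂ} (hh : ContinuousOn h (closure U))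
    (hne : ∀ z ∈ closure U, h z ≠ 0) (g : ℂ → ℂ) :
    ¬IsLogOn (frontier U) (fun z => (z - p) ^ l * h z) g := by
  classical
  intro hg
  obtain ⟨G, hG⟩ := ContinuousMap.exists_restrict_eq isClosed_frontier
    (⟨fun z : frontier U => g z, hg.1.domRestrict⟩ : C(frontier U, ℂ))
  have hGg : EqOn G g (frontier U) := fun z hz => DFunLike.congr_fun hG ⟨z, hz⟩
  let Φ : ℂ → ℂ := fun z => if z ∈ closure U then turnExp (G z) / h z else (z - p) ^ l
  have hpU : p ∈ U := interior_subset hp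
  have hΦ : Continuous Φ := by
    refine continuous_if (fun z hz => ?_) ?_ (ContinuousOn.zpow₀ (by fun_prop) l fun z hz => ?_)
    · have hzU : z ∈ frontier U := frontier_closure_subset hz
      rw [hGg hzU, hg.2 z hzU, mul_div_cancel_right₀ _ (hne z (frontier_subset_closure hzU))]
    · rw [show closure {z | z ∈ closure U} = closure U from closure_closure]
      exact ContinuousOn.div (by fun_prop) hh hne
    · refine Or.inl (sub_ne_zero.2 ?_)
      rintro rfl
      exact mem_closure_iff.1 hz _ isOpen_interior hp |>.elim fun y hy =>
        hy.2 (subset_closure (interior_subset hy.1))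
  have hΦne : ∀ z, Φ z ≠ 0 := fun z => by
    by_cases hz : z ∈ closure U
    · simpa only [Φ, if_pos hz] using div_ne_zero (turnExp_ne_zero _) (hne z hz)
    · simpa only [Φ, if_neg hz] using
        zpow_ne_zero l (sub_ne_zero.2 fun (hzp : z = p) => hz (hzp ▸ subset_closure hpU))
  obtain ⟨L, hL⟩ := exists_isLogOn_univ hΦ hΦne
  obtain ⟨R, hRpos, hR⟩ := hU.closure.subset_ball_lt 0 p
  refine not_isLogOn_sphere hRpos hl L ((hL.mono (subset_univ _)).congr fun z hz => if_neg ?_)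
  exact fun hzU => (hR hzU).ne hz

/-! ### Turning along a set, seen in a chart of the punctured sphere -/

theorem continuousOn_invFunOn_image {A X : Type*} [TopologicalSpace A] [TopologicalSpace X]
    [T2Space X] [Nonempty A] {γ : A → X} {S : Set A} (hS : IsCompact S) (hγ : ContinuousOn γ S)
    (hinj : InjOn γ S) : ContinuousOn (Function.invFunOn γ S) (γ '' S) := by
  refine continuousOn_iff_isClosed.2 fun t ht => ⟨γ '' (S ∩ t),
    ((hS.inter_right ht).image_of_continuousOn (hγ.mono inter_subset_left)).isClosed, ?_⟩
  ext x
  refine and_congr_left ?_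
  rintro ⟨a, ha, rfl⟩
  rw [mem_preimage, hinj.leftInvOn_invFunOn ha, hinj.mem_image_iff inter_subset_left ha]
  exact (and_iff_right ha).symm

/-- A homeomorphism from `X` with one point removed, the `pole`, onto the complex plane. -/
structure PlaneChart (X : Type*) [TopologicalSpace X] extends OpenPartialHomeomorph X ℂ where
  pole : X
  source_eq : source = {pole}ᶜ
  target_eq : target = univ

namespace PlaneChart

variable {X : Type*} [TopologicalSpace X]

instance : CoeFun (PlaneChart X) fun _ => X → ℂ := ⟨fun P => P.toOpenPartialHomeomorph⟩

/-- The inverse of a plane chart. -/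
def symm (P : PlaneChart X) : ℂ → X := P.toOpenPartialHomeomorph.symm

variable (P : PlaneChart X)

theorem continuousOn_compl_pole : ContinuousOn P {P.pole}ᶜ :=
  P.source_eq ▸ P.toOpenPartialHomeomorph.continuousOn

theorem isOpenEmbedding_symm : IsOpenEmbedding P.symm :=
  P.toOpenPartialHomeomorph.symm.isOpenEmbedding P.target_eq

theorem symm_apply {x : X} (hx : x ≠ P.pole) : P.symm (P x) = x :=
  P.toOpenPartialHomeomorph.left_inv (P.source_eq ▸ hx)

theorem apply_symm (z : ℂ) : P (P.symm z) = z :=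
  P.toOpenPartialHomeomorph.right_inv (P.target_eq ▸ mem_univ z)

theorem symm_ne_pole (z : ℂ) : P.symm z ≠ P.pole := by
  have hz := P.toOpenPartialHomeomorph.map_target (P.target_eq ▸ mem_univ z)
  rwa [P.source_eq] at hz

variable {P} in
theorem sub_ne_zero_of_ne {x y : X} (hx : x ≠ P.pole) (hy : y ≠ P.pole) (hxy : x ≠ y) :
    P x - P y ≠ 0 :=
  sub_ne_zero.2 fun h => hxy (by rw [← P.symm_apply hx, ← P.symm_apply hy, h])

theorem tendsto_cobounded [T2Space X] :
    Filter.Tendsto P (𝓝[≠] P.pole) (Bornology.cobounded ℂ) := by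
  rw [Metric.cobounded_eq_cocompact, Filter.hasBasis_cocompact.tendsto_right_iff]
  intro B hB
  have hclosed : IsClosed (P.symm '' B) := (hB.image P.isOpenEmbedding_symm.continuous).isClosed
  have hpole : P.pole ∉ P.symm '' B := fun ⟨z, _, hz⟩ => P.symm_ne_pole z hz
  filter_upwards [mem_nhdsWithin_of_mem_nhds (hclosed.isOpen_compl.mem_nhds hpole),
    self_mem_nhdsWithin] with x hxB hx hPx
  exact hxB ⟨P x, hPx, P.symm_apply hx⟩

theorem not_isLogOn_frontier [CompactSpace X] {U : Set X} (hU : IsOpen U)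
    (hpole : P.pole ∉ closure U) {p : X} (hp : p ∈ U) {l : ℤ} (hl : l ≠ 0) {h : X → ℂ}
    (hh : ContinuousOn h (closure U)) (hne : ∀ z ∈ closure U, h z ≠ 0) (g : X → ℂ) :
    ¬IsLogOn (frontier U) (fun z => (P z - P p) ^ l * h z) g := by
  intro hg
  have hsymm := P.isOpenEmbedding_symm
  have hclosure : closure (P.symm ⁻¹' U) = P.symm ⁻¹' closure U :=
    (hsymm.isOpenMap.preimage_closure_eq_closure_preimage hsymm.continuous U).symm
  have hfrontier : frontier (P.symm ⁻¹' U) = P.symm ⁻¹' frontier U :=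
    (hsymm.isOpenMap.preimage_frontier_eq_frontier_preimage hsymm.continuous U).symm
  have hbounded : Bornology.IsBounded (P.symm ⁻¹' U) := by
    have hcont : ContinuousOn P (closure U) :=
      P.continuousOn_compl_pole.mono fun x hx (hxp : x = P.pole) => hpole (hxp ▸ hx)
    refine (isClosed_closure.isCompact.image_of_continuousOn hcont).isBounded.subset ?_
    exact fun z hz => ⟨P.symm z, subset_closure hz, P.apply_symm z⟩
  refine _root_.not_isLogOn_frontier hbounded (p := P p) ?_ hl (h := h ∘ P.symm)
    (hclosure ▸ hh.comp hsymm.continuous.continuousOn (mapsTo_preimage _ _))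
    (fun z hz => hne _ (hclosure ▸ hz :)) (g ∘ P.symm)
    ((hfrontier ▸ hg.comp hsymm.continuous.continuousOn (mapsTo_preimage _ _)).congr fun z _ => ?_)
  · rw [(hU.preimage hsymm.continuous).interior_eq, mem_preimage,
      P.symm_apply fun hpp => hpole (hpp ▸ subset_closure hp)]
    exact hp
  · simp only [Function.comp_apply, P.apply_symm]

/-- The compact connected sets of the plane which no point off them sees wind around it. -/
structure HasLogs (K : Set X) : Prop where
  isClosed : IsClosed K
  pole_notMem : P.pole ∉ K
  isPreconnected : IsPreconnected K
  exists_log : ∀ p ∉ K, p ≠ P.pole → ∃ g, IsLogOn K (fun z => P z - P p) g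

open Classical in
/-- The number of turns about `p` made by a point travelling from `a` to `b` inside `K`, as a
complex number whose imaginary part records the change of the logarithm of the distance to `p`.
It is `0` at the pole and wherever `K` carries no continuous logarithm. -/
def turn (K : Set X) (a b p : X) : ℂ :=
  if h : p ≠ P.pole ∧ ∃ g, IsLogOn K (fun z => P z - P p) g then
    h.2.choose b - h.2.choose a else 0

theorem turn_pole (K : Set X) (a b : X) : P.turn K a b P.pole = 0 :=
  dif_neg fun h => h.1 rfl

theorem turn_symm (K : Set X) (a b p : X) : P.turn K b a p = -P.turn K a b p := by
  unfold turn
  split_ifs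
  · exact (neg_sub _ _).symm
  · exact neg_zero.symm

variable {P}

theorem turn_eq {K : Set X} (hK : IsPreconnected K) {a b p : X} (ha : a ∈ K) (hb : b ∈ K)
    (hp : p ≠ P.pole) {g : X → ℂ} (hg : IsLogOn K (fun z => P z - P p) g) :
    P.turn K a b p = g b - g a := by
  have h : p ≠ P.pole ∧ ∃ g, IsLogOn K (fun z => P z - P p) g := ⟨hp, g, hg⟩
  rw [turn, dif_pos h]
  exact h.2.choose_spec.sub_eq_sub hg hK ha hb

namespace HasLogs

variable {K K' : Set X} (hK : P.HasLogs K) {a b c p : X}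
include hK

theorem continuousOn : ContinuousOn P K :=
  P.continuousOn_compl_pole.mono fun _ hx h => hK.pole_notMem (h ▸ hx)

theorem ne_pole (ha : a ∈ K) : a ≠ P.pole := fun h => hK.pole_notMem (h ▸ ha)

theorem turn_eq_turn_of_subset (hK' : P.HasLogs K') (hsub : K ⊆ K') (ha : a ∈ K) (hb : b ∈ K)
    (hp : p ∉ K') : P.turn K a b p = P.turn K' a b p := by
  rcases eq_or_ne p P.pole with rfl | hpole
  · rw [turn_pole, turn_pole]
  obtain ⟨g, hg⟩ := hK'.exists_log p hp hpole
  rw [turn_eq hK'.isPreconnected (hsub ha) (hsub hb) hpole hg,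
    turn_eq hK.isPreconnected ha hb hpole (hg.mono hsub)]

theorem turn_add_turn (ha : a ∈ K) (hb : b ∈ K) (hc : c ∈ K) (hp : p ∉ K) :
    P.turn K a b p + P.turn K b c p = P.turn K a c p := by
  rcases eq_or_ne p P.pole with rfl | hpole
  · simp only [turn_pole, add_zero]
  obtain ⟨g, hg⟩ := hK.exists_log p hp hpole
  rw [turn_eq hK.isPreconnected ha hb hpole hg, turn_eq hK.isPreconnected hb hc hpole hg,
    turn_eq hK.isPreconnected ha hc hpole hg]
  ring

theorem turnExp_turn (ha : a ∈ K) (hb : b ∈ K) (hp : p ∉ K) (hpole : p ≠ P.pole) :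
    turnExp (P.turn K a b p) = (P b - P p) / (P a - P p) := by
  obtain ⟨g, hg⟩ := hK.exists_log p hp hpole
  rw [turn_eq hK.isPreconnected ha hb hpole hg, turnExp_sub, hg.2 b hb, hg.2 a ha]

theorem exists_turn_sub_turn_eq_int (hK' : P.HasLogs K') (ha : a ∈ K) (hb : b ∈ K) (ha' : a ∈ K')
    (hb' : b ∈ K') (hp : p ∉ K) (hp' : p ∉ K') :
    ∃ k : ℤ, P.turn K a b p - P.turn K' a b p = k := by
  rcases eq_or_ne p P.pole with rfl | hpole
  · exact ⟨0, by rw [turn_pole, turn_pole, sub_self, Int.cast_zero]⟩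
  refine turnExp_eq_one_iff.1 ?_
  rw [turnExp_sub, hK'.turnExp_turn ha' hb' hp' hpole, ← hK.turnExp_turn ha hb hp hpole,
    div_self (turnExp_ne_zero _)]

theorem union (hK' : P.HasLogs K') (hc : K ∩ K' = {c}) : P.HasLogs (K ∪ K') := by
  have hcmem : c ∈ K ∩ K' := hc ▸ mem_singleton c
  refine ⟨hK.isClosed.union hK'.isClosed, fun h => h.elim hK.pole_notMem hK'.pole_notMem,
    hK.isPreconnected.union c hcmem.1 hcmem.2 hK'.isPreconnected, fun p hp hpole => ?_⟩
  obtain ⟨g, hg⟩ := hK.exists_log p (fun h => hp (Or.inl h)) hpole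
  obtain ⟨g', hg'⟩ := hK'.exists_log p (fun h => hp (Or.inr h)) hpole
  refine hg.exists_union hg' hK.isClosed hK'.isClosed hcmem fun z hz => ?_
  have hzc : z ∈ ({c} : Set X) := hc ▸ hz
  rw [mem_singleton_iff.1 hzc, sub_self, sub_self]

theorem isCompact_image [CompactSpace X] : IsCompact (P '' K) :=
  hK.isClosed.isCompact.image_of_continuousOn hK.continuousOn

variable [CompactSpace X]

theorem pole_mem_of_frontier_subset {U : Set X} (hU : IsOpen U) (hfr : frontier U ⊆ K)
    (hp : p ∈ U) (hpK : p ∉ K) : P.pole ∈ U := by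
  by_contra hpole
  obtain ⟨g, hg⟩ := hK.exists_log p hpK fun h => hpole (h ▸ hp)
  refine P.not_isLogOn_frontier hU ?_ hp one_ne_zero (h := fun _ => 1) continuousOn_const
    (fun _ _ => one_ne_zero) g ((hg.mono hfr).congr fun z _ => by simp only [zpow_one, mul_one])
  rw [closure_eq_self_union_frontier]
  exact fun h => h.elim hpole fun h => hK.pole_notMem (hfr h)

variable [T2Space X]

/-- Moving `p` to a nearby `q` multiplies `P z - P p` by `1 - (P q - P p) / (P z - P p)`, which is
close to `1`, so the logarithm changes by a principal value. -/
theorem continuousAt_turn (ha : a ∈ K) (hb : b ∈ K) (hp : p ∉ K) (hpole : p ≠ P.pole) :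
    ContinuousAt (P.turn K a b) p := by
  obtain ⟨g, hg⟩ := hK.exists_log p hp hpole
  have hPp : P p ∉ P '' K := by
    rintro ⟨z, hz, hzp⟩
    exact sub_ne_zero_of_ne (hK.ne_pole hz) hpole (fun h => hp (h ▸ hz)) (sub_eq_zero.2 hzp)
  obtain ⟨r, hr, hball⟩ := Metric.isOpen_iff.1 hK.isCompact_image.isClosed.isOpen_compl _ hPp
  have hdist : ∀ z ∈ K, r ≤ ‖P z - P p‖ := fun z hz =>
    not_lt.1 fun hlt => hball (mem_ball_iff_norm.2 hlt) ⟨z, hz, rfl⟩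
  have hne : ∀ z ∈ K, P z - P p ≠ 0 := fun z hz => norm_pos_iff.1 (hr.trans_le (hdist z hz))
  have hP : ContinuousAt P p :=
    P.continuousOn_compl_pole.continuousAt (isOpen_compl_singleton.mem_nhds hpole)
  have hnear : ∀ᶠ q in 𝓝 p, P.turn K a b q =
      g b + turnLog (1 - (P q - P p) / (P b - P p)) -
        (g a + turnLog (1 - (P q - P p) / (P a - P p))) := by
    filter_upwards [isOpen_compl_singleton.mem_nhds hpole, hP (Metric.ball_mem_nhds _ hr)]
      with q hqpole hq
    refine turn_eq hK.isPreconnected ha hb hqpole ((hg.mul (IsLogOn.one_sub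
      (f := fun z => (P q - P p) / (P z - P p))
      (continuousOn_const.div (hK.continuousOn.sub continuousOn_const) hne) fun z hz => ?_)).congr
      fun z hz => ?_)
    · rw [norm_div, div_lt_one (norm_pos_iff.2 (hne z hz))]
      exact (mem_ball_iff_norm.1 hq).trans_le (hdist z hz)
    · have := hne z hz
      field_simp
      ring
  refine ContinuousAt.congr_of_eventuallyEq ?_ hnear
  have hlog : ∀ z, ContinuousAt (fun q => turnLog (1 - (P q - P p) / (P z - P p))) p := fun z => by
    refine ContinuousAt.comp (g := turnLog) (continuousAt_turnLog (by simp)) ?_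
    exact continuousAt_const.sub ((hP.sub continuousAt_const).div_const _)
  exact (continuousAt_const.add (hlog b)).sub (continuousAt_const.add (hlog a))

theorem continuousAt_turn_pole (ha : a ∈ K) (hb : b ∈ K) :
    ContinuousAt (P.turn K a b) P.pole := by
  obtain ⟨R, hR⟩ := hK.isCompact_image.isBounded.exists_norm_le
  have hinv : Filter.Tendsto (fun q => (P q)⁻¹) (𝓝[≠] P.pole) (𝓝 0) :=
    Filter.tendsto_inv₀_cobounded.comp P.tendsto_cobounded
  have hsmall : ∀ᶠ q in 𝓝[≠] P.pole, R * ‖(P q)⁻¹‖ < 1 :=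
    (hinv.norm.const_mul R).eventually_lt_const (by simp)
  have hnear : ∀ᶠ q in 𝓝[≠] P.pole, P.turn K a b q =
      turnLog (1 - P b * (P q)⁻¹) - turnLog (1 - P a * (P q)⁻¹) := by
    filter_upwards [hsmall, P.tendsto_cobounded.eventually_ne_cobounded 0,
      self_mem_nhdsWithin] with q hq hq0 hqpole
    have hlog : IsLogOn K (fun z => P z - P q)
        (fun z => turnLog (-P q) + turnLog (1 - P z * (P q)⁻¹)) := by
      refine ((IsLogOn.const (neg_ne_zero.2 hq0)).mul (IsLogOn.one_sub
        (f := fun z => P z * (P q)⁻¹) (hK.continuousOn.mul continuousOn_const)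
        fun z hz => ?_)).congr fun z _ => ?_
      · rw [norm_mul]
        exact (mul_le_mul_of_nonneg_right (hR _ ⟨z, hz, rfl⟩) (norm_nonneg _)).trans_lt hq
      · field_simp
        ring
    rw [turn_eq hK.isPreconnected ha hb hqpole hlog, add_sub_add_left_eq_sub]
  rw [continuousAt_iff_punctured_nhds, turn_pole]
  refine Filter.Tendsto.congr' (hnear.mono fun _ h => h.symm) ?_
  have hlog : ∀ z, Filter.Tendsto (fun q => turnLog (1 - P z * (P q)⁻¹)) (𝓝[≠] P.pole) (𝓝 0) := by
    intro z
    rw [← turnLog_one]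
    refine (continuousAt_turnLog Complex.one_mem_slitPlane).tendsto.comp ?_
    simpa using tendsto_const_nhds.sub (hinv.const_mul (P z))
  simpa only [sub_zero] using (hlog b).sub (hlog a)

theorem continuousOn_turn (ha : a ∈ K) (hb : b ∈ K) : ContinuousOn (P.turn K a b) Kᶜ := by
  intro p hp
  rcases eq_or_ne p P.pole with rfl | hpole
  · exact (hK.continuousAt_turn_pole ha hb).continuousWithinAt
  · exact (hK.continuousAt_turn ha hb hp hpole).continuousWithinAt

theorem eventually_turn_sub_turn_eq [LocallyConnectedSpace X] (hK' : P.HasLogs K') (ha : a ∈ K)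
    (hb : b ∈ K) (ha' : a ∈ K') (hb' : b ∈ K') (hp : p ∉ K) (hp' : p ∉ K') :
    ∀ᶠ q in 𝓝 p, P.turn K a b q - P.turn K' a b q = P.turn K a b p - P.turn K' a b p := by
  have hmem : p ∈ (K ∪ K')ᶜ := fun h => h.elim hp hp'
  have hsub : connectedComponentIn (K ∪ K')ᶜ p ⊆ (K ∪ K')ᶜ := connectedComponentIn_subset _ _
  filter_upwards [(hK.isClosed.union hK'.isClosed).isOpen_compl.connectedComponentIn.mem_nhds
    (mem_connectedComponentIn hmem)] with q hq
  exact eq_of_continuousOn_of_intValued isPreconnected_connectedComponentIn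
    (((hK.continuousOn_turn ha hb).mono fun z hz hzK => hsub hz (Or.inl hzK)).sub
      ((hK'.continuousOn_turn ha' hb').mono fun z hz hzK => hsub hz (Or.inr hzK)))
    (fun z hz => hK.exists_turn_sub_turn_eq_int hK' ha hb ha' hb'
      (fun hzK => hsub hz (Or.inl hzK)) fun hzK => hsub hz (Or.inr hzK))
    hq (mem_connectedComponentIn hmem)

end HasLogs

theorem hasLogs_image_Icc [T2Space X] {γ : ℝ → X} {s t : ℝ} (hst : s ≤ t)
    (hγ : ContinuousOn γ (Icc s t)) (hinj : InjOn γ (Icc s t))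
    (hpole : P.pole ∉ γ '' Icc s t) : P.HasLogs (γ '' Icc s t) := by
  refine ⟨(isCompact_Icc.image_of_continuousOn hγ).isClosed, hpole,
    isPreconnected_Icc.image _ hγ, fun p hp hpp => ?_⟩
  have hP : ContinuousOn P (γ '' Icc s t) :=
    P.continuousOn_compl_pole.mono fun x hx h => hpole (h ▸ hx)
  have hne : ∀ x ∈ γ '' Icc s t, P x - P p ≠ 0 := fun x hx =>
    sub_ne_zero_of_ne (fun h => hpole (h ▸ hx)) hpp fun h => hp (h ▸ hx)
  obtain ⟨g, hg⟩ := exists_isLogOn_Icc hst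
    ((hP.sub continuousOn_const).comp hγ (mapsTo_image γ _)) fun x hx => hne _ ⟨x, hx, rfl⟩
  refine ⟨g ∘ Function.invFunOn γ (Icc s t), (hg.comp
    (continuousOn_invFunOn_image isCompact_Icc hγ hinj)
    (surjOn_image γ _).mapsTo_invFunOn).congr fun x hx => ?_⟩
  exact congrArg (P · - P p) ((surjOn_image γ _).rightInvOn_invFunOn hx)

end PlaneChart

/-! ### Winding numbers and Jordan curves -/

theorem exists_mem_frontier_of_isPreconnected {X : Type*} [TopologicalSpace X] {S U : Set X}
    (hS : IsPreconnected S) (hSU : (S ∩ U).Nonempty) (hSU' : (S \ U).Nonempty) :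
    (S ∩ frontier U).Nonempty := by
  have := isPreconnected_iff_preconnectedSpace.1 hS
  obtain ⟨y, hyS, hyU⟩ := hSU
  obtain ⟨z, hzS, hzU⟩ := hSU'
  obtain ⟨x, hx⟩ := nonempty_frontier_iff (s := ((↑) : S → X) ⁻¹' U).2
    ⟨⟨⟨y, hyS⟩, hyU⟩, fun h => hzU (h.symm.subset (mem_univ (⟨z, hzS⟩ : S)))⟩
  exact ⟨x, x.2, continuous_subtype_val.frontier_preimage_subset U hx⟩

theorem frontier_connectedComponentIn_compl_subset {X : Type*} [TopologicalSpace X]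
    [LocallyConnectedSpace X] {K : Set X} (hK : IsClosed K) (p : X) :
    frontier (connectedComponentIn Kᶜ p) ⊆ K := by
  intro x hx
  by_contra hxK
  have hxmem : x ∈ connectedComponentIn Kᶜ x := mem_connectedComponentIn hxK
  obtain ⟨y, hyx, hyp⟩ := mem_closure_iff.1 hx.1 _ hK.isOpen_compl.connectedComponentIn hxmem
  rw [connectedComponentIn_eq hyx, ← connectedComponentIn_eq hyp] at hxmem
  exact hx.2 (hK.isOpen_compl.connectedComponentIn.interior_eq.symm ▸ hxmem)

namespace PlaneChart

variable {X : Type*} [TopologicalSpace X] (P : PlaneChart X)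

/-- `A` and `B` are two curves from `a` to `b`, disjoint up to these ends, and so together form a
Jordan curve. Of the curves one only needs that they carry logarithms. -/
structure IsJordanPair (A B : Set X) (a b : X) : Prop where
  left : P.HasLogs A
  right : P.HasLogs B
  inter_eq : A ∩ B = {a, b}
  ne : a ≠ b

/-- The winding number of the loop running from `a` to `b` along `A` and back along `B`. -/
def winding (A B : Set X) (a b p : X) : ℂ := P.turn A a b p + P.turn B b a p

theorem winding_pole (A B : Set X) (a b : X) : P.winding A B a b P.pole = 0 := by
  rw [winding, turn_pole, turn_pole, add_zero]

variable {P}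

theorem not_isLogOn_compl_pair {a b : X} (ha : a ≠ P.pole) (hb : b ≠ P.pole) (hab : a ≠ b)
    (Θ : X → ℂ) : ¬IsLogOn {a, b, P.pole}ᶜ (fun x => (P b - P x) / (P a - P x)) Θ := by
  intro hΘ
  have hne : P b - P a ≠ 0 := sub_ne_zero_of_ne hb ha hab.symm
  set r := ‖P b - P a‖ / 2
  have hpos : 0 < ‖P b - P a‖ := norm_pos_iff.2 hne
  have hnorm : ∀ z ∈ Metric.sphere (P a) r, ‖z - P a‖ = ‖P b - P a‖ / 2 :=
    fun z hz => mem_sphere_iff_norm.1 hz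
  have hza : ∀ z ∈ Metric.sphere (P a) r, z ≠ P a := by
    rintro _ hz rfl
    linarith [hnorm _ hz, norm_zero (E := ℂ) ▸ congrArg norm (sub_self (P a))]
  have hzb : ∀ z ∈ Metric.sphere (P a) r, z ≠ P b := by
    rintro _ hz rfl
    linarith [hnorm _ hz]
  have hmaps : MapsTo P.symm (Metric.sphere (P a) r) {a, b, P.pole}ᶜ := by
    rintro z hz (h | h | h)
    · exact hza z hz (by rw [← h, P.apply_symm])
    · exact hzb z hz (by rw [← h, P.apply_symm])
    · exact P.symm_ne_pole z h
  have hlog : IsLogOn (Metric.sphere (P a) r) (fun z => 1 - (z - P a) / (P b - P a)) _ :=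
    IsLogOn.one_sub (f := fun z => (z - P a) / (P b - P a)) (by fun_prop) fun z hz => by
      rw [norm_div, hnorm z hz, div_lt_one hpos]
      linarith
  refine not_isLogOn_sphere (half_pos hpos) one_ne_zero _
    ((((IsLogOn.const (neg_ne_zero.2 hne)).mul hlog).div
      (hΘ.comp P.isOpenEmbedding_symm.continuous.continuousOn hmaps)).congr fun z hz => ?_)
  have hb_sub : P b - z ≠ 0 := sub_ne_zero.2 (hzb z hz).symm
  simp only [Function.comp_apply, P.apply_symm, zpow_one]
  field_simp
  ring

namespace IsJordanPair

variable {A B : Set X} {a b p q : X} (h : P.IsJordanPair A B a b)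
include h

theorem mem_inter_left : a ∈ A ∩ B := h.inter_eq ▸ mem_insert a {b}

theorem mem_inter_right : b ∈ A ∩ B := h.inter_eq ▸ mem_insert_of_mem a rfl

theorem isClosed : IsClosed (A ∪ B) := h.left.isClosed.union h.right.isClosed

theorem pole_notMem : P.pole ∉ A ∪ B := fun hp => hp.elim h.left.pole_notMem h.right.pole_notMem

theorem exists_isLogOn_winding_eq (hp : p ∉ A ∪ B) (hpole : p ≠ P.pole) :
    ∃ gA gB, IsLogOn A (fun z => P z - P p) gA ∧ IsLogOn B (fun z => P z - P p) gB ∧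
      P.winding A B a b p = gA b - gA a + (gB a - gB b) := by
  obtain ⟨gA, hA⟩ := h.left.exists_log p (fun hpA => hp (Or.inl hpA)) hpole
  obtain ⟨gB, hB⟩ := h.right.exists_log p (fun hpB => hp (Or.inr hpB)) hpole
  refine ⟨gA, gB, hA, hB, ?_⟩
  rw [winding,
    turn_eq h.left.isPreconnected h.mem_inter_left.1 h.mem_inter_right.1 hpole hA,
    turn_eq h.right.isPreconnected h.mem_inter_right.2 h.mem_inter_left.2 hpole hB]

theorem exists_winding_eq_int (hp : p ∉ A ∪ B) : ∃ k : ℤ, P.winding A B a b p = k := by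
  rw [winding, P.turn_symm B a b, ← sub_eq_add_neg]
  exact h.left.exists_turn_sub_turn_eq_int h.right h.mem_inter_left.1 h.mem_inter_right.1
    h.mem_inter_left.2 h.mem_inter_right.2 (fun hpA => hp (Or.inl hpA)) fun hpB => hp (Or.inr hpB)

theorem exists_isLogOn_union {Φ gA gB : X → ℂ} (hA : IsLogOn A Φ gA) (hB : IsLogOn B Φ gB)
    (hw : gA b - gA a + (gB a - gB b) = 0) : ∃ g, IsLogOn (A ∪ B) Φ g := by
  refine hA.exists_union hB h.left.isClosed h.right.isClosed h.mem_inter_left fun z hz => ?_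
  rcases h.inter_eq.subset hz with rfl | rfl
  · rw [sub_self, sub_self]
  · linear_combination hw

theorem ne_pole_of_mem_closure [LocallyConnectedSpace X]
    (hpole : P.pole ∉ connectedComponentIn (A ∪ B)ᶜ p)
    (hq : q ∈ closure (connectedComponentIn (A ∪ B)ᶜ p)) : q ≠ P.pole := by
  rintro rfl
  rw [closure_eq_self_union_frontier] at hq
  exact hq.elim hpole fun hfr =>
    h.pole_notMem (frontier_connectedComponentIn_compl_subset h.isClosed p hfr)

theorem frontier_connectedComponentIn_subset [LocallyConnectedSpace X] {K V : Set X}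
    (hV : IsOpen V) (hcover : (A ∪ B) \ V ⊆ K)
    (hdisj : Disjoint V (connectedComponentIn (A ∪ B)ᶜ p)) :
    frontier (connectedComponentIn (A ∪ B)ᶜ p) ⊆ K := fun _ hx =>
  hcover ⟨frontier_connectedComponentIn_compl_subset h.isClosed p hx,
    fun hxV => (hdisj.closure_right hV).le_bot ⟨hxV, hx.1⟩⟩

theorem not_isLogOn [CompactSpace X] [LocallyConnectedSpace X] (hp : p ∉ A ∪ B)
    (hpole : P.pole ∉ connectedComponentIn (A ∪ B)ᶜ p) {l : ℤ} (hl : l ≠ 0) {H : X → ℂ}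
    (hH : ContinuousOn H (closure (connectedComponentIn (A ∪ B)ᶜ p)))
    (hne : ∀ z ∈ closure (connectedComponentIn (A ∪ B)ᶜ p), H z ≠ 0) (g : X → ℂ) :
    ¬IsLogOn (A ∪ B) (fun z => (P z - P p) ^ l * H z) g := fun hg =>
  P.not_isLogOn_frontier h.isClosed.isOpen_compl.connectedComponentIn
    (fun hcl => h.ne_pole_of_mem_closure hpole hcl rfl) (mem_connectedComponentIn hp) hl hH hne g
    (hg.mono (frontier_connectedComponentIn_compl_subset h.isClosed p))

theorem pole_mem_connectedComponentIn [CompactSpace X] [LocallyConnectedSpace X]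
    (hp : p ∉ A ∪ B) (hw : P.winding A B a b p = 0) : P.pole ∈ connectedComponentIn (A ∪ B)ᶜ p := by
  by_contra hpole
  obtain ⟨gA, gB, hA, hB, hwAB⟩ := h.exists_isLogOn_winding_eq hp fun hpp =>
    hpole (hpp ▸ mem_connectedComponentIn hp)
  obtain ⟨g, hg⟩ := h.exists_isLogOn_union hA hB (hwAB ▸ hw)
  exact h.not_isLogOn hp hpole one_ne_zero (H := fun _ => 1) continuousOn_const
    (fun _ _ => one_ne_zero) g (hg.congr fun z _ => by simp only [zpow_one, mul_one])

variable [T2Space X] [CompactSpace X]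

theorem winding_eq_of_isPreconnected {S : Set X} (hS : IsPreconnected S) (hsub : S ⊆ (A ∪ B)ᶜ)
    (hp : p ∈ S) (hq : q ∈ S) : P.winding A B a b p = P.winding A B a b q := by
  refine eq_of_continuousOn_of_intValued hS ?_ (fun z hz => h.exists_winding_eq_int (hsub hz)) hp hq
  exact ((h.left.continuousOn_turn h.mem_inter_left.1 h.mem_inter_right.1).mono
    fun z hz hzA => hsub hz (Or.inl hzA)).add
    ((h.right.continuousOn_turn h.mem_inter_right.2 h.mem_inter_left.2).mono
      fun z hz hzB => hsub hz (Or.inr hzB))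

theorem winding_eq_of_mem_connectedComponentIn (hq : q ∈ connectedComponentIn (A ∪ B)ᶜ p) :
    P.winding A B a b q = P.winding A B a b p :=
  h.winding_eq_of_isPreconnected isPreconnected_connectedComponentIn
    (connectedComponentIn_subset _ _) hq
    (mem_connectedComponentIn (connectedComponentIn_nonempty_iff.1 ⟨q, hq⟩))

/-- If all windings vanished, the turns along `A` and along `B` would glue to a logarithm of
`x ↦ (P b - P x) / (P a - P x)` on the whole plane minus `a` and `b`. -/
theorem exists_winding_ne_zero : ∃ p ∉ A ∪ B, P.winding A B a b p ≠ 0 := by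
  classical
  by_contra! hzero
  obtain ⟨haA, haB⟩ := h.mem_inter_left
  obtain ⟨hbA, hbB⟩ := h.mem_inter_right
  let Θ : X → ℂ := fun x => if x ∈ A then P.turn B a b x else P.turn A a b x
  have hΘA : EqOn Θ (P.turn A a b) Aᶜ := fun x hx => if_neg hx
  have hΘB : EqOn Θ (P.turn B a b) Bᶜ := fun x hxB => by
    by_cases hxA : x ∈ A
    · exact if_pos hxA
    · have hw := hzero x (not_or.2 ⟨hxA, hxB⟩)
      rw [winding, P.turn_symm B a b] at hw
      rw [hΘA hxA]
      linear_combination hw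
  have hcover : ({a, b, P.pole} : Set X)ᶜ ⊆ Aᶜ ∪ Bᶜ := by
    rw [← compl_inter, h.inter_eq, compl_subset_compl]
    exact insert_subset_insert (singleton_subset_iff.2 (mem_insert b _))
  refine not_isLogOn_compl_pair (h.left.ne_pole haA) (h.left.ne_pole hbA) h.ne Θ ⟨?_, ?_⟩
  · exact (((h.left.continuousOn_turn haA hbA).congr hΘA).union_of_isOpen
      ((h.right.continuousOn_turn haB hbB).congr hΘB) h.left.isClosed.isOpen_compl
      h.right.isClosed.isOpen_compl).mono hcover
  · intro x hx
    have hpole : x ≠ P.pole := fun hxp => hx (Or.inr (Or.inr hxp))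
    rcases hcover hx with hxA | hxB
    · rw [hΘA hxA, h.left.turnExp_turn haA hbA hxA hpole]
    · rw [hΘB hxB, h.right.turnExp_turn haB hbB hxB hpole]

variable [LocallyConnectedSpace X]

/-- If `p` and `q` have nonzero windings `k` and `l` but lie in different components, then
`(P z - P p) ^ l * (P z - P q) ^ (-k)` has winding `0` along the curve, and its second factor does
not vanish in the component of `p`. -/
theorem mem_connectedComponentIn_of_winding_ne_zero (hp : p ∉ A ∪ B) (hq : q ∉ A ∪ B)
    (hwp : P.winding A B a b p ≠ 0) (hwq : P.winding A B a b q ≠ 0) :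
    q ∈ connectedComponentIn (A ∪ B)ᶜ p := by
  by_contra hqp
  have hp_pole : p ≠ P.pole := fun hpp => hwp (hpp ▸ P.winding_pole A B a b)
  have hq_pole : q ≠ P.pole := fun hqq => hwq (hqq ▸ P.winding_pole A B a b)
  have hpole : P.pole ∉ connectedComponentIn (A ∪ B)ᶜ p := fun hmem => hwp <| by
    rw [← h.winding_eq_of_mem_connectedComponentIn hmem, winding_pole]
  obtain ⟨k, hk⟩ := h.exists_winding_eq_int hp
  obtain ⟨l, hl⟩ := h.exists_winding_eq_int hq
  obtain ⟨gA, gB, hgA, hgB, hgw⟩ := h.exists_isLogOn_winding_eq hp hp_pole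
  obtain ⟨fA, fB, hfA, hfB, hfw⟩ := h.exists_isLogOn_winding_eq hq hq_pole
  obtain ⟨g, hg⟩ := h.exists_isLogOn_union ((hgA.zpow l).mul (hfA.zpow (-k)))
    ((hgB.zpow l).mul (hfB.zpow (-k))) (by
      push_cast
      linear_combination (k : ℂ) * (hfw - hl) - l * (hgw - hk))
  have hl0 : l ≠ 0 := fun h0 => hwq (by rw [hl, h0, Int.cast_zero])
  have hne : ∀ z ∈ closure (connectedComponentIn (A ∪ B)ᶜ p), P z - P q ≠ 0 := fun z hz => by
    refine sub_ne_zero_of_ne (h.ne_pole_of_mem_closure hpole hz) hq_pole ?_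
    rintro rfl
    rw [closure_eq_self_union_frontier] at hz
    exact hz.elim hqp fun hfr => hq (frontier_connectedComponentIn_compl_subset h.isClosed p hfr)
  refine h.not_isLogOn hp hpole hl0 ?_ (fun z hz => zpow_ne_zero (-k) (hne z hz)) g hg
  exact ((P.continuousOn_compl_pole.mono fun z hz => h.ne_pole_of_mem_closure hpole hz).sub
    continuousOn_const).zpow₀ _ fun z hz => Or.inl (hne z hz)

theorem exists_mem_winding_ne_zero {V K : Set X} (hV : IsOpen V) (hK : P.HasLogs K)
    (hcover : (A ∪ B) \ V ⊆ K) (hsub : K ⊆ A ∪ B) :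
    ∃ z ∈ V, z ∉ A ∪ B ∧ P.winding A B a b z ≠ 0 := by
  by_contra! hzero
  obtain ⟨p, hp, hw⟩ := h.exists_winding_ne_zero
  have hdisj : Disjoint V (connectedComponentIn (A ∪ B)ᶜ p) := disjoint_left.2 fun z hzV hz =>
    hw ((h.winding_eq_of_mem_connectedComponentIn hz).symm.trans
      (hzero z hzV (connectedComponentIn_subset _ _ hz)))
  have hpole := hK.pole_mem_of_frontier_subset h.isClosed.isOpen_compl.connectedComponentIn
    (h.frontier_connectedComponentIn_subset hV hcover hdisj) (mem_connectedComponentIn hp)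
    fun hpK => hp (hsub hpK)
  exact hw ((h.winding_eq_of_mem_connectedComponentIn hpole).symm.trans (P.winding_pole A B a b))

theorem exists_mem_winding_eq_zero {m : X} {V K : Set X} (hV : IsOpen V) (hK : P.HasLogs K)
    (hcover : (A ∪ B) \ V ⊆ K) (hm : m ∈ A ∪ B) (hmK : m ∉ K) :
    ∃ z ∈ V, z ∉ A ∪ B ∧ P.winding A B a b z = 0 := by
  by_contra! hne
  have hdisj : Disjoint V (connectedComponentIn (A ∪ B)ᶜ P.pole) :=
    disjoint_left.2 fun z hzV hz => hne z hzV (connectedComponentIn_subset _ _ hz)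
      ((h.winding_eq_of_mem_connectedComponentIn hz).trans (P.winding_pole A B a b))
  have hpole := hK.pole_mem_of_frontier_subset hK.isClosed.isOpen_compl.connectedComponentIn
    (frontier_connectedComponentIn_compl_subset hK.isClosed m) (mem_connectedComponentIn hmK) hmK
  obtain ⟨x, hxm, hx⟩ := exists_mem_frontier_of_isPreconnected
    (isPreconnected_connectedComponentIn (F := Kᶜ) (x := m))
    ⟨P.pole, hpole, mem_connectedComponentIn h.pole_notMem⟩
    ⟨m, mem_connectedComponentIn hmK, fun hmem => connectedComponentIn_subset (A ∪ B)ᶜ _ hmem hm⟩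
  exact connectedComponentIn_subset _ _ hxm
    (h.frontier_connectedComponentIn_subset hV hcover hdisj hx)

end IsJordanPair

end PlaneChart

namespace PlaneChart.IsJordanPair

variable {X : Type*} [TopologicalSpace X] {P : PlaneChart X} {γ : ℝ → X} {B : Set X}
  (h : P.IsJordanPair (γ '' Icc 0 1) B (γ 0) (γ 1)) (hinj : InjOn γ (Icc 0 1))
include h hinj

theorem eq_zero_or_eq_one {t : ℝ} (ht : t ∈ Icc 0 1) (htB : γ t ∈ B) : t = 0 ∨ t = 1 := by
  rcases h.inter_eq.subset ⟨mem_image_of_mem γ ht, htB⟩ with h0 | h1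
  · exact Or.inl (hinj ht (left_mem_Icc.2 zero_le_one) h0)
  · exact Or.inr (hinj ht (right_mem_Icc.2 zero_le_one) h1)

variable [T2Space X] (hγ : ContinuousOn γ (Icc 0 1))
include hγ

theorem hasLogs_removing_Ioo {s r : ℝ} (hs : 0 ≤ s) (hsr : s < r) (hr : r ≤ 1) :
    P.HasLogs (γ '' Icc 0 s ∪ B ∪ γ '' Icc r 1) := by
  have hsub : Icc 0 s ⊆ Icc 0 1 := Icc_subset_Icc_right (hsr.le.trans hr)
  have hsub' : Icc r 1 ⊆ Icc 0 1 := Icc_subset_Icc_left (hs.trans hsr.le)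
  have hstart : P.HasLogs (γ '' Icc 0 s) := hasLogs_image_Icc hs (hγ.mono hsub) (hinj.mono hsub)
    fun hp => h.left.pole_notMem (image_mono hsub hp)
  have hend : P.HasLogs (γ '' Icc r 1) := hasLogs_image_Icc hr (hγ.mono hsub') (hinj.mono hsub')
    fun hp => h.left.pole_notMem (image_mono hsub' hp)
  refine (hstart.union h.right (c := γ 0) ?_).union hend (c := γ 1) ?_
  · refine Subset.antisymm ?_
      (singleton_subset_iff.2 ⟨mem_image_of_mem γ (left_mem_Icc.2 hs), h.mem_inter_left.2⟩)
    rintro _ ⟨⟨t, ht, rfl⟩, htB⟩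
    have ht1 : t ≠ 1 := (ht.2.trans_lt (hsr.trans_le hr)).ne
    exact congrArg γ ((h.eq_zero_or_eq_one hinj (hsub ht) htB).resolve_right ht1)
  · refine Subset.antisymm ?_ (singleton_subset_iff.2
      ⟨Or.inr h.mem_inter_right.2, mem_image_of_mem γ (right_mem_Icc.2 hr)⟩)
    rintro _ ⟨⟨x, hx, hxt⟩ | htB, t, ht, rfl⟩
    · rw [hinj (hsub hx) (hsub' ht) hxt] at hx
      exact absurd (ht.1.trans hx.2) hsr.not_ge
    · have ht0 : t ≠ 0 := (hs.trans_lt (hsr.trans_le ht.1)).ne'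
      exact congrArg γ ((h.eq_zero_or_eq_one hinj (hsub' ht) htB).resolve_left ht0)

theorem exists_hasLogs_removing {t : ℝ} (ht : t ∈ Ioo 0 1) {V : Set X} (hV : V ∈ 𝓝 (γ t)) :
    ∃ K, P.HasLogs K ∧ (γ '' Icc 0 1 ∪ B) \ V ⊆ K ∧ γ t ∉ K ∧ K ⊆ γ '' Icc 0 1 ∪ B := by
  have hpre : γ ⁻¹' V ∩ Ioo 0 1 ∈ 𝓝 t :=
    Filter.inter_mem ((hγ.continuousAt (Icc_mem_nhds ht.1 ht.2)) hV) (isOpen_Ioo.mem_nhds ht)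
  obtain ⟨s, r, hst, hsr⟩ := mem_nhds_iff_exists_Ioo_subset.1 hpre
  obtain ⟨hs, hr⟩ := (Ioo_subset_Ioo_iff (hst.1.trans hst.2)).1 (hsr.trans inter_subset_right)
  have hsub : Icc 0 s ⊆ Icc 0 1 := Icc_subset_Icc_right (hst.1.le.trans ht.2.le)
  have hsub' : Icc r 1 ⊆ Icc 0 1 := Icc_subset_Icc_left (ht.1.le.trans hst.2.le)
  refine ⟨_, h.hasLogs_removing_Ioo hinj hγ hs (hst.1.trans hst.2) hr, ?_, ?_, ?_⟩
  · rintro _ ⟨⟨x, hx, rfl⟩ | hxB, hxV⟩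
    · rcases le_or_gt x s with hxs | hsx
      · exact Or.inl (Or.inl ⟨x, ⟨hx.1, hxs⟩, rfl⟩)
      rcases le_or_gt r x with hrx | hxr
      · exact Or.inr ⟨x, ⟨hrx, hx.2⟩, rfl⟩
      · exact absurd (hsr ⟨hsx, hxr⟩).1 hxV
    · exact Or.inl (Or.inr hxB)
  · rintro ((⟨x, hx, hxt⟩ | htB) | ⟨x, hx, hxt⟩)
    · rw [hinj (hsub hx) (Ioo_subset_Icc_self ht) hxt] at hx
      exact hst.1.not_ge hx.2
    · exact (h.eq_zero_or_eq_one hinj (Ioo_subset_Icc_self ht) htB).elim ht.1.ne' ht.2.ne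
    · rw [hinj (hsub' hx) (Ioo_subset_Icc_self ht) hxt] at hx
      exact hst.2.not_ge hx.1
  · exact union_subset (union_subset_union_left B (image_mono hsub))
      ((image_mono hsub').trans subset_union_left)

end PlaneChart.IsJordanPair

instance : Fact (Module.finrank ℝ (EuclideanSpace ℝ (Fin 3)) = 2 + 1) := ⟨by simp⟩

/-- Stereographic projection from `f`. -/
def sphereChart (f : SpherePt) : PlaneChart SpherePt where
  toOpenPartialHomeomorph := (stereographic' 2 f).trans
    Complex.orthonormalBasisOneI.repr.symm.toHomeomorph.toOpenPartialHomeomorph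
  pole := f
  source_eq := by simp
  target_eq := by simp

instance : LocallyConnectedSpace SpherePt :=
  ChartedSpace.locallyConnectedSpace (EuclideanSpace ℝ (Fin 2)) SpherePt

/-! ### Arcs and triangles of a good drawing -/

/-- Three pairwise distinct elements, in an order that can be rotated and swapped. -/
structure Distinct {α : Type*} (a b c : α) : Prop where
  ne₁₂ : a ≠ b
  ne₂₃ : b ≠ c
  ne₃₁ : c ≠ a

namespace Distinct

variable {α : Type*} {a b c : α}

theorem rotate (h : Distinct a b c) : Distinct b c a := ⟨h.ne₂₃, h.ne₃₁, h.ne₁₂⟩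

theorem swap (h : Distinct a b c) : Distinct b a c := ⟨h.ne₁₂.symm, h.ne₃₁.symm, h.ne₂₃.symm⟩

end Distinct

namespace GoodDrawing

variable {n : ℕ} {X : Type*} [TopologicalSpace X] (D : GoodDrawing n X)

/-- The edge-arc of `a` and `b` without its two ends. -/
def openArc (a b : Fin n) : Set X := D.arc a b \ {D.vtx a, D.vtx b}

variable {a b c d : Fin n} {x z : X}

theorem vtx_mem_arc_left (h : a ≠ b) : D.vtx a ∈ D.arc a b := by
  obtain ⟨f, -, -, h₀, -, hf⟩ := D.isArc a b h
  exact hf ▸ h₀ ▸ mem_image_of_mem f (left_mem_Icc.2 zero_le_one)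

theorem vtx_mem_arc_right (h : a ≠ b) : D.vtx b ∈ D.arc a b :=
  D.arc_symm a b ▸ D.vtx_mem_arc_left h.symm

theorem vtx_notMem_arc (h : Distinct a b c) : D.vtx c ∉ D.arc a b :=
  D.vtx_not_mem a b c h.ne₁₂ h.ne₃₁ h.ne₂₃.symm

theorem eq_vtx_of_mem_arcs (h : Distinct a b c) (hab : z ∈ D.arc a b) (hbc : z ∈ D.arc b c) :
    z = D.vtx b :=
  (D.adj_arcs b a c h.ne₁₂.symm h.ne₂₃ h.ne₃₁.symm).subset ⟨D.arc_symm a b ▸ hab, hbc⟩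

theorem mem_openArc_of_mem_arcs (ha : Distinct c d a) (hb : Distinct c d b) (hab : x ∈ D.arc a b)
    (hcd : x ∈ D.arc c d) : x ∈ D.openArc a b := by
  refine ⟨hab, ?_⟩
  rintro (rfl | rfl)
  exacts [D.vtx_notMem_arc ha hcd, D.vtx_notMem_arc hb hcd]

theorem notMem_arcs_of_mem_openArc (h : Distinct a b c) (hx : x ∈ D.openArc a b) :
    x ∉ D.arc b c ∧ x ∉ D.arc c a :=
  ⟨fun hbc => hx.2 (Or.inr (D.eq_vtx_of_mem_arcs h hx.1 hbc)),
    fun hca => hx.2 (Or.inl (D.eq_vtx_of_mem_arcs h.rotate.rotate hca hx.1))⟩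

theorem isPreconnected_arc (h : a ≠ b) : IsPreconnected (D.arc a b) := by
  obtain ⟨f, hcont, -, -, -, hf⟩ := D.isArc a b h
  exact hf ▸ isPreconnected_Icc.image f hcont

theorem isPreconnected_arc_diff_right (h : a ≠ b) : IsPreconnected (D.arc a b \ {D.vtx b}) := by
  obtain ⟨f, hcont, hinj, -, h₁, hf⟩ := D.isArc a b h
  rw [hf, ← h₁, ← image_singleton,
    ← hinj.image_sdiff_subset (singleton_subset_iff.2 (right_mem_Icc.2 zero_le_one)),
    Icc_sdiff_right]
  exact isPreconnected_Ico.image f (hcont.mono Ico_subset_Icc_self)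

theorem exists_openArc_eq_image (h : a ≠ b) : ∃ f : ℝ → X, ContinuousOn f (Icc 0 1) ∧
    f 0 = D.vtx a ∧ D.openArc a b = f '' Ioo 0 1 := by
  obtain ⟨f, hcont, hinj, h₀, h₁, hf⟩ := D.isArc a b h
  refine ⟨f, hcont, h₀, ?_⟩
  rw [openArc, hf, ← h₀, ← h₁, ← image_pair,
    ← hinj.image_sdiff_subset (pair_subset (left_mem_Icc.2 zero_le_one)
      (right_mem_Icc.2 zero_le_one)), Icc_sdiff_both]

theorem vtx_mem_closure_openArc (h : a ≠ b) : D.vtx a ∈ closure (D.openArc a b) := by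
  obtain ⟨f, hcont, h₀, hf⟩ := D.exists_openArc_eq_image h
  rw [← closure_Ioo zero_ne_one] at hcont
  rw [hf, ← h₀]
  refine hcont.image_closure (mem_image_of_mem f ?_)
  rw [closure_Ioo zero_ne_one]
  exact left_mem_Icc.2 zero_le_one

theorem openArc_nonempty (h : a ≠ b) : (D.openArc a b).Nonempty :=
  closure_nonempty_iff.1 ⟨_, D.vtx_mem_closure_openArc h⟩

theorem exists_arc_diff_eq_union (h : a ≠ b) (hx : x ∈ D.openArc a b) :
    ∃ L R : Set X, IsPreconnected L ∧ IsPreconnected R ∧ D.arc a b \ {x} = L ∪ R ∧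
      D.vtx a ∈ L ∧ D.vtx b ∉ L ∧ D.vtx a ∉ R ∧ D.vtx b ∈ R := by
  obtain ⟨f, hcont, hinj, h₀, h₁, hf⟩ := D.isArc a b h
  obtain ⟨⟨t, ht, rfl⟩, hends⟩ : x ∈ f '' Icc 0 1 \ {D.vtx a, D.vtx b} := hf ▸ hx
  have h0t : 0 < t := ht.1.lt_of_ne fun h => hends (Or.inl (h ▸ h₀))
  have ht1 : t < 1 := ht.2.lt_of_ne fun h => hends (Or.inr (h ▸ h₁))
  have hL : Ico 0 t ⊆ Icc 0 1 := Ico_subset_Icc_self.trans (Icc_subset_Icc_right ht.2)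
  have hR : Ioc t 1 ⊆ Icc 0 1 := Ioc_subset_Icc_self.trans (Icc_subset_Icc_left ht.1)
  have hsplit : Icc 0 1 \ {t} = Ico 0 t ∪ Ioc t 1 := by
    rw [← Icc_union_Icc_eq_Icc ht.1 ht.2, union_sdiff_distrib, Icc_sdiff_right, Icc_sdiff_left]
  refine ⟨f '' Ico 0 t, f '' Ioc t 1, isPreconnected_Ico.image f (hcont.mono hL),
    isPreconnected_Ioc.image f (hcont.mono hR), ?_, ?_⟩
  · rw [hf, ← image_singleton, ← hinj.image_sdiff_subset (singleton_subset_iff.2 ht), hsplit,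
      image_union]
  · rw [← h₀, ← h₁, hinj.mem_image_iff hL (by simp), hinj.mem_image_iff hL (by simp),
      hinj.mem_image_iff hR (by simp), hinj.mem_image_iff hR (by simp)]
    exact ⟨left_mem_Ico.2 h0t, fun h => h.2.not_gt ht1, fun h => h.1.not_gt h0t,
      right_mem_Ioc.2 ht1⟩

theorem arc_union_arcs_eq_tri (a b c : Fin n) :
    D.arc a b ∪ (D.arc b c ∪ D.arc c a) = D.tri a b c := by
  rw [tri, D.arc_symm c a, union_assoc]

theorem mem_tri : z ∈ D.tri a b c ↔ z ∈ D.arc a b ∨ z ∈ D.arc b c ∨ z ∈ D.arc c a := by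
  rw [← arc_union_arcs_eq_tri, mem_union, mem_union]

theorem tri_rotate (a b c : Fin n) : D.tri b c a = D.tri a b c := by
  ext z
  simp only [mem_tri]
  tauto

theorem tri_swap (a b c : Fin n) : D.tri b a c = D.tri a b c := by
  rw [tri, tri, D.arc_symm b a, union_right_comm]

theorem vtx_mem_tri (h : a ≠ b) : D.vtx a ∈ D.tri a b c :=
  D.mem_tri.2 (Or.inl (D.vtx_mem_arc_left h))

theorem notMem_tri_of_mem_arc (h : Distinct a b c) (hda : d ≠ a) (hdb : d ≠ b) (hdc : d ≠ c)
    (hz : z ∈ D.arc c d) (hzc : z ≠ D.vtx c) (hab : z ∉ D.arc a b) : z ∉ D.tri a b c := by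
  rw [mem_tri]
  rintro (hz' | hz' | hz')
  · exact hab hz'
  · exact hzc (D.eq_vtx_of_mem_arcs ⟨h.ne₂₃, hdc.symm, hdb⟩ hz' hz)
  · exact hzc (D.eq_vtx_of_mem_arcs ⟨hdc, h.ne₃₁, hda.symm⟩ (D.arc_symm c d ▸ hz) hz')

variable (P : PlaneChart X)

/-- The turn about `z` made along the edge-arc from `a` to `b`. -/
def arcTurn (a b : Fin n) (z : X) : ℂ := P.turn (D.arc a b) (D.vtx a) (D.vtx b) z

/-- The winding number about `z` of the triangle run through in the order `a`, `b`, `c`. -/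
def triWinding (a b c : Fin n) (z : X) : ℂ :=
  D.arcTurn P a b z + D.arcTurn P b c z + D.arcTurn P c a z

/-- The points about which the triangle on `a`, `b`, `c` winds. -/
def inside (a b c : Fin n) : Set X := {z | z ∉ D.tri a b c ∧ D.triWinding P a b c z ≠ 0}

/-- The points, the pole of the chart among them, about which the triangle on `a`, `b`, `c` does
not wind. -/
def outside (a b c : Fin n) : Set X := {z | z ∉ D.tri a b c ∧ D.triWinding P a b c z = 0}

/-- The winding number of the triangle run through in the order `a`, `b`, `c` about the points
inside it. -/
def orient (a b c : Fin n) : ℤ :=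
  Classical.epsilon fun k : ℤ => ∃ z ∈ D.inside P a b c, D.triWinding P a b c z = k

theorem arcTurn_symm (a b : Fin n) (z : X) : D.arcTurn P b a z = -D.arcTurn P a b z := by
  rw [arcTurn, arcTurn, D.arc_symm b a, PlaneChart.turn_symm]

theorem triWinding_rotate (a b c : Fin n) (z : X) :
    D.triWinding P b c a z = D.triWinding P a b c z := by
  simp only [triWinding]
  ring

theorem triWinding_swap (a b c : Fin n) (z : X) :
    D.triWinding P b a c z = -D.triWinding P a b c z := by
  simp only [triWinding, D.arcTurn_symm P a b, D.arcTurn_symm P c a, D.arcTurn_symm P b c]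
  ring

theorem triWinding_pole (a b c : Fin n) : D.triWinding P a b c P.pole = 0 := by
  simp only [triWinding, arcTurn, PlaneChart.turn_pole, add_zero]

theorem triWinding_eq_add (t p q r : Fin n) (z : X) : D.triWinding P p q r z =
    D.triWinding P t p q z + D.triWinding P t q r z + D.triWinding P t r p z := by
  simp only [triWinding, D.arcTurn_symm P t q, D.arcTurn_symm P t r, D.arcTurn_symm P t p]
  ring

theorem inside_rotate (a b c : Fin n) : D.inside P b c a = D.inside P a b c := by
  simp only [inside, D.triWinding_rotate P a b c, D.tri_rotate a b c]

theorem inside_swap (a b c : Fin n) : D.inside P b a c = D.inside P a b c := by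
  simp only [inside, D.triWinding_swap P a b c, D.tri_swap a b c, neg_ne_zero]

theorem orient_rotate (a b c : Fin n) : D.orient P b c a = D.orient P a b c := by
  simp only [orient, D.inside_rotate P a b c, D.triWinding_rotate P a b c]

theorem disjoint_inside_outside (a b c : Fin n) :
    Disjoint (D.inside P a b c) (D.outside P a b c) :=
  disjoint_left.2 fun _ hi ho => hi.2 ho.2

variable {P D}

theorem mem_tri_or_inside_or_outside (D : GoodDrawing n X) (P : PlaneChart X) (a b c : Fin n)
    (z : X) : z ∈ D.tri a b c ∨ z ∈ D.inside P a b c ∨ z ∈ D.outside P a b c := by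
  simp only [inside, outside, mem_ofPred_eq]
  tauto

theorem ne_of_vtx_mem_inside (h : Distinct a b c) (hd : D.vtx d ∈ D.inside P a b c) :
    d ≠ a ∧ d ≠ b ∧ d ≠ c := by
  refine ⟨?_, ?_, ?_⟩ <;> rintro rfl <;> refine hd.1 ?_
  exacts [D.vtx_mem_tri h.ne₁₂, D.tri_rotate a _ c ▸ D.vtx_mem_tri h.ne₂₃,
    D.tri_rotate _ a b ▸ D.vtx_mem_tri h.ne₃₁]

end GoodDrawing

namespace GoodDrawing

/-- The edge-arcs avoid the pole of the chart and the closed side not containing the pole of every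
triangle is convex: face-convexity, with a point of the outer face as the pole. -/
structure ConvexAway {n : ℕ} {X : Type*} [TopologicalSpace X] (D : GoodDrawing n X)
    (P : PlaneChart X) : Prop where
  pole_notMem_arc : ∀ a b, a ≠ b → P.pole ∉ D.arc a b
  convexDisc : ∀ a b c, Distinct a b c → ∀ Δ, IsClosedSide (D.tri a b c) Δ → P.pole ∉ Δ →
    D.ConvexDisc Δ

namespace ConvexAway

variable {n : ℕ} {X : Type*} [TopologicalSpace X] [T2Space X] {D : GoodDrawing n X}
  {P : PlaneChart X} (hD : D.ConvexAway P) {a b c d : Fin n} {m x z : X}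
include hD

theorem hasLogs_arc (h : a ≠ b) : P.HasLogs (D.arc a b) := by
  obtain ⟨f, hcont, hinj, -, -, hf⟩ := D.isArc a b h
  exact hf ▸ PlaneChart.hasLogs_image_Icc zero_le_one hcont hinj (hf ▸ hD.pole_notMem_arc a b h)

theorem isClosed_arc (h : a ≠ b) : IsClosed (D.arc a b) := (hD.hasLogs_arc h).isClosed

theorem isClosed_tri (h : Distinct a b c) : IsClosed (D.tri a b c) :=
  ((hD.isClosed_arc h.ne₁₂).union (hD.isClosed_arc h.ne₂₃)).union (hD.isClosed_arc h.ne₃₁.symm)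

theorem hasLogs_arc_union_arc (h : Distinct a b c) : P.HasLogs (D.arc a b ∪ D.arc b c) := by
  refine (hD.hasLogs_arc h.ne₁₂).union (hD.hasLogs_arc h.ne₂₃) (c := D.vtx b) ?_
  rw [D.arc_symm a b]
  exact D.adj_arcs b a c h.ne₁₂.symm h.ne₂₃ h.ne₃₁.symm

theorem turn_arc_union_arc (h : Distinct a b c) (hz : z ∉ D.arc a b ∪ D.arc b c) :
    P.turn (D.arc a b ∪ D.arc b c) (D.vtx a) (D.vtx c) z =
      D.arcTurn P a b z + D.arcTurn P b c z := by
  have hU := hD.hasLogs_arc_union_arc h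
  have ha := D.vtx_mem_arc_left h.ne₁₂
  have hb := D.vtx_mem_arc_left h.ne₂₃
  have hc := D.vtx_mem_arc_right h.ne₂₃
  rw [arcTurn, arcTurn,
    (hD.hasLogs_arc h.ne₁₂).turn_eq_turn_of_subset hU subset_union_left ha
      (D.vtx_mem_arc_right h.ne₁₂) hz,
    (hD.hasLogs_arc h.ne₂₃).turn_eq_turn_of_subset hU subset_union_right hb hc hz,
    hU.turn_add_turn (Or.inl ha) (Or.inr hb) (Or.inr hc) hz]

theorem isJordanPair (h : Distinct a b c) :
    P.IsJordanPair (D.arc a b) (D.arc b c ∪ D.arc c a) (D.vtx a) (D.vtx b) where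
  left := hD.hasLogs_arc h.ne₁₂
  right := hD.hasLogs_arc_union_arc h.rotate
  inter_eq := by
    refine Subset.antisymm ?_ (pair_subset
      ⟨D.vtx_mem_arc_left h.ne₁₂, Or.inr (D.vtx_mem_arc_right h.ne₃₁)⟩
      ⟨D.vtx_mem_arc_right h.ne₁₂, Or.inl (D.vtx_mem_arc_left h.ne₂₃)⟩)
    rintro z ⟨hab, hbc | hca⟩
    · exact Or.inr (D.eq_vtx_of_mem_arcs h hab hbc)
    · exact Or.inl (D.eq_vtx_of_mem_arcs h.rotate.rotate hca hab)
  ne := D.vtx_inj.ne h.ne₁₂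

theorem winding_eq_triWinding (h : Distinct a b c) (hz : z ∉ D.tri a b c) :
    P.winding (D.arc a b) (D.arc b c ∪ D.arc c a) (D.vtx a) (D.vtx b) z =
      D.triWinding P a b c z := by
  rw [PlaneChart.winding, triWinding, add_assoc, ← hD.turn_arc_union_arc h.rotate]
  · rfl
  · exact fun hz' => hz (D.arc_union_arcs_eq_tri a b c ▸ Or.inr hz')

theorem exists_triWinding_eq_int (h : Distinct a b c) (hz : z ∉ D.tri a b c) :
    ∃ k : ℤ, D.triWinding P a b c z = k := by
  rw [← hD.winding_eq_triWinding h hz]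
  exact (hD.isJordanPair h).exists_winding_eq_int (D.arc_union_arcs_eq_tri a b c ▸ hz)

theorem pole_mem_outside (h : Distinct a b c) : P.pole ∈ D.outside P a b c := by
  refine ⟨?_, D.triWinding_pole P a b c⟩
  rw [← D.arc_union_arcs_eq_tri]
  exact (hD.isJordanPair h).pole_notMem

theorem eventually_mem_arc_of_mem_tri (h : Distinct a b c) (hm : m ∈ D.openArc a b) :
    ∀ᶠ z in 𝓝 m, z ∈ D.tri a b c → z ∈ D.arc a b := by
  obtain ⟨hbc, hca⟩ := D.notMem_arcs_of_mem_openArc h hm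
  filter_upwards [(hD.isClosed_arc h.ne₂₃).isOpen_compl.mem_nhds hbc,
    (hD.isClosed_arc h.ne₃₁).isOpen_compl.mem_nhds hca] with z hzbc hzca hz
  exact (D.mem_tri.1 hz).resolve_right (not_or_intro hzbc hzca)

theorem exists_hasLogs_removing (h : Distinct a b c) (hm : m ∈ D.openArc a b) {V : Set X}
    (hV : V ∈ 𝓝 m) : ∃ K, P.HasLogs K ∧ D.tri a b c \ V ⊆ K ∧ m ∉ K ∧ K ⊆ D.tri a b c := by
  obtain ⟨γ, hcont, hinj, h₀, h₁, hγ⟩ := D.isArc a b h.ne₁₂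
  have hJ := hD.isJordanPair h
  obtain ⟨⟨t, ht, rfl⟩, hends⟩ : m ∈ γ '' Icc 0 1 \ {D.vtx a, D.vtx b} := hγ ▸ hm
  rw [← D.arc_union_arcs_eq_tri, hγ]
  rw [hγ, ← h₀, ← h₁] at hJ
  exact hJ.exists_hasLogs_removing hinj hcont
    ⟨ht.1.lt_of_ne fun h => hends (Or.inl (h ▸ h₀)),
      ht.2.lt_of_ne fun h => hends (Or.inr (h ▸ h₁))⟩ hV

variable [CompactSpace X]

theorem triWinding_eq_of_isPreconnected (h : Distinct a b c) {T : Set X} (hT : IsPreconnected T)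
    (hsub : T ⊆ (D.tri a b c)ᶜ) (hx : x ∈ T) (hz : z ∈ T) :
    D.triWinding P a b c x = D.triWinding P a b c z := by
  rw [← hD.winding_eq_triWinding h (hsub hx), ← hD.winding_eq_triWinding h (hsub hz)]
  exact (hD.isJordanPair h).winding_eq_of_isPreconnected hT
    (D.arc_union_arcs_eq_tri a b c ▸ hsub) hx hz

theorem subset_inside_of_isPreconnected (h : Distinct a b c) {T : Set X} (hT : IsPreconnected T)
    (hsub : T ⊆ (D.tri a b c)ᶜ) (hx : x ∈ T) (hxI : x ∈ D.inside P a b c) :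
    T ⊆ D.inside P a b c := fun _ hz =>
  ⟨hsub hz, hD.triWinding_eq_of_isPreconnected h hT hsub hx hz ▸ hxI.2⟩

theorem subset_outside_of_isPreconnected (h : Distinct a b c) {T : Set X} (hT : IsPreconnected T)
    (hsub : T ⊆ (D.tri a b c)ᶜ) (hx : x ∈ T) (hxO : x ∈ D.outside P a b c) :
    T ⊆ D.outside P a b c := fun _ hz =>
  ⟨hsub hz, hD.triWinding_eq_of_isPreconnected h hT hsub hx hz ▸ hxO.2⟩

theorem subset_inside_or_subset_outside (h : Distinct a b c) {T : Set X} (hT : IsPreconnected T)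
    (hsub : T ⊆ (D.tri a b c)ᶜ) : T ⊆ D.inside P a b c ∨ T ⊆ D.outside P a b c := by
  rcases T.eq_empty_or_nonempty with rfl | ⟨x, hx⟩
  · exact Or.inl (empty_subset _)
  · exact ((mem_tri_or_inside_or_outside D P a b c x).resolve_left (hsub hx)).imp
      (hD.subset_inside_of_isPreconnected h hT hsub hx)
      (hD.subset_outside_of_isPreconnected h hT hsub hx)

theorem inside_nonempty (h : Distinct a b c) : (D.inside P a b c).Nonempty := by
  obtain ⟨z, hz, hw⟩ := (hD.isJordanPair h).exists_winding_ne_zero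
  rw [D.arc_union_arcs_eq_tri] at hz
  exact ⟨z, hz, hD.winding_eq_triWinding h hz ▸ hw⟩

variable [LocallyConnectedSpace X]

theorem connectedComponentIn_eq_inside (h : Distinct a b c) (hz : z ∈ D.inside P a b c) :
    connectedComponentIn (D.tri a b c)ᶜ z = D.inside P a b c := by
  refine Subset.antisymm (hD.subset_inside_of_isPreconnected h isPreconnected_connectedComponentIn
    (connectedComponentIn_subset _ _) (mem_connectedComponentIn hz.1) hz) fun x hx => ?_
  have hmem := (hD.isJordanPair h).mem_connectedComponentIn_of_winding_ne_zero (p := z) (q := x)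
  rw [hD.winding_eq_triWinding h hz.1, hD.winding_eq_triWinding h hx.1,
    D.arc_union_arcs_eq_tri] at hmem
  exact hmem hz.1 hx.1 hz.2 hx.2

theorem pole_mem_connectedComponentIn_of_mem_outside (h : Distinct a b c)
    (hz : z ∈ D.outside P a b c) : P.pole ∈ connectedComponentIn (D.tri a b c)ᶜ z := by
  have hmem := (hD.isJordanPair h).pole_mem_connectedComponentIn (p := z)
  rw [hD.winding_eq_triWinding h hz.1, D.arc_union_arcs_eq_tri] at hmem
  exact hmem hz.1 hz.2

theorem connectedComponentIn_eq_outside (h : Distinct a b c) :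
    connectedComponentIn (D.tri a b c)ᶜ P.pole = D.outside P a b c := by
  have hpole := hD.pole_mem_outside h
  refine Subset.antisymm (hD.subset_outside_of_isPreconnected h isPreconnected_connectedComponentIn
    (connectedComponentIn_subset _ _) (mem_connectedComponentIn hpole.1) hpole) fun x hx => ?_
  rw [← connectedComponentIn_eq (hD.pole_mem_connectedComponentIn_of_mem_outside h hx)]
  exact mem_connectedComponentIn hx.1

theorem isPreconnected_inside (h : Distinct a b c) : IsPreconnected (D.inside P a b c) := by
  obtain ⟨z, hz⟩ := hD.inside_nonempty h
  exact hD.connectedComponentIn_eq_inside h hz ▸ isPreconnected_connectedComponentIn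

theorem isPreconnected_outside (h : Distinct a b c) : IsPreconnected (D.outside P a b c) :=
  hD.connectedComponentIn_eq_outside h ▸ isPreconnected_connectedComponentIn

theorem isOpen_inside (h : Distinct a b c) : IsOpen (D.inside P a b c) := by
  obtain ⟨z, hz⟩ := hD.inside_nonempty h
  rw [← hD.connectedComponentIn_eq_inside h hz]
  exact (hD.isClosed_tri h).isOpen_compl.connectedComponentIn

theorem isOpen_outside (h : Distinct a b c) : IsOpen (D.outside P a b c) :=
  hD.connectedComponentIn_eq_outside h ▸ (hD.isClosed_tri h).isOpen_compl.connectedComponentIn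

theorem openArc_subset_closure_inside (h : Distinct a b c) :
    D.openArc a b ⊆ closure (D.inside P a b c) := by
  refine fun m hm => mem_closure_iff.2 fun V hV hmV => ?_
  obtain ⟨K, hK, hcover, -, hsub⟩ := hD.exists_hasLogs_removing h hm (hV.mem_nhds hmV)
  rw [← D.arc_union_arcs_eq_tri] at hcover hsub
  obtain ⟨z, hzV, hz, hw⟩ := (hD.isJordanPair h).exists_mem_winding_ne_zero hV hK hcover hsub
  rw [D.arc_union_arcs_eq_tri] at hz
  exact ⟨z, hzV, hz, hD.winding_eq_triWinding h hz ▸ hw⟩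

theorem openArc_subset_closure_outside (h : Distinct a b c) :
    D.openArc a b ⊆ closure (D.outside P a b c) := by
  refine fun m hm => mem_closure_iff.2 fun V hV hmV => ?_
  obtain ⟨K, hK, hcover, hmK, -⟩ := hD.exists_hasLogs_removing h hm (hV.mem_nhds hmV)
  rw [← D.arc_union_arcs_eq_tri] at hcover
  obtain ⟨z, hzV, hz, hw⟩ :=
    (hD.isJordanPair h).exists_mem_winding_eq_zero hV hK hcover (Or.inl hm.1) hmK
  rw [D.arc_union_arcs_eq_tri] at hz
  exact ⟨z, hzV, hz, hD.winding_eq_triWinding h hz ▸ hw⟩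

theorem arc_subset_compl_outside (h : Distinct a b c) {x y : Fin n} (hxy : x ≠ y)
    (hx : D.vtx x ∉ D.outside P a b c) (hy : D.vtx y ∉ D.outside P a b c) :
    D.arc x y ⊆ (D.outside P a b c)ᶜ := by
  obtain ⟨q, hq⟩ := hD.inside_nonempty h
  have hdisj := disjoint_left.1 (D.disjoint_inside_outside P a b c)
  have hside : (D.outside P a b c)ᶜ = connectedComponentIn (D.tri a b c)ᶜ q ∪ D.tri a b c := by
    rw [hD.connectedComponentIn_eq_inside h hq]
    ext z
    refine ⟨fun hz => ?_, fun hz hzO => hz.elim (fun hzI => hdisj hzI hzO) hzO.1⟩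
    rcases mem_tri_or_inside_or_outside D P a b c z with hz' | hz' | hz'
    exacts [Or.inr hz', Or.inl hz', absurd hz' hz]
  refine hD.convexDisc a b c h _ ⟨q, hq.1, hside⟩ (fun hpole => ?_) x y hxy hx hy
  exact hpole (hD.pole_mem_outside h)

theorem outside_subset_outside (h : Distinct a b c) {a' b' c' : Fin n} (h' : Distinct a' b' c')
    (ha : D.vtx a' ∉ D.outside P a b c) (hb : D.vtx b' ∉ D.outside P a b c)
    (hc : D.vtx c' ∉ D.outside P a b c) : D.outside P a b c ⊆ D.outside P a' b' c' := by
  refine hD.subset_outside_of_isPreconnected h' (hD.isPreconnected_outside h) (fun z hz hz' => ?_)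
    (hD.pole_mem_outside h) (hD.pole_mem_outside h')
  rcases D.mem_tri.1 hz' with hz' | hz' | hz'
  exacts [hD.arc_subset_compl_outside h h'.ne₁₂ ha hb hz' hz,
    hD.arc_subset_compl_outside h h'.ne₂₃ hb hc hz' hz,
    hD.arc_subset_compl_outside h h'.ne₃₁ hc ha hz' hz]

theorem triWinding_eq_orient (h : Distinct a b c) (hz : z ∈ D.inside P a b c) :
    D.triWinding P a b c z = D.orient P a b c := by
  obtain ⟨k, hk⟩ := hD.exists_triWinding_eq_int h hz.1
  obtain ⟨y, hy, hw⟩ : ∃ y ∈ D.inside P a b c, D.triWinding P a b c y = D.orient P a b c :=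
    Classical.epsilon_spec (p := fun k : ℤ => ∃ y ∈ D.inside P a b c, D.triWinding P a b c y = k)
      ⟨k, z, hz, hk⟩
  rw [← hw]
  exact hD.triWinding_eq_of_isPreconnected h (hD.isPreconnected_inside h) (fun _ hx => hx.1) hz hy

theorem orient_ne_zero (h : Distinct a b c) : D.orient P a b c ≠ 0 := by
  obtain ⟨z, hz⟩ := hD.inside_nonempty h
  have hw := hz.2
  rwa [hD.triWinding_eq_orient h hz, Int.cast_ne_zero] at hw

theorem orient_swap (h : Distinct a b c) : D.orient P b a c = -D.orient P a b c := by
  obtain ⟨z, hz⟩ := hD.inside_nonempty h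
  have hw := hD.triWinding_eq_orient h.swap (D.inside_swap P a b c ▸ hz)
  rw [D.triWinding_swap, hD.triWinding_eq_orient h hz] at hw
  exact_mod_cast hw.symm

theorem triWinding_eq_zero_or_eq_orient (h : Distinct a b c) (hz : z ∉ D.tri a b c) :
    D.triWinding P a b c z = 0 ∨ D.triWinding P a b c z = D.orient P a b c :=
  or_iff_not_imp_left.2 fun hw => hD.triWinding_eq_orient h ⟨hz, hw⟩

end ConvexAway

end GoodDrawing

/-! ### Orientations of triangles -/

namespace GoodDrawing

namespace ConvexAway

variable {n : ℕ} {X : Type*} [TopologicalSpace X] [T2Space X] [CompactSpace X]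
  {D : GoodDrawing n X} {P : PlaneChart X} (hD : D.ConvexAway P) {a b c d : Fin n} {m x : X}
include hD

theorem exists_eventually_triWinding_sub_eq [LocallyConnectedSpace X] (hc : Distinct a b c)
    (hd : Distinct a b d) (hm : m ∈ D.openArc a b) :
    ∃ k : ℤ, ∀ᶠ z in 𝓝 m, D.triWinding P a b c z - D.triWinding P a b d z = k := by
  have hK := hD.hasLogs_arc_union_arc hc.rotate
  have hK' := hD.hasLogs_arc_union_arc hd.rotate
  have hb : D.vtx b ∈ D.arc b c ∪ D.arc c a := Or.inl (D.vtx_mem_arc_left hc.ne₂₃)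
  have ha : D.vtx a ∈ D.arc b c ∪ D.arc c a := Or.inr (D.vtx_mem_arc_right hc.ne₃₁)
  have hb' : D.vtx b ∈ D.arc b d ∪ D.arc d a := Or.inl (D.vtx_mem_arc_left hd.ne₂₃)
  have ha' : D.vtx a ∈ D.arc b d ∪ D.arc d a := Or.inr (D.vtx_mem_arc_right hd.ne₃₁)
  have hmc : m ∉ D.arc b c ∪ D.arc c a := not_or.2 (D.notMem_arcs_of_mem_openArc hc hm)
  have hmd : m ∉ D.arc b d ∪ D.arc d a := not_or.2 (D.notMem_arcs_of_mem_openArc hd hm)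
  obtain ⟨k, hk⟩ := hK.exists_turn_sub_turn_eq_int hK' hb ha hb' ha' hmc hmd
  refine ⟨k, ?_⟩
  filter_upwards [hK.isClosed.isOpen_compl.mem_nhds hmc, hK'.isClosed.isOpen_compl.mem_nhds hmd,
    hK.eventually_turn_sub_turn_eq hK' hb ha hb' ha' hmc hmd] with z hzc hzd hz
  rw [hk, hD.turn_arc_union_arc hc.rotate hzc, hD.turn_arc_union_arc hd.rotate hzd] at hz
  rw [triWinding, triWinding, ← hz]
  ring

variable [LocallyConnectedSpace X]

theorem orient_eq_of_eventually (hc : Distinct a b c) (hd : Distinct a b d)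
    (hm : m ∈ D.openArc a b)
    (heq : ∀ᶠ z in 𝓝 m, D.triWinding P a b c z = D.triWinding P a b d z) :
    D.orient P a b d = D.orient P a b c := by
  obtain ⟨z, hzI, hz, hzd⟩ :=
    ((mem_closure_iff_frequently.1 (hD.openArc_subset_closure_inside hc hm)).and_eventually
      (heq.and (hD.eventually_mem_arc_of_mem_tri hd hm))).exists
  have hzI' : z ∈ D.inside P a b d :=
    ⟨fun hz' => hzI.1 (D.mem_tri.2 (Or.inl (hzd hz'))), hz ▸ hzI.2⟩
  rw [hD.triWinding_eq_orient hc hzI, hD.triWinding_eq_orient hd hzI'] at hz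
  exact_mod_cast hz.symm

theorem eq_zero_or_eq_orient_of_eventually (hc : Distinct a b c) (hd : Distinct a b d)
    (hm : m ∈ D.openArc a b) {k : ℤ}
    (hk : ∀ᶠ z in 𝓝 m, D.triWinding P a b c z - D.triWinding P a b d z = k) :
    k = 0 ∨ k = D.orient P a b c := by
  obtain ⟨z, hzO, hz, hzc⟩ :=
    ((mem_closure_iff_frequently.1 (hD.openArc_subset_closure_outside hd hm)).and_eventually
      (hk.and (hD.eventually_mem_arc_of_mem_tri hc hm))).exists
  have hw := hD.triWinding_eq_zero_or_eq_orient hc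
    fun hz' => hzO.1 (D.mem_tri.2 (Or.inl (hzc hz')))
  rw [hzO.2, sub_zero] at hz
  rw [hz] at hw
  exact_mod_cast hw

/-- The two triangles on the edge `ab` lie locally on the same side of it, or on opposite sides;
their windings jump alike across the edge. -/
theorem orient_eq_or_eq_neg (hc : Distinct a b c) (hd : Distinct a b d) (hm : m ∈ D.openArc a b) :
    (D.orient P a b d = D.orient P a b c ∧
      ∀ᶠ z in 𝓝 m, D.triWinding P a b c z = D.triWinding P a b d z) ∨
    (D.orient P a b d = -D.orient P a b c ∧
      ∀ᶠ z in 𝓝 m, D.triWinding P a b c z - D.triWinding P a b d z = D.orient P a b c) := by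
  obtain ⟨k, hk⟩ := hD.exists_eventually_triWinding_sub_eq hc hd hm
  have hk' : ∀ᶠ z in 𝓝 m, D.triWinding P a b d z - D.triWinding P a b c z = (-k : ℤ) :=
    hk.mono fun z hz => by rw [← neg_sub, hz, Int.cast_neg]
  rcases hD.eq_zero_or_eq_orient_of_eventually hc hd hm hk with rfl | rfl
  · have heq := hk.mono fun z hz => sub_eq_zero.1 (hz.trans Int.cast_zero)
    exact Or.inl ⟨hD.orient_eq_of_eventually hc hd hm heq, heq⟩
  · refine Or.inr ⟨?_, hk⟩
    refine ((hD.eq_zero_or_eq_orient_of_eventually hd hc hm hk').resolve_left ?_).symm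
    exact neg_ne_zero.2 (hD.orient_ne_zero hc)

theorem orient_eq_of_vtx_mem_inside (h : Distinct a b c) (hd : D.vtx d ∈ D.inside P a b c) :
    D.orient P a b d = D.orient P a b c := by
  obtain ⟨hda, hdb, -⟩ := ne_of_vtx_mem_inside h hd
  have h' : Distinct a b d := ⟨h.ne₁₂, hdb.symm, hda⟩
  have hsub : D.outside P a b c ⊆ D.outside P a b d := hD.outside_subset_outside h h'
    (fun ha => ha.1 (D.vtx_mem_tri h.ne₁₂))
    (fun hb => hb.1 (D.tri_rotate a b c ▸ D.vtx_mem_tri h.ne₂₃))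
    (disjoint_left.1 (D.disjoint_inside_outside P a b c) hd)
  obtain ⟨m, hm⟩ := D.openArc_nonempty h.ne₁₂
  refine (hD.orient_eq_or_eq_neg h h' hm).elim And.left fun ⟨_, hjump⟩ => ?_
  obtain ⟨z, hz, hzjump⟩ := ((mem_closure_iff_frequently.1
    (hD.openArc_subset_closure_outside h hm)).and_eventually hjump).exists
  rw [hz.2, (hsub hz).2, sub_zero] at hzjump
  exact absurd (mod_cast hzjump.symm) (hD.orient_ne_zero h)

theorem mem_closure_inter_of_crossesAt (h : Distinct a b c) (hx : x ∈ D.openArc a b) {γ : Set X}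
    (hγ : CrossesAt (D.arc a b) γ x) :
    x ∈ closure (γ ∩ D.inside P a b c) ∧ x ∈ closure (γ ∩ D.outside P a b c) := by
  suffices hnhds : ∀ U ∈ 𝓝 x, (U ∩ (γ ∩ D.inside P a b c)).Nonempty ∧
      (U ∩ (γ ∩ D.outside P a b c)).Nonempty from
    ⟨mem_closure_iff_nhds.2 fun U hU => (hnhds U hU).1,
      mem_closure_iff_nhds.2 fun U hU => (hnhds U hU).2⟩
  intro U hU
  obtain ⟨V, hV, hVU, C₁, C₂, hsplit, -, hC₁, hC₂, ⟨y₁, hγ₁, hy₁⟩, y₂, hγ₂, hy₂⟩ :=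
    hγ.2.2 _ (Filter.inter_mem hU (hD.eventually_mem_arc_of_mem_tri h hx))
  have hsub : V \ D.arc a b ⊆ (D.tri a b c)ᶜ := fun z hz hz' => hz.2 ((hVU hz.1).2 hz')
  have hU' : C₁ ∪ C₂ ⊆ U := hsplit ▸ fun z hz => (hVU hz.1).1
  have hmem : ∀ S : Set X, x ∈ closure S → S ⊆ (D.tri a b c)ᶜ → (S ∩ (C₁ ∪ C₂)).Nonempty := by
    intro S hS hStri
    obtain ⟨z, hzV, hzS⟩ := mem_closure_iff_nhds.1 hS V hV
    exact ⟨z, hzS, hsplit ▸ ⟨hzV, fun hz => hStri hzS (D.mem_tri.2 (Or.inl hz))⟩⟩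
  obtain ⟨y, hyI, hy⟩ := hmem _ (hD.openArc_subset_closure_inside h hx) fun z hz => hz.1
  obtain ⟨w, hwO, hw⟩ := hmem _ (hD.openArc_subset_closure_outside h hx) fun z hz => hz.1
  have hdisj := disjoint_left.1 (D.disjoint_inside_outside P a b c)
  rcases hD.subset_inside_or_subset_outside h hC₁ (subset_union_left.trans (hsplit ▸ hsub)) with
    h₁ | h₁ <;>
  rcases hD.subset_inside_or_subset_outside h hC₂ (subset_union_right.trans (hsplit ▸ hsub)) with
    h₂ | h₂
  · exact (hdisj (hw.elim (@h₁ w) (@h₂ w)) hwO).elim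
  · exact ⟨⟨y₁, hU' (Or.inl hy₁), hγ₁, h₁ hy₁⟩, y₂, hU' (Or.inr hy₂), hγ₂, h₂ hy₂⟩
  · exact ⟨⟨y₂, hU' (Or.inr hy₂), hγ₂, h₂ hy₂⟩, y₁, hU' (Or.inl hy₁), hγ₁, h₁ hy₁⟩
  · exact (hdisj hyI (hy.elim (@h₁ y) (@h₂ y))).elim

theorem mem_closure_arc_inter_of_mem_arcs (hc : Distinct a b c) (hd : Distinct a b d) (hcd : c ≠ d)
    (hab : x ∈ D.arc a b) (hx : x ∈ D.arc c d) :
    x ∈ closure (D.arc c d ∩ D.inside P a b c) ∧ x ∈ closure (D.arc c d ∩ D.outside P a b c) :=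
  hD.mem_closure_inter_of_crossesAt hc
    (D.mem_openArc_of_mem_arcs ⟨hcd, hd.ne₃₁, hc.ne₃₁.symm⟩ ⟨hcd, hd.ne₂₃.symm, hc.ne₂₃⟩ hab hx)
    ((D.indep_arcs a b c d hc.ne₁₂ hcd hc.ne₃₁.symm hd.ne₃₁.symm hc.ne₂₃ hd.ne₂₃).2 x
      ⟨hab, hx⟩).1

theorem vtx_mem_outside_of_mem_arcs (hc : Distinct a b c) (hd : Distinct a b d) (hcd : c ≠ d)
    (hab : x ∈ D.arc a b) (hx : x ∈ D.arc c d) : D.vtx d ∈ D.outside P a b c := by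
  obtain ⟨y, hy, hyO⟩ :=
    closure_nonempty_iff.1 ⟨x, (hD.mem_closure_arc_inter_of_mem_arcs hc hd hcd hab hx).2⟩
  by_contra hdO
  exact hD.arc_subset_compl_outside hc hcd
    (fun hcO => hcO.1 (D.tri_rotate c a b ▸ D.vtx_mem_tri hc.ne₃₁)) hdO hy hyO

theorem mem_closure_inside_inter_outside (hc : Distinct a b c) (hd : Distinct a b d) (hcd : c ≠ d)
    (hab : x ∈ D.arc a b) (hx : x ∈ D.arc c d) :
    x ∈ closure (D.inside P a b c ∩ D.outside P a b d) := by
  have hcO := hD.vtx_mem_outside_of_mem_arcs hd hc hcd.symm hab (D.arc_symm c d ▸ hx)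
  have hdO := hD.vtx_mem_outside_of_mem_arcs hc hd hcd hab hx
  have hx' := D.mem_openArc_of_mem_arcs hc hd hx hab
  have hsub : D.arc c d \ {x} ⊆ (D.arc a b)ᶜ := fun z hz hzab => hz.2
    ((D.indep_arcs a b c d hc.ne₁₂ hcd hc.ne₃₁.symm hd.ne₃₁.symm hc.ne₂₃ hd.ne₂₃).1
      ⟨hzab, hz.1⟩ ⟨hab, hx⟩)
  obtain ⟨L, R, hL, hR, hsplit, hcL, hdL, hcR, hdR⟩ := D.exists_arc_diff_eq_union hcd hx'
  have hLd : L ⊆ (D.tri a b d)ᶜ := fun z hz => by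
    have hz' : z ∈ D.arc c d \ {x} := hsplit ▸ Or.inl hz
    exact D.notMem_tri_of_mem_arc hd hc.ne₃₁ hc.ne₂₃.symm hcd (D.arc_symm c d ▸ hz'.1)
      (fun h => hdL (h ▸ hz)) (hsub hz')
  have hRc : R ⊆ (D.tri a b c)ᶜ := fun z hz => by
    have hz' : z ∈ D.arc c d \ {x} := hsplit ▸ Or.inr hz
    exact D.notMem_tri_of_mem_arc hc hd.ne₃₁ hd.ne₂₃.symm hcd.symm hz'.1
      (fun h => hcR (h ▸ hz)) (hsub hz')
  refine closure_mono ?_ (hD.mem_closure_arc_inter_of_mem_arcs hc hd hcd hab hx).1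
  rintro z ⟨hz, hzI⟩
  have hzx : z ∉ ({x} : Set X) := by
    rintro rfl
    exact hzI.1 (D.mem_tri.2 (Or.inl hab))
  have hzLR : z ∈ L ∪ R := hsplit ▸ ⟨hz, hzx⟩
  refine ⟨hzI, hD.subset_outside_of_isPreconnected hd hL hLd hcL hcO (hzLR.resolve_right ?_)⟩
  exact fun hzR => disjoint_left.1 (D.disjoint_inside_outside P a b c) hzI
    (hD.subset_outside_of_isPreconnected hc hR hRc hdR hdO hzR)

/-- Of the two triangles at a crossing one lies on either side of the edge `ab`. -/
theorem orient_eq_neg_of_mem_arcs (hc : Distinct a b c) (hd : Distinct a b d) (hcd : c ≠ d)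
    (hab : x ∈ D.arc a b) (hx : x ∈ D.arc c d) : D.orient P a b d = -D.orient P a b c := by
  refine (hD.orient_eq_or_eq_neg hc hd (D.mem_openArc_of_mem_arcs ⟨hcd, hd.ne₃₁, hc.ne₃₁.symm⟩
    ⟨hcd, hd.ne₂₃.symm, hc.ne₂₃⟩ hab hx)).elim (fun ⟨_, heq⟩ => ?_) And.left
  obtain ⟨z, ⟨hzI, hzO⟩, hz⟩ := ((mem_closure_iff_frequently.1
    (hD.mem_closure_inside_inter_outside hc hd hcd hab hx)).and_eventually heq).exists
  exact (hzI.2 (hz.trans hzO.2)).elim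

theorem eventually_notMem_outside_or_notMem_outside (hc : Distinct a b c) (hd : Distinct a b d)
    (hm : m ∈ D.openArc a b) (hneg : D.orient P a b d = -D.orient P a b c) :
    ∀ᶠ z in 𝓝 m, z ∉ D.outside P a b c ∨ z ∉ D.outside P a b d := by
  rcases hD.orient_eq_or_eq_neg hc hd hm with ⟨heq, -⟩ | ⟨-, hjump⟩
  · exact absurd (self_eq_neg.1 (heq.symm.trans hneg)) (hD.orient_ne_zero hc)
  · filter_upwards [hjump] with z hz
    refine not_and_or.1 fun ⟨hzc, hzd⟩ => hD.orient_ne_zero hc (P := P) ?_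
    rw [hzc.2, hzd.2, sub_zero] at hz
    exact_mod_cast hz.symm

end ConvexAway

variable {n : ℕ} {X : Type*} [TopologicalSpace X]

/-- The vertices `a`, `b`, `c` are distinct and, in this order, positively oriented. The sign `ε`
makes room for the mirror image, in which all orientations are reversed. -/
structure IsPositive (D : GoodDrawing n X) (P : PlaneChart X) (ε : ℤ) (a b c : Fin n) :
    Prop where
  distinct : Distinct a b c
  pos : 0 < ε * D.orient P a b c

variable {D : GoodDrawing n X} {P : PlaneChart X} {ε : ℤ} {a b c p q r s t : Fin n} {x z : X}

theorem IsPositive.rotate (h : D.IsPositive P ε a b c) : D.IsPositive P ε b c a :=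
  ⟨h.distinct.rotate, D.orient_rotate P a b c ▸ h.pos⟩

theorem IsPositive.ne_zero (h : D.IsPositive P ε a b c) : ε ≠ 0 :=
  left_ne_zero_of_mul h.pos.ne'

namespace ConvexAway

variable [T2Space X] [CompactSpace X] [LocallyConnectedSpace X] (hD : D.ConvexAway P)
include hD

theorem isPositive_neg_iff : D.IsPositive P (-ε) b a c ↔ D.IsPositive P ε a b c := by
  refine ⟨fun h => ⟨h.distinct.swap, ?_⟩, fun h => ⟨h.distinct.swap, ?_⟩⟩
  · simpa only [hD.orient_swap h.distinct.swap, neg_mul_neg] using h.pos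
  · simpa only [hD.orient_swap h.distinct, neg_mul_neg] using h.pos

theorem not_isPositive_swap (h : D.IsPositive P ε a b c) : ¬D.IsPositive P ε b a c := fun h' => by
  have hpos := h'.pos
  rw [hD.orient_swap h.distinct, mul_neg] at hpos
  exact (neg_pos.1 hpos).not_gt h.pos

theorem isPositive_or_isPositive_swap (hε : ε ≠ 0) (h : Distinct a b c) :
    D.IsPositive P ε a b c ∨ D.IsPositive P ε b a c := by
  refine (mul_ne_zero hε (hD.orient_ne_zero h (P := P))).lt_or_gt.symm.imp (⟨h, ·⟩) fun hneg =>
    ⟨h.swap, ?_⟩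
  rwa [hD.orient_swap h, mul_neg, neg_pos]

theorem exists_triWinding_eq_of_isPositive (h : D.IsPositive P ε a b c) (hz : z ∉ D.tri a b c) :
    ∃ k : ℤ, D.triWinding P a b c z = k ∧ 0 ≤ ε * k := by
  rcases hD.triWinding_eq_zero_or_eq_orient h.distinct hz with hw | hw
  · exact ⟨0, by rw [hw, Int.cast_zero], (mul_zero ε).ge⟩
  · exact ⟨_, hw, h.pos.le⟩

/-- All three triangles at `t` wind in the same sense, so their windings cannot cancel. -/
theorem triWinding_ne_zero_of_isPositive (h₁ : D.IsPositive P ε t p q)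
    (h₂ : D.IsPositive P ε t q r) (h₃ : D.IsPositive P ε t r p) (hz : z ∈ D.inside P t p q)
    (hz₂ : z ∉ D.tri t q r) (hz₃ : z ∉ D.tri t r p) : D.triWinding P p q r z ≠ 0 := by
  obtain ⟨k₂, hk₂, hpos₂⟩ := hD.exists_triWinding_eq_of_isPositive h₂ hz₂
  obtain ⟨k₃, hk₃, hpos₃⟩ := hD.exists_triWinding_eq_of_isPositive h₃ hz₃
  rw [D.triWinding_eq_add P t p q r, hD.triWinding_eq_orient h₁.distinct hz, hk₂, hk₃]
  intro hsum
  have hsum' : D.orient P t p q + k₂ + k₃ = 0 := mod_cast hsum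
  have hpos₁ := h₁.pos
  have hsum_mul : ε * D.orient P t p q + ε * k₂ + ε * k₃ = 0 := by
    rw [← mul_add, ← mul_add, hsum', mul_zero]
  linarith

theorem openArc_diff_subset_inside (h₁ : D.IsPositive P ε t p q) (h₂ : D.IsPositive P ε t q r)
    (h₃ : D.IsPositive P ε t r p) : D.openArc t p \ D.arc q r ⊆ D.inside P p q r := by
  rintro m ⟨hm, hmqr⟩
  have h : Distinct p q r := ⟨h₁.distinct.ne₂₃, h₂.distinct.ne₂₃, h₃.distinct.ne₂₃⟩
  have hq := D.notMem_arcs_of_mem_openArc h₁.distinct hm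
  have hr := D.notMem_arcs_of_mem_openArc h₃.distinct.rotate.rotate.swap hm
  have hmtri : m ∉ D.tri p q r := by
    rw [mem_tri, D.arc_symm r p]
    exact not_or_intro hq.1 (not_or_intro hmqr hr.1)
  have hnear : ∀ᶠ z in 𝓝 m, z ∉ D.arc q t ∧ z ∉ D.arc r t ∧ z ∉ D.arc q r :=
    ((hD.isClosed_arc h₁.distinct.ne₃₁).isOpen_compl.eventually_mem hq.2).and
      (((hD.isClosed_arc h₂.distinct.ne₃₁).isOpen_compl.eventually_mem hr.2).and
        ((hD.isClosed_arc h.ne₂₃).isOpen_compl.eventually_mem hmqr))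
  refine ((mem_tri_or_inside_or_outside D P p q r m).resolve_left hmtri).resolve_right fun hmO => ?_
  obtain ⟨z, hzI, hzO, hzq, hzr, hzqr⟩ := ((mem_closure_iff_frequently.1
    (hD.openArc_subset_closure_inside h₁.distinct hm)).and_eventually
      (((hD.isOpen_outside h).eventually_mem hmO).and hnear)).exists
  refine hD.triWinding_ne_zero_of_isPositive h₁ h₂ h₃ hzI ?_ ?_ hzO.2
  · rw [mem_tri, D.arc_symm t q]
    exact not_or_intro hzq (not_or_intro hzqr hzr)
  · have hzp : z ∉ D.arc p t := fun hz => hzI.1 (D.mem_tri.2 (Or.inl (D.arc_symm p t ▸ hz)))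
    have hzrp : z ∉ D.arc r p := fun hz =>
      hzO.1 (D.mem_tri.2 (Or.inr (Or.inr hz)))
    rw [mem_tri, D.arc_symm t r]
    exact not_or_intro hzr (not_or_intro hzrp hzp)

theorem disjoint_arcs_of_isPositive (h₁ : D.IsPositive P ε t p q) (h₂ : D.IsPositive P ε t q r)
    (h₃ : D.IsPositive P ε t r p) : Disjoint (D.arc t p) (D.arc q r) := by
  refine disjoint_left.2 fun x hx hxqr => ?_
  have h : Distinct q r p := ⟨h₂.distinct.ne₂₃, h₃.distinct.ne₂₃, h₁.distinct.ne₂₃⟩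
  have hpt := h₁.distinct.ne₁₂.symm
  have hcl := (hD.mem_closure_arc_inter_of_mem_arcs h h₂.distinct.rotate hpt hxqr
    (D.arc_symm t p ▸ hx)).2
  have hends : ∀ᶠ z in 𝓝 x, z ∉ ({D.vtx t, D.vtx p} : Set X) :=
    (toFinite _).isClosed.isOpen_compl.mem_nhds
      (D.mem_openArc_of_mem_arcs h₂.distinct.rotate h hx hxqr).2
  obtain ⟨z, ⟨hz, hzO⟩, hzends⟩ := ((mem_closure_iff_frequently.1 hcl).and_eventually hends).exists
  have hzI : z ∈ D.inside P p q r := hD.openArc_diff_subset_inside h₁ h₂ h₃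
    ⟨⟨D.arc_symm p t ▸ hz, hzends⟩, fun hzqr => hzO.1 (D.mem_tri.2 (Or.inl hzqr))⟩
  rw [← D.inside_rotate] at hzI
  exact disjoint_left.1 (D.disjoint_inside_outside P q r p) hzI hzO

theorem vtx_mem_inside_of_isPositive (h₁ : D.IsPositive P ε t p q) (h₂ : D.IsPositive P ε t q r)
    (h₃ : D.IsPositive P ε t r p) : D.vtx t ∈ D.inside P p q r := by
  have h : Distinct p q r := ⟨h₁.distinct.ne₂₃, h₂.distinct.ne₂₃, h₃.distinct.ne₂₃⟩
  have htp := h₁.distinct.ne₁₂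
  have hdisj := disjoint_left.1 (hD.disjoint_arcs_of_isPositive h₁ h₂ h₃)
  obtain ⟨m, hm⟩ := D.openArc_nonempty htp
  refine hD.subset_inside_of_isPreconnected h (D.isPreconnected_arc_diff_right htp) ?_
    ⟨hm.1, fun hmp => hm.2 (Or.inr hmp)⟩
    (hD.openArc_diff_subset_inside h₁ h₂ h₃ ⟨hm, hdisj hm.1⟩)
    ⟨D.vtx_mem_arc_left htp, D.vtx_inj.ne htp⟩
  rintro z ⟨hz, hzp⟩ hztri
  rw [← D.tri_rotate] at hztri
  exact D.notMem_tri_of_mem_arc h.rotate h₁.distinct.ne₃₁.symm h₂.distinct.ne₃₁.symm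
    htp (D.arc_symm t p ▸ hz) hzp (hdisj hz) hztri

theorem isPositive_of_isPositive (h₁ : D.IsPositive P ε t p q) (h₂ : D.IsPositive P ε t q r)
    (h₃ : D.IsPositive P ε t r p) : D.IsPositive P ε p q r := by
  have h : Distinct p q r := ⟨h₁.distinct.ne₂₃, h₂.distinct.ne₂₃, h₃.distinct.ne₂₃⟩
  refine ⟨h, ?_⟩
  rw [← hD.orient_eq_of_vtx_mem_inside h (hD.vtx_mem_inside_of_isPositive h₁ h₂ h₃)]
  exact h₁.rotate.pos

theorem disjoint_arc_inside_of_isPositive (hp : D.IsPositive P ε t s p)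
    (hq : D.IsPositive P ε t s q) (hpq : D.IsPositive P ε t p q) :
    Disjoint (D.arc t s) (D.inside P t p q) := by
  refine disjoint_left.2 fun z hz hzI => ?_
  have h := hpq.distinct
  have hts := hp.distinct.ne₁₂
  have hdisj : Disjoint (D.arc t s) (D.arc p q) := disjoint_left.2 fun x hx hxpq => by
    have hpos := hq.pos
    rw [hD.orient_eq_neg_of_mem_arcs hp.distinct hq.distinct h.ne₂₃ hx hxpq, mul_neg] at hpos
    exact (neg_pos.1 hpos).not_gt hp.pos
  have hzt : z ≠ D.vtx t := fun hzt => hzI.1 (hzt ▸ D.vtx_mem_tri h.ne₁₂)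
  have hs : D.vtx s ∈ D.inside P t p q := by
    refine hD.subset_inside_of_isPreconnected h (D.isPreconnected_arc_diff_right hts.symm) ?_
      ⟨D.arc_symm t s ▸ hz, hzt⟩ hzI ⟨D.vtx_mem_arc_left hts.symm, D.vtx_inj.ne hts.symm⟩
    rintro y ⟨hy, hyt⟩ hytri
    rw [D.arc_symm] at hy
    rw [← D.tri_rotate] at hytri
    exact D.notMem_tri_of_mem_arc h.rotate hp.distinct.ne₂₃ hq.distinct.ne₂₃ hts.symm hy hyt
      (disjoint_left.1 hdisj hy) hytri
  have hsp : D.IsPositive P ε t p s := by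
    refine ⟨hp.distinct.swap.rotate, ?_⟩
    rw [hD.orient_eq_of_vtx_mem_inside h hs]
    exact hpq.pos
  exact hD.not_isPositive_swap hp.rotate.rotate hsp

/-- The edge `ts` would leave `t` into one of the three triangles at `t`. -/
theorem not_isPositive_of_isPositive (h₁ : D.IsPositive P ε t p q) (h₂ : D.IsPositive P ε t q r)
    (h₃ : D.IsPositive P ε t r p) (hp : D.IsPositive P ε t s p) (hq : D.IsPositive P ε t s q) :
    ¬D.IsPositive P ε t s r := fun hr => by
  have h : Distinct p q r := ⟨h₁.distinct.ne₂₃, h₂.distinct.ne₂₃, h₃.distinct.ne₂₃⟩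
  obtain ⟨z, hzI, hz⟩ := mem_closure_iff.1 (D.vtx_mem_closure_openArc hp.distinct.ne₁₂)
    _ (hD.isOpen_inside h) (hD.vtx_mem_inside_of_isPositive h₁ h₂ h₃)
  have harc : ∀ {w : Fin n}, Distinct t s w → z ∉ D.arc w t := fun hw =>
    (D.notMem_arcs_of_mem_openArc hw hz).2
  have htri : z ∉ D.tri p q r := hzI.1
  have hzpq : z ∉ D.arc p q := fun hz => htri (D.mem_tri.2 (Or.inl hz))
  have hzqr : z ∉ D.arc q r := fun hz => htri (D.mem_tri.2 (Or.inr (Or.inl hz)))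
  have hzrp : z ∉ D.arc r p := fun hz => htri (D.mem_tri.2 (Or.inr (Or.inr hz)))
  have hnot : ∀ {a b : Fin n}, D.IsPositive P ε t s a → D.IsPositive P ε t s b →
      D.IsPositive P ε t a b → z ∉ D.arc a b → D.triWinding P t a b z = 0 :=
    fun {a b} ha hb hab hzab => by
      by_contra hw
      refine disjoint_left.1 (hD.disjoint_arc_inside_of_isPositive ha hb hab) hz.1 ⟨?_, hw⟩
      rw [mem_tri, D.arc_symm t a]
      exact not_or_intro (harc ha.distinct) (not_or_intro hzab (harc hb.distinct))
  refine hzI.2 ?_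
  rw [D.triWinding_eq_add P t p q r, hnot hp hq h₁ hzpq, hnot hq hr h₂ hzqr, hnot hr hp h₃ hzrp,
    add_zero, add_zero]

end ConvexAway

end GoodDrawing

/-! ### Triangles on opposite sides of an edge -/

namespace GoodDrawing

variable {n : ℕ} {X : Type*} [TopologicalSpace X]

theorem exists_mem_arc_of_mem_tri {D : GoodDrawing n X} {W : Set (Fin n)} {a b c : Fin n} {z : X}
    (h : Distinct a b c) (ha : a ∈ W) (hb : b ∈ W) (hc : c ∈ W) (hz : z ∈ D.tri a b c) :
    ∃ s ∈ W, ∃ t ∈ W, s ≠ t ∧ z ∈ D.arc s t := by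
  rcases D.mem_tri.1 hz with hz | hz | hz
  · exact ⟨a, ha, b, hb, h.ne₁₂, hz⟩
  · exact ⟨b, hb, c, hc, h.ne₂₃, hz⟩
  · exact ⟨c, hc, a, ha, h.ne₃₁, hz⟩

theorem mem_of_vtx_mem_tri {D : GoodDrawing n X} {a b c d : Fin n} (h : Distinct a b c)
    (hd : D.vtx d ∈ D.tri a b c) : d = a ∨ d = b ∨ d = c := by
  by_contra! hne
  rcases D.mem_tri.1 hd with hd | hd | hd
  · exact D.vtx_notMem_arc ⟨h.ne₁₂, hne.2.1.symm, hne.1⟩ hd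
  · exact D.vtx_notMem_arc ⟨h.ne₂₃, hne.2.2.symm, hne.2.1⟩ hd
  · exact D.vtx_notMem_arc ⟨h.ne₃₁, hne.1.symm, hne.2.2⟩ hd

theorem arc_subset_tri {D : GoodDrawing n X} {a b x y z : Fin n} (hab : a ≠ b)
    (ha : a = x ∨ a = y ∨ a = z) (hb : b = x ∨ b = y ∨ b = z) :
    D.arc a b ⊆ D.tri x y z := by
  intro m hm
  rw [D.mem_tri]
  rcases ha with rfl | rfl | rfl <;> rcases hb with rfl | rfl | rfl <;>
    first
    | exact absurd rfl hab
    | simp only [hm, D.arc_symm b a ▸ hm, true_or, or_true]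

/-- The ends of the edge `uv` together with the vertices on its positive side. -/
def halfPlane (D : GoodDrawing n X) (P : PlaneChart X) (ε : ℤ) (u v : Fin n) : Set (Fin n) :=
  {w | w = u ∨ w = v ∨ D.IsPositive P ε u v w}

namespace ConvexAway

variable [T2Space X] [CompactSpace X] [LocallyConnectedSpace X] {D : GoodDrawing n X}
  {P : PlaneChart X} (hD : D.ConvexAway P) {ε : ℤ} {a b c d u v x y z : Fin n} {m : X}
include hD

theorem mem_halfPlane_neg_iff : a ∈ D.halfPlane P (-ε) v u ↔ a ∈ D.halfPlane P ε u v :=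
  or_left_comm.trans (or_congr_right (or_congr_right hD.isPositive_neg_iff))

theorem halfPlane_inter_halfPlane_subset :
    D.halfPlane P ε u v ∩ D.halfPlane P ε v u ⊆ {u, v} := by
  rintro w ⟨rfl | rfl | hw, hw'⟩
  · exact Or.inl rfl
  · exact Or.inr rfl
  · exact hw'.elim Or.inr (Or.elim · Or.inl fun h => (hD.not_isPositive_swap hw h).elim)

theorem isPositive_swap_of_mem_arcs (h : D.IsPositive P ε a b c) (hd : Distinct a b d)
    (hcd : c ≠ d) (hm : m ∈ D.arc a b) (hm' : m ∈ D.arc c d) : D.IsPositive P ε b a d := by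
  refine ⟨hd.swap, ?_⟩
  rw [hD.orient_swap hd, hD.orient_eq_neg_of_mem_arcs h.distinct hd hcd hm hm', neg_neg]
  exact h.pos

theorem isPositive_of_vtx_mem_inside (h : D.IsPositive P ε a b c)
    (hd : D.vtx d ∈ D.inside P a b c) : D.IsPositive P ε a b d := by
  obtain ⟨hda, hdb, -⟩ := ne_of_vtx_mem_inside h.distinct hd
  exact ⟨⟨h.distinct.ne₁₂, hdb.symm, hda⟩, hD.orient_eq_of_vtx_mem_inside h.distinct hd ▸ h.pos⟩

theorem ne_of_isPositive (ha : D.IsPositive P ε u v a) (hc : D.IsPositive P ε v u c) : a ≠ c := by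
  rintro rfl
  exact hD.not_isPositive_swap ha hc

theorem disjoint_arc_base_arc (hc : D.IsPositive P ε v u c) (hd : D.IsPositive P ε v u d)
    (hcd : c ≠ d) : Disjoint (D.arc u v) (D.arc c d) :=
  disjoint_left.2 fun _ hm hm' => hD.not_isPositive_swap hd
    (hD.isPositive_swap_of_mem_arcs hc hd.distinct hcd (D.arc_symm u v ▸ hm) hm')

theorem disjoint_arc_left_arc_right (ha : D.IsPositive P ε u v a) (hc : D.IsPositive P ε v u c) :
    Disjoint (D.arc u a) (D.arc v c) := by
  refine disjoint_left.2 fun m hm hm' => ?_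
  have hac := hD.ne_of_isPositive ha hc
  have h₁ : D.IsPositive P ε u a c := hD.isPositive_swap_of_mem_arcs ha.rotate.rotate
    ⟨ha.distinct.ne₃₁, hc.distinct.ne₂₃, hac.symm⟩ hc.distinct.ne₃₁.symm (D.arc_symm u a ▸ hm) hm'
  have h₂ : D.IsPositive P ε v c a := hD.isPositive_swap_of_mem_arcs hc.rotate.rotate
    ⟨hc.distinct.ne₃₁, ha.distinct.ne₂₃, hac⟩ ha.distinct.ne₃₁.symm (D.arc_symm v c ▸ hm') hm
  have h₃ : D.IsPositive P ε v a c := hD.isPositive_of_isPositive ha h₁ hc.rotate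
  exact hD.not_isPositive_swap h₃.rotate.rotate h₂

theorem disjoint_arc_left_arc_of_isPositive (ha : D.IsPositive P ε u v a)
    (hc : D.IsPositive P ε v u c) (hd : D.IsPositive P ε v u d) (hcd : c ≠ d)
    (hac : D.IsPositive P ε u a c) : Disjoint (D.arc u a) (D.arc c d) := by
  refine disjoint_left.2 fun m hm hm' => ?_
  have had := hD.ne_of_isPositive ha hd
  have hau : D.IsPositive P ε a u d := hD.isPositive_swap_of_mem_arcs hac
    ⟨hac.distinct.ne₁₂, had, hd.distinct.ne₂₃.symm⟩ hcd hm hm'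
  rcases hD.isPositive_or_isPositive_swap ha.ne_zero
    ⟨hcd, hd.distinct.ne₂₃.symm, hc.distinct.ne₂₃⟩ with hcdu | hdcu
  · have h₁ : D.IsPositive P ε d c a := hD.isPositive_swap_of_mem_arcs hcdu
      ⟨hcd, had.symm, hac.distinct.ne₂₃⟩ hac.distinct.ne₁₂ hm' hm
    have h₂ : D.IsPositive P ε a c d :=
      hD.isPositive_of_isPositive hac hcdu.rotate.rotate hau.rotate
    exact hD.not_isPositive_swap h₂.rotate h₁
  · exact hD.not_isPositive_of_isPositive ha hac hc.rotate hd.rotate hau.rotate hdcu.rotate.rotate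

theorem disjoint_arc_left_arc (ha : D.IsPositive P ε u v a) (hc : D.IsPositive P ε v u c)
    (hd : D.IsPositive P ε v u d) (hcd : c ≠ d) : Disjoint (D.arc u a) (D.arc c d) := by
  have hac := hD.ne_of_isPositive ha hc
  have had := hD.ne_of_isPositive ha hd
  rcases hD.isPositive_or_isPositive_swap ha.ne_zero
    ⟨ha.distinct.ne₃₁.symm, hac, hc.distinct.ne₂₃.symm⟩ with huac | hauc
  · exact hD.disjoint_arc_left_arc_of_isPositive ha hc hd hcd huac
  · refine disjoint_left.2 fun m hm hm' => ?_
    have huad : D.IsPositive P ε u a d := hD.isPositive_swap_of_mem_arcs hauc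
      ⟨ha.distinct.ne₃₁, hd.distinct.ne₂₃, had.symm⟩ hcd (D.arc_symm u a ▸ hm) hm'
    exact disjoint_left.1 (hD.disjoint_arc_left_arc_of_isPositive ha hd hc hcd.symm huad) hm
      (D.arc_symm c d ▸ hm')

theorem disjoint_arc_left_of_mem_halfPlane (ha : a ∈ D.halfPlane P ε u v)
    (hc : c ∈ D.halfPlane P ε v u) (hd : d ∈ D.halfPlane P ε v u) (hau : a ≠ u) (hcu : c ≠ u)
    (hdu : d ≠ u) (hac : a ≠ c) (had : a ≠ d) (hcd : c ≠ d) :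
    Disjoint (D.arc u a) (D.arc c d) := by
  have hpos : ∀ {b}, b ∈ D.halfPlane P ε v u → b ≠ u → b ≠ v → D.IsPositive P ε v u b :=
    fun hb hbu hbv => (hb.resolve_left hbv).resolve_left hbu
  rcases ha with rfl | rfl | ha
  · exact absurd rfl hau
  · exact hD.disjoint_arc_base_arc (hpos hc hcu hac.symm) (hpos hd hdu had.symm) hcd
  rcases eq_or_ne c v with rfl | hcv
  · exact hD.disjoint_arc_left_arc_right ha (hpos hd hdu hcd.symm)
  rcases eq_or_ne d v with rfl | hdv
  · exact D.arc_symm d c ▸ hD.disjoint_arc_left_arc_right ha (hpos hc hcu hcv)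
  · exact hD.disjoint_arc_left_arc ha (hpos hc hcu hcv) (hpos hd hdu hdv) hcd

theorem vtx_notMem_inside_base (hx : D.IsPositive P ε v u x) (hy : D.IsPositive P ε v u y)
    (hxy : x ≠ y) : D.vtx u ∉ D.inside P v x y := fun hu => by
  have h : Distinct v x y := ⟨hx.distinct.ne₃₁.symm, hxy, hy.distinct.ne₃₁⟩
  rcases hD.isPositive_or_isPositive_swap hx.ne_zero h with hpos | hneg
  · exact hD.not_isPositive_swap (hD.isPositive_of_vtx_mem_inside hpos hu).rotate.rotate hx
  · exact hD.not_isPositive_swap (hD.isPositive_of_vtx_mem_inside hneg.rotate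
      (by rwa [D.inside_rotate, D.inside_swap])).rotate.rotate hy

theorem vtx_notMem_inside_of_isPositive (hx : D.IsPositive P ε v u x)
    (hy : D.IsPositive P ε v u y) (hz : D.IsPositive P ε v u z) (h : D.IsPositive P ε x y z) :
    D.vtx u ∉ D.inside P x y z := fun hu => by
  have hxy := hD.isPositive_of_vtx_mem_inside h hu
  have hyz := hD.isPositive_of_vtx_mem_inside h.rotate (by rwa [D.inside_rotate])
  have hzx := hD.isPositive_of_vtx_mem_inside h.rotate.rotate
    (by rwa [D.inside_rotate, D.inside_rotate])
  exact hD.not_isPositive_of_isPositive (hD.isPositive_neg_iff.2 hxy.rotate)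
    (hD.isPositive_neg_iff.2 hzx.rotate) (hD.isPositive_neg_iff.2 hyz.rotate)
    (hD.isPositive_neg_iff.2 hy) (hD.isPositive_neg_iff.2 hx) (hD.isPositive_neg_iff.2 hz)

theorem vtx_left_notMem_inside (hx : x ∈ D.halfPlane P ε v u) (hy : y ∈ D.halfPlane P ε v u)
    (hz : z ∈ D.halfPlane P ε v u) (h : Distinct x y z) : D.vtx u ∉ D.inside P x y z := fun hu => by
  obtain ⟨hux, huy, huz⟩ := ne_of_vtx_mem_inside h hu
  rcases hx with rfl | hx
  · exact hD.vtx_notMem_inside_base ((hy.resolve_left h.ne₁₂.symm).resolve_left huy.symm)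
      ((hz.resolve_left h.ne₃₁).resolve_left huz.symm) h.ne₂₃ hu
  have hx := hx.resolve_left hux.symm
  rcases hy with rfl | hy
  · exact hD.vtx_notMem_inside_base ((hz.resolve_left h.ne₂₃.symm).resolve_left huz.symm) hx
      h.ne₃₁ (by rwa [D.inside_rotate])
  have hy := hy.resolve_left huy.symm
  rcases hz with rfl | hz
  · exact hD.vtx_notMem_inside_base hx hy h.ne₁₂ (by rwa [D.inside_rotate, D.inside_rotate])
  have hz := hz.resolve_left huz.symm
  rcases hD.isPositive_or_isPositive_swap hx.ne_zero h with hpos | hneg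
  · exact hD.vtx_notMem_inside_of_isPositive hx hy hz hpos hu
  · exact hD.vtx_notMem_inside_of_isPositive hy hx hz hneg (by rwa [D.inside_swap])

theorem vtx_notMem_inside_of_ne (ha : a ∈ D.halfPlane P ε u v) (hx : x ∈ D.halfPlane P ε v u)
    (hy : y ∈ D.halfPlane P ε v u) (hz : z ∈ D.halfPlane P ε v u) (h : Distinct x y z)
    (hau : a ≠ u) (hxu : x ≠ u) (hyu : y ≠ u) (hzu : z ≠ u) : D.vtx a ∉ D.inside P x y z :=
  fun hI => by
  obtain ⟨hax, hay, haz⟩ := ne_of_vtx_mem_inside h hI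
  refine hD.vtx_left_notMem_inside hx hy hz h (hD.subset_inside_of_isPreconnected h
    (D.isPreconnected_arc hau) (fun m hm hm' => ?_) (D.vtx_mem_arc_left hau) hI
    (D.vtx_mem_arc_right hau))
  obtain ⟨s, ⟨hs, hsu, hsa⟩, t, ⟨ht, htu, hta⟩, hst, hmst⟩ := exists_mem_arc_of_mem_tri
    (W := {w | w ∈ D.halfPlane P ε v u ∧ w ≠ u ∧ w ≠ a}) h ⟨hx, hxu, hax.symm⟩
    ⟨hy, hyu, hay.symm⟩ ⟨hz, hzu, haz.symm⟩ hm'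
  exact disjoint_left.1 (hD.disjoint_arc_left_of_mem_halfPlane ha hs ht hau hsu htu hsa.symm
    hta.symm hst) (D.arc_symm u a ▸ hm) hmst

theorem vtx_notMem_inside_of_opposite (ha : D.IsPositive P ε u v a)
    (hx : D.IsPositive P ε v u x) : D.vtx a ∉ D.inside P u v x := fun hI =>
  hD.not_isPositive_swap ha (hD.isPositive_neg_iff.1
    (hD.isPositive_of_vtx_mem_inside (hD.isPositive_neg_iff.2 hx) hI))

theorem vtx_notMem_inside_left (ha : D.IsPositive P ε u v a) (hx : x ∈ D.halfPlane P ε v u)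
    (hy : y ∈ D.halfPlane P ε v u) (h : Distinct u x y) : D.vtx a ∉ D.inside P u x y :=
  fun hI => by
  rcases eq_or_ne x v with rfl | hxv
  · exact hD.vtx_notMem_inside_of_opposite ha
      ((hy.resolve_left h.ne₂₃.symm).resolve_left h.ne₃₁) hI
  rcases eq_or_ne y v with rfl | hyv
  · refine hD.vtx_notMem_inside_of_opposite ha ((hx.resolve_left hxv).resolve_left h.ne₁₂.symm) ?_
    rwa [← D.inside_rotate, D.inside_swap, D.inside_rotate]
  have hmem : ∀ {w}, w ∈ D.halfPlane P ε v u → w ∈ D.halfPlane P (-ε) u v :=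
    hD.mem_halfPlane_neg_iff.2
  exact hD.vtx_notMem_inside_of_ne (hD.mem_halfPlane_neg_iff.2 (Or.inr (Or.inr ha)))
    (hmem (Or.inr (Or.inl rfl))) (hmem hx) (hmem hy) h ha.distinct.ne₂₃.symm ha.distinct.ne₁₂
    hxv hyv hI

theorem vtx_notMem_inside (ha : a ∈ D.halfPlane P ε u v) (hx : x ∈ D.halfPlane P ε v u)
    (hy : y ∈ D.halfPlane P ε v u) (hz : z ∈ D.halfPlane P ε v u) (h : Distinct x y z) :
    D.vtx a ∉ D.inside P x y z := fun hI => by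
  rcases ha with rfl | rfl | ha
  · exact hD.vtx_left_notMem_inside hx hy hz h hI
  · exact hD.vtx_left_notMem_inside (hD.mem_halfPlane_neg_iff.2 hx)
      (hD.mem_halfPlane_neg_iff.2 hy) (hD.mem_halfPlane_neg_iff.2 hz) h hI
  rcases eq_or_ne x u with rfl | hxu
  · exact hD.vtx_notMem_inside_left ha hy hz h hI
  rcases eq_or_ne y u with rfl | hyu
  · exact hD.vtx_notMem_inside_left ha hz hx h.rotate (by rwa [D.inside_rotate])
  rcases eq_or_ne z u with rfl | hzu
  · exact hD.vtx_notMem_inside_left ha hx hy h.rotate.rotate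
      (by rwa [D.inside_rotate, D.inside_rotate])
  exact hD.vtx_notMem_inside_of_ne (Or.inr (Or.inr ha)) hx hy hz h ha.distinct.ne₃₁ hxu hyu hzu hI

theorem vtx_mem_inside_or_vtx_mem_inside (h : Distinct a b x) (hc : Distinct a b c)
    (hd : Distinct a b d) (hcd : c ≠ d) (hm : m ∈ D.arc a b) (hm' : m ∈ D.arc c d)
    (hbx : Disjoint (D.arc b x) (D.arc c d)) (hxa : Disjoint (D.arc x a) (D.arc c d)) :
    D.vtx c ∈ D.inside P a b x ∨ D.vtx d ∈ D.inside P a b x := by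
  have hind := D.indep_arcs a b c d h.ne₁₂ hcd hc.ne₃₁.symm hd.ne₃₁.symm hc.ne₂₃ hd.ne₂₃
  have hmab : m ∈ D.openArc a b := D.mem_openArc_of_mem_arcs ⟨hcd, hd.ne₃₁, hc.ne₃₁.symm⟩
    ⟨hcd, hd.ne₂₃.symm, hc.ne₂₃⟩ hm hm'
  obtain ⟨t, htcd, htI⟩ := closure_nonempty_iff.1
    ⟨m, (hD.mem_closure_inter_of_crossesAt h hmab (hind.2 m ⟨hm, hm'⟩).1).1⟩
  have hmiss : ∀ s ∈ D.arc c d \ {m}, s ∉ D.tri a b x := by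
    rintro s ⟨hs, hsm⟩ hst
    rcases D.mem_tri.1 hst with hst | hst | hst
    · exact hsm (hind.1 ⟨hst, hs⟩ ⟨hm, hm'⟩)
    · exact disjoint_left.1 hbx hst hs
    · exact disjoint_left.1 hxa hst hs
  obtain ⟨L, R, hL, hR, hLR, hcL, -, -, hdR⟩ :=
    D.exists_arc_diff_eq_union hcd (D.mem_openArc_of_mem_arcs hc hd hm' hm)
  have htm : t ≠ m := by
    rintro rfl
    exact htI.1 (D.mem_tri.2 (Or.inl hm))
  rcases hLR.subset ⟨htcd, htm⟩ with ht | ht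
  · exact Or.inl (hD.subset_inside_of_isPreconnected h hL
      (fun s hs => hmiss s (hLR.superset (Or.inl hs))) ht htI hcL)
  · exact Or.inr (hD.subset_inside_of_isPreconnected h hR
      (fun s hs => hmiss s (hLR.superset (Or.inr hs))) ht htI hdR)

theorem disjoint_arcs_of_mem_pair (ha : a ∈ ({u, v} : Set (Fin n))) (hb : b ∈ D.halfPlane P ε u v)
    (hc : c ∈ D.halfPlane P ε v u) (hd : d ∈ D.halfPlane P ε v u) (hab : a ≠ b) (hcd : c ≠ d)
    (hac : a ≠ c) (had : a ≠ d) (hbc : b ≠ c) (hbd : b ≠ d) :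
    Disjoint (D.arc a b) (D.arc c d) := by
  rcases ha with rfl | rfl
  · exact hD.disjoint_arc_left_of_mem_halfPlane hb hc hd hab.symm hac.symm had.symm hbc hbd hcd
  · exact hD.disjoint_arc_left_of_mem_halfPlane (hD.mem_halfPlane_neg_iff.2 hb)
      (hD.mem_halfPlane_neg_iff.2 hc) (hD.mem_halfPlane_neg_iff.2 hd) hab.symm hac.symm had.symm
      hbc hbd hcd

theorem disjoint_arcs_of_isPositive_of_isPositive (ha : D.IsPositive P ε u v a)
    (hb : D.IsPositive P ε u v b) (hc : D.IsPositive P ε v u c) (hd : D.IsPositive P ε v u d)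
    (hab : a ≠ b) (hcd : c ≠ d) : Disjoint (D.arc a b) (D.arc c d) := by
  refine disjoint_left.2 fun m hm hm' => ?_
  have hac := hD.ne_of_isPositive ha hc
  have had := hD.ne_of_isPositive ha hd
  have hbc := hD.ne_of_isPositive hb hc
  have hbd := hD.ne_of_isPositive hb hd
  have h : Distinct a b u := ⟨hab, hb.distinct.ne₃₁, ha.distinct.ne₃₁.symm⟩
  have hnotMem : ∀ {w}, D.IsPositive P ε v u w → D.vtx w ∉ D.inside P a b u := fun hw =>
    hD.vtx_notMem_inside (Or.inr (Or.inr hw)) (Or.inr (Or.inr ha)) (Or.inr (Or.inr hb))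
      (Or.inl rfl) h
  rcases hD.vtx_mem_inside_or_vtx_mem_inside h ⟨hab, hbc, hac.symm⟩ ⟨hab, hbd, had.symm⟩ hcd hm hm'
    (D.arc_symm u b ▸ hD.disjoint_arc_left_arc hb hc hd hcd)
    (hD.disjoint_arc_left_arc ha hc hd hcd) with hI | hI
  · exact hnotMem hc hI
  · exact hnotMem hd hI

theorem disjoint_arcs_of_mem_halfPlane (ha : a ∈ D.halfPlane P ε u v)
    (hb : b ∈ D.halfPlane P ε u v) (hc : c ∈ D.halfPlane P ε v u) (hd : d ∈ D.halfPlane P ε v u)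
    (hab : a ≠ b) (hcd : c ≠ d) (hac : a ≠ c) (had : a ≠ d) (hbc : b ≠ c) (hbd : b ≠ d) :
    Disjoint (D.arc a b) (D.arc c d) := by
  by_cases hau : a ∈ ({u, v} : Set (Fin n))
  · exact hD.disjoint_arcs_of_mem_pair hau hb hc hd hab hcd hac had hbc hbd
  by_cases hbu : b ∈ ({u, v} : Set (Fin n))
  · exact D.arc_symm b a ▸ hD.disjoint_arcs_of_mem_pair hbu ha hc hd hab.symm hcd hbc hbd hac had
  by_cases hcu : c ∈ ({v, u} : Set (Fin n))
  · exact (hD.disjoint_arcs_of_mem_pair hcu hd ha hb hcd hab hac.symm hbc.symm had.symm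
      hbd.symm).symm
  by_cases hdu : d ∈ ({v, u} : Set (Fin n))
  · exact D.arc_symm d c ▸ (hD.disjoint_arcs_of_mem_pair hdu hc ha hb hcd.symm hab had.symm
      hbd.symm hac.symm hbc.symm).symm
  have hpos : ∀ {u v w}, w ∈ D.halfPlane P ε u v → w ∉ ({u, v} : Set (Fin n)) →
      D.IsPositive P ε u v w :=
    fun hw hne => (hw.resolve_left (hne ∘ Or.inl)).resolve_left (hne ∘ Or.inr)
  exact hD.disjoint_arcs_of_isPositive_of_isPositive (hpos ha hau) (hpos hb hbu) (hpos hc hcu)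
    (hpos hd hdu) hab hcd

theorem mem_arc_of_mem_arcs_of_eq (ha : a ∈ D.halfPlane P ε u v)
    (hb : b ∈ D.halfPlane P ε u v) (ha' : a ∈ D.halfPlane P ε v u) (hd : d ∈ D.halfPlane P ε v u)
    (huv : u ≠ v) (hab : a ≠ b) (had : a ≠ d) (hm : m ∈ D.arc a b) (hm' : m ∈ D.arc a d) :
    m ∈ D.arc u v := by
  have hvtx : ∀ {w}, w ∈ D.halfPlane P ε u v → w ∈ D.halfPlane P ε v u → w = u ∨ w = v :=
    fun hw hw' => hD.halfPlane_inter_halfPlane_subset ⟨hw, hw'⟩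
  rcases eq_or_ne b d with rfl | hbd
  · rcases hvtx ha ha' with rfl | rfl <;> rcases hvtx hb hd with rfl | rfl
    · exact (hab rfl).elim
    · exact hm
    · exact D.arc_symm _ _ ▸ hm
    · exact (hab rfl).elim
  · rw [D.eq_vtx_of_mem_arcs ⟨hab.symm, had, hbd.symm⟩ (D.arc_symm a b ▸ hm) hm']
    rcases hvtx ha ha' with rfl | rfl
    · exact D.vtx_mem_arc_left huv
    · exact D.vtx_mem_arc_right huv

theorem mem_arc_of_mem_arcs (ha : a ∈ D.halfPlane P ε u v)
    (hb : b ∈ D.halfPlane P ε u v) (hc : c ∈ D.halfPlane P ε v u) (hd : d ∈ D.halfPlane P ε v u)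
    (huv : u ≠ v) (hab : a ≠ b) (hcd : c ≠ d) (hm : m ∈ D.arc a b) (hm' : m ∈ D.arc c d) :
    m ∈ D.arc u v := by
  rcases eq_or_ne a c with rfl | hac
  · exact hD.mem_arc_of_mem_arcs_of_eq ha hb hc hd huv hab hcd hm hm'
  rcases eq_or_ne a d with rfl | had
  · exact hD.mem_arc_of_mem_arcs_of_eq ha hb hd hc huv hab hac hm (D.arc_symm c a ▸ hm')
  rcases eq_or_ne b c with rfl | hbc
  · exact hD.mem_arc_of_mem_arcs_of_eq hb ha hc hd huv hab.symm hcd (D.arc_symm a b ▸ hm) hm'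
  rcases eq_or_ne b d with rfl | hbd
  · exact hD.mem_arc_of_mem_arcs_of_eq hb ha hd hc huv hab.symm hbc (D.arc_symm a b ▸ hm)
      (D.arc_symm c b ▸ hm')
  exact (disjoint_left.1 (hD.disjoint_arcs_of_mem_halfPlane ha hb hc hd hab hcd hac had hbc hbd)
    hm hm').elim

theorem disjoint_arc_inside_of_ne (ha : a ∈ D.halfPlane P ε u v) (hb : b ∈ D.halfPlane P ε u v)
    (hx : x ∈ D.halfPlane P ε v u) (hy : y ∈ D.halfPlane P ε v u)
    (hz : z ∈ D.halfPlane P ε v u) (hab : a ≠ b) (h : Distinct x y z) (hax : a ≠ x) (hay : a ≠ y)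
    (haz : a ≠ z) : Disjoint (D.arc a b) (D.inside P x y z) := by
  have hmiss : D.arc a b \ {D.vtx b} ⊆ (D.tri x y z)ᶜ := by
    rintro m ⟨hm, hmb⟩ hmt
    obtain ⟨s, ⟨hs, hsa⟩, t, ⟨ht, hta⟩, hst, hm'⟩ := exists_mem_arc_of_mem_tri
      (W := {w | w ∈ D.halfPlane P ε v u ∧ a ≠ w}) h ⟨hx, hax⟩ ⟨hy, hay⟩ ⟨hz, haz⟩ hmt
    rcases eq_or_ne b s with rfl | hbs
    · exact hmb (D.eq_vtx_of_mem_arcs ⟨hab, hst, hta.symm⟩ hm hm')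
    rcases eq_or_ne b t with rfl | hbt
    · exact hmb (D.eq_vtx_of_mem_arcs ⟨hab, hst.symm, hsa.symm⟩ hm (D.arc_symm s b ▸ hm'))
    exact disjoint_left.1 (hD.disjoint_arcs_of_mem_halfPlane ha hb hs ht hab hst hsa hta hbs hbt)
      hm hm'
  have haA : D.vtx a ∈ D.arc a b \ {D.vtx b} :=
    ⟨D.vtx_mem_arc_left hab, fun hab' => hab (D.vtx_inj hab')⟩
  refine disjoint_left.2 fun m hm hmI => ?_
  rcases eq_or_ne m (D.vtx b) with rfl | hmb
  · exact hD.vtx_notMem_inside hb hx hy hz h hmI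
  · exact hD.vtx_notMem_inside ha hx hy hz h (hD.subset_inside_of_isPreconnected h
      (D.isPreconnected_arc_diff_right hab) hmiss ⟨hm, hmb⟩ hmI haA)

theorem disjoint_arc_inside_of_mem_halfPlane (ha : a ∈ D.halfPlane P ε u v)
    (hb : b ∈ D.halfPlane P ε u v) (hx : x ∈ D.halfPlane P ε v u) (hy : y ∈ D.halfPlane P ε v u)
    (hz : z ∈ D.halfPlane P ε v u) (hab : a ≠ b) (h : Distinct x y z) :
    Disjoint (D.arc a b) (D.inside P x y z) := by
  by_cases hat : a ≠ x ∧ a ≠ y ∧ a ≠ z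
  · exact hD.disjoint_arc_inside_of_ne ha hb hx hy hz hab h hat.1 hat.2.1 hat.2.2
  by_cases hbt : b ≠ x ∧ b ≠ y ∧ b ≠ z
  · exact D.arc_symm b a ▸
      hD.disjoint_arc_inside_of_ne hb ha hx hy hz hab.symm h hbt.1 hbt.2.1 hbt.2.2
  exact disjoint_left.2 fun m hm hmI => hmI.1 (arc_subset_tri hab (by tauto) (by tauto) hm)

theorem vtx_mem_closure_inside (h : Distinct a b c) : D.vtx a ∈ closure (D.inside P a b c) :=
  closure_minimal (hD.openArc_subset_closure_inside h) isClosed_closure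
    (D.vtx_mem_closure_openArc h.ne₁₂)

theorem disjoint_inside_inside (ha : a ∈ D.halfPlane P ε u v) (hb : b ∈ D.halfPlane P ε u v)
    (hc : c ∈ D.halfPlane P ε u v) (hx : x ∈ D.halfPlane P ε v u) (hy : y ∈ D.halfPlane P ε v u)
    (hz : z ∈ D.halfPlane P ε v u) (h : Distinct a b c) (h' : Distinct x y z) :
    Disjoint (D.inside P a b c) (D.inside P x y z) := by
  refine disjoint_left.2 fun m hm hm' => ?_
  have hsub : D.inside P a b c ⊆ D.inside P x y z :=
    hD.subset_inside_of_isPreconnected h' (hD.isPreconnected_inside h) (fun t ht htt => by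
      obtain ⟨r, hr, s, hs, hrs, ht'⟩ := exists_mem_arc_of_mem_tri h' hx hy hz htt
      exact disjoint_left.1 (hD.disjoint_arc_inside_of_mem_halfPlane hr hs ha hb hc hrs h) ht' ht)
      hm hm'
  have hW : ∀ {w}, w ∈ D.halfPlane P ε u v → D.vtx w ∈ closure (D.inside P a b c) →
      w = u ∨ w = v := by
    intro w hw hcl
    have hO : D.vtx w ∉ D.outside P x y z := fun hO =>
      disjoint_left.1 ((D.disjoint_inside_outside P x y z).closure_left (hD.isOpen_outside h'))
        (closure_mono hsub hcl) hO
    have ht : D.vtx w ∈ D.tri x y z :=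
      (D.mem_tri_or_inside_or_outside P x y z _).resolve_right fun hside =>
        hside.elim (hD.vtx_notMem_inside hw hx hy hz h') hO
    have hw' : w ∈ D.halfPlane P ε v u := by
      rcases mem_of_vtx_mem_tri h' ht with rfl | rfl | rfl <;> assumption
    exact hD.halfPlane_inter_halfPlane_subset ⟨hw, hw'⟩
  have ha' := hW ha (hD.vtx_mem_closure_inside h)
  have hb' := hW hb (D.inside_rotate P a b c ▸ hD.vtx_mem_closure_inside h.rotate)
  have hc' := hW hc (D.inside_rotate P c a b ▸ hD.vtx_mem_closure_inside h.rotate.rotate)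
  have := h.ne₁₂
  have := h.ne₂₃
  have := h.ne₃₁
  grind

theorem mem_arc_of_notMem_outside (huv : u ≠ v) (ha : a ∈ D.halfPlane P ε u v)
    (hb : b ∈ D.halfPlane P ε u v) (hc : c ∈ D.halfPlane P ε u v) (hx : x ∈ D.halfPlane P ε v u)
    (hy : y ∈ D.halfPlane P ε v u) (hz : z ∈ D.halfPlane P ε v u) (h : Distinct a b c)
    (h' : Distinct x y z) (hm : m ∉ D.outside P a b c) (hm' : m ∉ D.outside P x y z) :
    m ∈ D.arc u v := by
  rcases D.mem_tri_or_inside_or_outside P a b c m with ht | hI | hO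
  · obtain ⟨r, hr, s, hs, hrs, hmrs⟩ := exists_mem_arc_of_mem_tri h ha hb hc ht
    rcases D.mem_tri_or_inside_or_outside P x y z m with ht' | hI' | hO'
    · obtain ⟨p, hp, q, hq, hpq, hmpq⟩ := exists_mem_arc_of_mem_tri h' hx hy hz ht'
      exact hD.mem_arc_of_mem_arcs hr hs hp hq huv hrs hpq hmrs hmpq
    · exact (disjoint_left.1
        (hD.disjoint_arc_inside_of_mem_halfPlane hr hs hx hy hz hrs h') hmrs hI').elim
    · exact (hm' hO').elim
  · rcases D.mem_tri_or_inside_or_outside P x y z m with ht' | hI' | hO'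
    · obtain ⟨p, hp, q, hq, hpq, hmpq⟩ := exists_mem_arc_of_mem_tri h' hx hy hz ht'
      exact (disjoint_left.1
        (hD.disjoint_arc_inside_of_mem_halfPlane hp hq ha hb hc hpq h) hmpq hI).elim
    · exact (disjoint_left.1 (hD.disjoint_inside_inside ha hb hc hx hy hz h h') hI hI').elim
    · exact (hm' hO').elim
  · exact (hm hO).elim

end ConvexAway

end GoodDrawing

/-! ### Polygons and convex hulls -/

namespace GoodDrawing

variable {n : ℕ} {X : Type*} [TopologicalSpace X]

/-- The union of the edge-arcs along the walk `e 0, e 1, …, e (k + 1)`. -/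
def walkCurve (D : GoodDrawing n X) (e : ℕ → Fin n) (k : ℕ) : Set X :=
  accumulate (fun j => D.arc (e j) (e (j + 1))) k

/-- The walk `e 0, e 1, …, e (m + 3)` runs once around a cycle, and edges of this cycle without a
common end do not cross. -/
structure IsPolygon (D : GoodDrawing n X) (m : ℕ) (e : ℕ → Fin n) : Prop where
  injOn : InjOn e (Iio (m + 3))
  closed : e (m + 3) = e 0
  disjoint : ∀ j < m + 3, ∀ k < m + 3, Distinct (e j) (e (j + 1)) (e k) →
    Distinct (e j) (e (j + 1)) (e (k + 1)) →
    Disjoint (D.arc (e j) (e (j + 1))) (D.arc (e k) (e (k + 1)))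

theorem mem_walkCurve {D : GoodDrawing n X} {e : ℕ → Fin n} {k : ℕ} {z : X} :
    z ∈ D.walkCurve e k ↔ ∃ j ≤ k, z ∈ D.arc (e j) (e (j + 1)) :=
  mem_accumulate

theorem walkCurve_succ (D : GoodDrawing n X) (e : ℕ → Fin n) (k : ℕ) :
    D.walkCurve e (k + 1) = D.walkCurve e k ∪ D.arc (e (k + 1)) (e (k + 2)) :=
  accumulate_succ _ k

theorem sum_arcTurn_add_arcTurn_eq_sum_triWinding (D : GoodDrawing n X) (P : PlaneChart X)
    (e : ℕ → Fin n) (z : X) (k : ℕ) :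
    (∑ j ∈ Finset.range (k + 1), D.arcTurn P (e j) (e (j + 1)) z) +
        D.arcTurn P (e (k + 1)) (e 0) z =
      ∑ j ∈ Finset.range k, D.triWinding P (e 0) (e (j + 1)) (e (j + 2)) z := by
  induction k with
  | zero => simp [D.arcTurn_symm P (e 0) (e 1)]
  | succ k ih =>
    rw [Finset.sum_range_succ, Finset.sum_range_succ (fun j => D.triWinding P (e 0) _ _ z), ← ih,
      triWinding, D.arcTurn_symm P (e (k + 1)) (e 0)]
    ring

namespace IsPolygon

variable {D : GoodDrawing n X} {m i j k : ℕ} {e : ℕ → Fin n} (h : D.IsPolygon m e)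
include h

theorem ne (hij : i < m + 3 ∧ j < m + 3 ∧ i ≠ j) : e i ≠ e j :=
  h.injOn.ne hij.1 hij.2.1 hij.2.2

theorem distinct (hijk : i < m + 3 ∧ j < m + 3 ∧ k < m + 3 ∧ i ≠ j ∧ j ≠ k ∧ k ≠ i) :
    Distinct (e i) (e j) (e k) :=
  ⟨h.ne (by omega), h.ne (by omega), h.ne (by omega)⟩

theorem vtx_zero_mem_walkCurve (k : ℕ) : D.vtx (e 0) ∈ D.walkCurve e k :=
  mem_walkCurve.2 ⟨0, k.zero_le, D.vtx_mem_arc_left (h.ne (by omega))⟩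

theorem vtx_succ_mem_walkCurve (hk : k ≤ m + 1) : D.vtx (e (k + 1)) ∈ D.walkCurve e k :=
  mem_walkCurve.2 ⟨k, le_rfl, D.vtx_mem_arc_right (h.ne (by omega))⟩

theorem walkCurve_eq : D.walkCurve e (m + 2) =
    D.walkCurve e (m + 1) ∪ D.arc (e (m + 2)) (e 0) := by
  rw [walkCurve_succ, ← h.closed]

theorem walkCurve_inter_arc (hk : k ≤ m) :
    D.walkCurve e k ∩ D.arc (e (k + 1)) (e (k + 2)) = {D.vtx (e (k + 1))} := by
  refine Subset.antisymm ?_ (singleton_subset_iff.2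
    ⟨h.vtx_succ_mem_walkCurve (by omega), D.vtx_mem_arc_left (h.ne (by omega))⟩)
  rintro z ⟨hz, hzk⟩
  obtain ⟨j, hj, hzj⟩ := mem_walkCurve.1 hz
  rcases hj.lt_or_eq with hj | rfl
  · exact (disjoint_left.1 (h.disjoint j (by omega) (k + 1) (by omega) (h.distinct (by omega))
      (h.distinct (by omega))) hzj hzk).elim
  · exact D.eq_vtx_of_mem_arcs (h.distinct (by omega)) hzj hzk

theorem walkCurve_inter_last_arc :
    D.walkCurve e (m + 1) ∩ D.arc (e (m + 2)) (e 0) = {D.vtx (e 0), D.vtx (e (m + 2))} := by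
  refine Subset.antisymm ?_ (pair_subset
    ⟨h.vtx_zero_mem_walkCurve _, D.vtx_mem_arc_right (h.ne (by omega))⟩
    ⟨h.vtx_succ_mem_walkCurve le_rfl, D.vtx_mem_arc_left (h.ne (by omega))⟩)
  rintro z ⟨hz, hzm⟩
  obtain ⟨j, hj, hzj⟩ := mem_walkCurve.1 hz
  rcases eq_or_ne j 0 with rfl | hj0
  · exact Or.inl (D.eq_vtx_of_mem_arcs (h.distinct (by omega)) hzm hzj)
  rcases eq_or_ne j (m + 1) with rfl | hjm
  · exact Or.inr (D.eq_vtx_of_mem_arcs (h.distinct (by omega)) hzj hzm)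
  have hlast := h.disjoint j (by omega) (m + 2) (by omega) (h.distinct (by omega))
  rw [h.closed] at hlast
  exact (disjoint_left.1 (hlast (h.distinct (by omega))) hzj hzm).elim

theorem exists_notMem_outside_of_mem (P : PlaneChart X) {z : X}
    (hz : z ∈ D.walkCurve e (m + 2)) :
    ∃ i j k, Distinct (e i) (e j) (e k) ∧ z ∉ D.outside P (e i) (e j) (e k) := by
  have hmem : ∀ {i j : ℕ} (k : ℕ), z ∈ D.arc (e i) (e j) → z ∉ D.outside P (e i) (e j) (e k) :=
    fun k hz hO => hO.1 (D.mem_tri.2 (Or.inl hz))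
  rw [h.walkCurve_eq] at hz
  rcases hz with hz | hz
  · obtain ⟨j, hj, hzj⟩ := mem_walkCurve.1 hz
    rcases eq_or_ne j 0 with rfl | hj0
    · exact ⟨0, 1, 2, h.distinct (by omega), hmem 2 hzj⟩
    · exact ⟨j, j + 1, 0, h.distinct (by omega), hmem 0 hzj⟩
  · exact ⟨m + 2, 0, 1, h.distinct (by omega), hmem 1 hz⟩

variable [T2Space X] {P : PlaneChart X} (hD : D.ConvexAway P)
include hD

theorem hasLogs_walkCurve (hk : k ≤ m + 1) : P.HasLogs (D.walkCurve e k) := by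
  induction k with
  | zero =>
    rw [walkCurve, accumulate_zero_nat]
    exact hD.hasLogs_arc (h.ne (by omega))
  | succ k ih =>
    rw [walkCurve_succ]
    exact (ih (by omega)).union (hD.hasLogs_arc (h.ne (by omega)))
      (h.walkCurve_inter_arc (by omega))

theorem turn_walkCurve (hk : k ≤ m + 1) {z : X} (hz : z ∉ D.walkCurve e k) :
    P.turn (D.walkCurve e k) (D.vtx (e 0)) (D.vtx (e (k + 1))) z =
      ∑ j ∈ Finset.range (k + 1), D.arcTurn P (e j) (e (j + 1)) z := by
  induction k with
  | zero => simp only [walkCurve, accumulate_zero_nat, zero_add, Finset.sum_range_one, arcTurn]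
  | succ k ih =>
    have hlogs := h.hasLogs_walkCurve hD hk
    rw [walkCurve_succ] at hz hlogs ⊢
    have hne : e (k + 1) ≠ e (k + 2) := h.ne (by omega)
    have hstart := h.vtx_zero_mem_walkCurve k
    have hmid : D.vtx (e (k + 1)) ∈ D.walkCurve e k := h.vtx_succ_mem_walkCurve (by omega)
    rw [Finset.sum_range_succ, ← ih (by omega) fun hzk => hz (Or.inl hzk), arcTurn,
      (h.hasLogs_walkCurve hD (by omega)).turn_eq_turn_of_subset hlogs subset_union_left hstart
        hmid hz,
      (hD.hasLogs_arc hne).turn_eq_turn_of_subset hlogs subset_union_right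
        (D.vtx_mem_arc_left hne) (D.vtx_mem_arc_right hne) hz,
      hlogs.turn_add_turn (Or.inl hstart) (Or.inl hmid) (Or.inr (D.vtx_mem_arc_right hne)) hz]

theorem isJordanPair : P.IsJordanPair (D.walkCurve e (m + 1)) (D.arc (e (m + 2)) (e 0))
    (D.vtx (e 0)) (D.vtx (e (m + 2))) where
  left := h.hasLogs_walkCurve hD le_rfl
  right := hD.hasLogs_arc (h.ne (by omega))
  inter_eq := h.walkCurve_inter_last_arc
  ne := D.vtx_inj.ne (h.ne (by omega))

theorem exists_notMem_outside_of_winding_ne_zero {z : X} (hz : z ∉ D.walkCurve e (m + 2))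
    (hw : P.winding (D.walkCurve e (m + 1)) (D.arc (e (m + 2)) (e 0)) (D.vtx (e 0))
      (D.vtx (e (m + 2))) z ≠ 0) :
    ∃ i j k, Distinct (e i) (e j) (e k) ∧ z ∉ D.outside P (e i) (e j) (e k) := by
  rw [h.walkCurve_eq] at hz
  rw [PlaneChart.winding, h.turn_walkCurve hD le_rfl fun hzw => hz (Or.inl hzw), ← arcTurn,
    sum_arcTurn_add_arcTurn_eq_sum_triWinding] at hw
  obtain ⟨j, hj, hwj⟩ := Finset.exists_ne_zero_of_sum_ne_zero hw
  rw [Finset.mem_range] at hj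
  exact ⟨0, j + 1, j + 2, h.distinct (by omega), fun hO => hwj hO.2⟩

variable [CompactSpace X] [LocallyConnectedSpace X]

theorem winding_ne_zero {q : X} (hq : q ∉ D.walkCurve e (m + 2))
    (hpole : P.pole ∉ connectedComponentIn (D.walkCurve e (m + 2))ᶜ q) :
    P.winding (D.walkCurve e (m + 1)) (D.arc (e (m + 2)) (e 0)) (D.vtx (e 0))
      (D.vtx (e (m + 2))) q ≠ 0 := by
  rw [h.walkCurve_eq] at hq hpole
  exact fun hw => hpole ((h.isJordanPair hD).pole_mem_connectedComponentIn hq hw)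

theorem mem_connectedComponentIn {q z : X} (hq : q ∉ D.walkCurve e (m + 2))
    (hpole : P.pole ∉ connectedComponentIn (D.walkCurve e (m + 2))ᶜ q)
    (hz : z ∉ D.walkCurve e (m + 2))
    (hpole' : P.pole ∉ connectedComponentIn (D.walkCurve e (m + 2))ᶜ z) :
    z ∈ connectedComponentIn (D.walkCurve e (m + 2))ᶜ q := by
  have hwq := h.winding_ne_zero hD hq hpole
  have hwz := h.winding_ne_zero hD hz hpole'
  rw [h.walkCurve_eq] at hq hz ⊢
  exact (h.isJordanPair hD).mem_connectedComponentIn_of_winding_ne_zero hq hz hwq hwz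

theorem exists_notMem_outside {q z : X} (hq : q ∉ D.walkCurve e (m + 2))
    (hpole : P.pole ∉ connectedComponentIn (D.walkCurve e (m + 2))ᶜ q)
    (hz : z ∈ connectedComponentIn (D.walkCurve e (m + 2))ᶜ q ∪ D.walkCurve e (m + 2)) :
    ∃ i j k, Distinct (e i) (e j) (e k) ∧ z ∉ D.outside P (e i) (e j) (e k) := by
  rcases hz with hz | hz
  · have hw := h.winding_ne_zero hD hq hpole
    have hz' := connectedComponentIn_subset _ _ hz
    refine h.exists_notMem_outside_of_winding_ne_zero hD hz' ?_
    rw [h.walkCurve_eq] at hz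
    rwa [(h.isJordanPair hD).winding_eq_of_mem_connectedComponentIn hz]
  · exact h.exists_notMem_outside_of_mem P hz

end IsPolygon

/-- The cyclic sequence `c` unrolled along the natural numbers. -/
def unroll {m : ℕ} (c : Fin (m + 3) → Fin n) (k : ℕ) : Fin n := c (Fin.ofNat (m + 3) k)

theorem unroll_succ {m : ℕ} (c : Fin (m + 3) → Fin n) (k : ℕ) :
    unroll c (k + 1) = c (Fin.ofNat (m + 3) k + 1) :=
  congrArg c (Fin.ext (by simp [Fin.val_add]))

theorem cycCurve_eq_walkCurve (D : GoodDrawing n X) {m : ℕ} (c : Fin (m + 3) → Fin n) :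
    D.cycCurve c = D.walkCurve (unroll c) (m + 2) := by
  ext z
  rw [cycCurve, mem_iUnion, mem_walkCurve]
  constructor
  · rintro ⟨i, hi⟩
    refine ⟨i, Nat.lt_succ_iff.1 i.2, ?_⟩
    rwa [unroll_succ, unroll, Fin.ofNat_val_eq_self]
  · rintro ⟨k, -, hk⟩
    exact ⟨Fin.ofNat (m + 3) k, by rwa [unroll_succ] at hk⟩

theorem arc_subset_image {D : GoodDrawing n X} {W : Set (Fin n)} {a b : Fin n} (ha : a ∈ W)
    (hb : b ∈ W) (hab : a ≠ b) : D.arc a b ⊆ D.image W := fun z hz => by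
  refine Or.inr ?_
  simp only [mem_iUnion]
  exact ⟨a, ha, b, hb, hab, hz⟩

theorem disjoint_of_isFaceOf {A G : Set X} (hG : IsFaceOf A G) : Disjoint A G := by
  obtain ⟨q, -, rfl⟩ := hG
  exact disjoint_compl_right.mono_right (connectedComponentIn_subset _ _)

namespace ConvexAway

variable [T2Space X] [CompactSpace X] {D : GoodDrawing n X}
  {P : PlaneChart X} (hD : D.ConvexAway P) {W : Set (Fin n)} {F G Δ : Set X} {a b c : Fin n}
include hD

theorem subset_outside_of_isFaceOf (hG : IsFaceOf (D.image W) G) (hpole : P.pole ∈ G)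
    (ha : a ∈ W) (hb : b ∈ W) (hc : c ∈ W) (h : Distinct a b c) : G ⊆ D.outside P a b c := by
  refine hD.subset_outside_of_isPreconnected h ?_ (fun z hz ht => ?_) hpole (hD.pole_mem_outside h)
  · obtain ⟨q, -, rfl⟩ := hG
    exact isPreconnected_connectedComponentIn
  · obtain ⟨s, hs, t, ht, hst, hzst⟩ := exists_mem_arc_of_mem_tri h ha hb hc ht
    exact disjoint_left.1 (disjoint_of_isFaceOf hG) (arc_subset_image hs ht hst hzst) hz

variable [LocallyConnectedSpace X]

/-- Where two edges of `W` cross, the four ends span triangles which together cover a neighbourhood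
of the crossing, so that no crossing lies on the boundary of the outer face. -/
theorem disjoint_arcs_of_subset_frontier {d : Fin n} (hG : IsFaceOf (D.image W) G)
    (hpole : P.pole ∈ G) (ha : a ∈ W) (hb : b ∈ W) (hc : c ∈ W) (hd : d ∈ W)
    (hac : Distinct a b c) (had : Distinct a b d) (hcd : c ≠ d)
    (hab : D.arc a b ⊆ frontier G) : Disjoint (D.arc a b) (D.arc c d) := by
  refine disjoint_left.2 fun z hz hz' => ?_
  have hzO : z ∈ D.openArc a b := D.mem_openArc_of_mem_arcs
    ⟨hcd, had.ne₃₁, hac.ne₃₁.symm⟩ ⟨hcd, had.ne₂₃.symm, hac.ne₂₃⟩ hz hz'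
  obtain ⟨w, hwG, hw⟩ := ((mem_closure_iff_frequently.1 (hab hz).1).and_eventually
    (hD.eventually_notMem_outside_or_notMem_outside hac had hzO
      (hD.orient_eq_neg_of_mem_arcs hac had hcd hz hz'))).exists
  exact hw.elim (· (hD.subset_outside_of_isFaceOf hG hpole ha hb hc hac hwG))
    (· (hD.subset_outside_of_isFaceOf hG hpole ha hb hd had hwG))

theorem isPolygon_unroll {m : ℕ} {c : Fin (m + 3) → Fin n} (hinj : Function.Injective c)
    (hcW : ∀ i, c i ∈ W) (hG : IsFaceOf (D.image W) G) (hpole : P.pole ∈ G)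
    (hfr : frontier G = D.cycCurve c) : D.IsPolygon m (unroll c) where
  injOn := by
    intro i hi j hj hij
    have := congrArg Fin.val (hinj hij)
    rwa [Fin.val_ofNat, Fin.val_ofNat, Nat.mod_eq_of_lt hi, Nat.mod_eq_of_lt hj] at this
  closed := congrArg c (Fin.ext (by simp))
  disjoint := by
    intro j hj k _ hjk hjk'
    have hne : unroll c k ≠ unroll c (k + 1) := by
      rw [unroll_succ]
      exact hinj.ne (by simp)
    refine hD.disjoint_arcs_of_subset_frontier hG hpole (hcW _) (hcW _) (hcW _) (hcW _) hjk hjk' hne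
      fun z hz => ?_
    rw [hfr, cycCurve_eq_walkCurve]
    exact mem_walkCurve.2 ⟨j, Nat.lt_succ_iff.1 hj, hz⟩

theorem exists_notMem_outside_of_isHull (hpole : P.pole ∈ F) (hΔ : D.IsHull F W Δ) {z : X}
    (hz : z ∈ Δ) : ∃ a ∈ W, ∃ b ∈ W, ∃ c ∈ W, Distinct a b c ∧ z ∉ D.outside P a b c := by
  obtain ⟨m, c, hinj, hcW, ⟨G, hG, hFG, hfr⟩, ⟨q, hq, rfl⟩, hdisj⟩ := hΔ
  have h := hD.isPolygon_unroll hinj hcW hG (hFG hpole) hfr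
  have hq_pole : P.pole ∉ connectedComponentIn (D.cycCurve c)ᶜ q := fun hmem =>
    disjoint_left.1 hdisj hpole (Or.inl hmem)
  rw [cycCurve_eq_walkCurve] at hz hq hq_pole
  obtain ⟨i, j, k, hijk, hzO⟩ := h.exists_notMem_outside hD hq hq_pole hz
  exact ⟨_, hcW _, _, hcW _, _, hcW _, hijk, hzO⟩

theorem arc_subset_of_isHull (hpole : P.pole ∈ F) (hΔ : D.IsHull F W Δ) (ha : a ∈ W) (hb : b ∈ W)
    (hab : a ≠ b) : D.arc a b ⊆ Δ := by
  obtain ⟨m, c, hinj, hcW, ⟨G, hG, hFG, hfr⟩, ⟨q, hq, rfl⟩, hdisj⟩ := hΔ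
  have h := hD.isPolygon_unroll hinj hcW hG (hFG hpole) hfr
  have hq_pole : P.pole ∉ connectedComponentIn (D.cycCurve c)ᶜ q := fun hmem =>
    disjoint_left.1 hdisj hpole (Or.inl hmem)
  intro z hz
  by_cases hzc : z ∈ D.cycCurve c
  · exact Or.inr hzc
  have hzG : z ∉ G :=
    disjoint_left.1 (disjoint_of_isFaceOf hG) (arc_subset_image ha hb hab hz)
  have hz_pole : P.pole ∉ connectedComponentIn (D.cycCurve c)ᶜ z := fun hmem => by
    obtain ⟨w, hw, hwG⟩ := exists_mem_frontier_of_isPreconnected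
      isPreconnected_connectedComponentIn ⟨P.pole, hmem, hFG hpole⟩
      ⟨z, mem_connectedComponentIn hzc, hzG⟩
    exact connectedComponentIn_subset _ _ hw (hfr ▸ hwG)
  rw [cycCurve_eq_walkCurve] at hzc hq hq_pole hz_pole ⊢
  exact Or.inl (h.mem_connectedComponentIn hD hq hq_pole hzc hz_pole)

end ConvexAway

end GoodDrawing

/-! ### Local sides and side sets -/

namespace GoodDrawing

section Sides

variable {n : ℕ} {X : Type*} [TopologicalSpace X] {D : GoodDrawing n X} {F : Set X} {u v w : Fin n}
  {p : X} {C : Fin 2 → Set X} {i : Fin 2}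

theorem OnSide.distinct (h : D.OnSide F u v p C i w) (huv : u ≠ v) : Distinct u v w :=
  ⟨huv, h.2.1.symm, h.1⟩

theorem exists_onSide_of_two_lt_ncard (huv : u ≠ v) (h : 2 < (D.SideSet F u v p C i).ncard) :
    ∃ w, D.OnSide F u v p C i w := by
  obtain ⟨w, hw, hwuv⟩ := exists_mem_notMem_of_ncard_lt_ncard ((ncard_pair huv).trans_lt h)
  exact ⟨w, hw.resolve_left hwuv⟩

end Sides

theorem FaceConvex.convexAway {n : ℕ} {X : Type*} [TopologicalSpace X] {D : GoodDrawing n X}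
    {F : Set X} {P : PlaneChart X} (hF : D.FaceConvex F) (hpole : P.pole ∈ F) :
    D.ConvexAway P where
  pole_notMem_arc _ _ hab harc :=
    disjoint_left.1 (disjoint_of_isFaceOf hF.1)
      (arc_subset_image (mem_univ _) (mem_univ _) hab harc) hpole
  convexDisc a b c h Δ hΔ hpoleΔ :=
    hF.2 a b c h.ne₁₂ h.ne₃₁.symm h.ne₂₃ Δ hΔ fun hsub => hpoleΔ (hsub hpole)

namespace ConvexAway

variable {n : ℕ} {X : Type*} [TopologicalSpace X] [T2Space X] [CompactSpace X]
  [LocallyConnectedSpace X] {D : GoodDrawing n X} {P : PlaneChart X} (hD : D.ConvexAway P)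
  {F : Set X} {u v w w₀ w₁ : Fin n} {p : X} {C : Fin 2 → Set X} {i : Fin 2}
include hD

theorem eq_inside_union_tri_of_isClosedSide (h : Distinct u v w) {Δ : Set X}
    (hΔ : IsClosedSide (D.tri u v w) Δ) (hO : ¬D.outside P u v w ⊆ Δ) :
    Δ = D.inside P u v w ∪ D.tri u v w := by
  obtain ⟨q, hq, rfl⟩ := hΔ
  rcases mem_tri_or_inside_or_outside D P u v w q with hqt | hqI | hqO
  · exact (hq hqt).elim
  · rw [hD.connectedComponentIn_eq_inside h hqI]
  · refine (hO ?_).elim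
    rw [connectedComponentIn_eq (hD.pole_mem_connectedComponentIn_of_mem_outside h hqO),
      hD.connectedComponentIn_eq_outside h]
    exact subset_union_left

theorem eventually_notMem_outside_of_onSide (hF : D.IsFace F) (hpole : P.pole ∈ F) (huv : u ≠ v)
    (h : D.OnSide F u v p C i w) : ∀ᶠ z in 𝓝 p, z ∈ C i → z ∉ D.outside P u v w := by
  have huvw := h.distinct huv
  obtain ⟨-, -, Δ, hΔ, hFΔ, V, hV, hCV⟩ := h
  have hFO := hD.subset_outside_of_isFaceOf hF hpole (mem_univ u) (mem_univ v) (mem_univ w) huvw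
  rw [hD.eq_inside_union_tri_of_isClosedSide huvw hΔ fun hO => hFΔ (hFO.trans hO)] at hCV
  filter_upwards [hV] with z hzV hzC hzO
  exact (hCV ⟨hzC, hzV⟩).elim (disjoint_right.1 (D.disjoint_inside_outside P u v w) hzO) hzO.1

/-- If both triangles lay on the same side of `uv`, then points close to `p` on the other side would
be outside both of them, although each local side is covered by one of the triangles. -/
theorem orient_eq_neg_of_onSide (hF : D.IsFace F) (hpole : P.pole ∈ F) (huv : u ≠ v)
    (hC : D.LocalSides u v p C) (h₀ : D.OnSide F u v p C 0 w₀) (h₁ : D.OnSide F u v p C 1 w₁) :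
    D.orient P u v w₁ = -D.orient P u v w₀ := by
  obtain ⟨hp, hpu, hpv, V, hV, hCV, -⟩ := hC
  have hp' : p ∈ D.openArc u v := ⟨hp, not_or_intro hpu hpv⟩
  have hd₀ := h₀.distinct huv
  have hd₁ := h₁.distinct huv
  rcases hD.orient_eq_or_eq_neg hd₀ hd₁ hp' with ⟨-, heq⟩ | ⟨hneg, -⟩
  · have hnear := heq.and <| (hD.eventually_mem_arc_of_mem_tri hd₁ hp').and <|
      (hD.eventually_notMem_outside_of_onSide hF hpole huv h₀).and <|
      (hD.eventually_notMem_outside_of_onSide hF hpole huv h₁).and hV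
    obtain ⟨z, hzO, hzeq, hzt, hz₀, hz₁, hzV⟩ := ((mem_closure_iff_frequently.1
      (hD.openArc_subset_closure_outside hd₀ hp')).and_eventually hnear).exists
    have hz : z ∉ D.arc u v := fun hz => hzO.1 (D.mem_tri.2 (Or.inl hz))
    have hzO₁ : z ∈ D.outside P u v w₁ := ⟨fun hz' => hz (hzt hz'), hzeq ▸ hzO.2⟩
    have hzC : z ∈ C 0 ∪ C 1 := hCV ▸ ⟨hzV, hz⟩
    exact (hzC.elim (hz₀ · hzO) (hz₁ · hzO₁)).elim
  · exact hneg

theorem exists_sideSet_subset_halfPlane (hF : D.IsFace F) (hpole : P.pole ∈ F) (huv : u ≠ v)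
    (hC : D.LocalSides u v p C) (h₀ : D.OnSide F u v p C 0 w₀) (h₁ : D.OnSide F u v p C 1 w₁) :
    ∃ ε, D.SideSet F u v p C 0 ⊆ D.halfPlane P ε u v ∧
      D.SideSet F u v p C 1 ⊆ D.halfPlane P ε v u := by
  have hneg : ∀ {w w'}, D.OnSide F u v p C 0 w → D.OnSide F u v p C 1 w' →
      D.orient P u v w' = -D.orient P u v w :=
    fun h h' => hD.orient_eq_neg_of_onSide hF hpole huv hC h h'
  have hpos := mul_self_pos.2 (hD.orient_ne_zero (h₀.distinct huv))
  refine ⟨D.orient P u v w₀, ?_, ?_⟩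
  · rintro w ((rfl | rfl) | hw)
    · exact Or.inl rfl
    · exact Or.inr (Or.inl rfl)
    · refine Or.inr (Or.inr ⟨hw.distinct huv, ?_⟩)
      rwa [neg_inj.1 ((hneg hw h₁).symm.trans (hneg h₀ h₁))]
  · rintro w ((rfl | rfl) | hw)
    · exact Or.inr (Or.inl rfl)
    · exact Or.inl rfl
    · refine Or.inr (Or.inr ⟨(hw.distinct huv).swap, ?_⟩)
      rwa [hD.orient_swap (hw.distinct huv), hneg h₀ hw, neg_neg]

end ConvexAway

end GoodDrawing

/-- The convex hulls of the two sides of `uv` intersect exactly in the arc `D[uv]`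
together with the points of `u` and `v`. -/
theorem hulls_intersect_in_edge (n : ℕ) (D : GoodDrawing n SpherePt)
    (F : Set SpherePt) (hFC : D.FaceConvex F) (u v : Fin n) (huv : u ≠ v)
    (p : SpherePt) (C : Fin 2 → Set SpherePt) (hC : D.LocalSides u v p C)
    (h₀ : 3 ≤ (D.SideSet F u v p C 0).ncard) (h₁ : 3 ≤ (D.SideSet F u v p C 1).ncard)
    (Δ₀ Δ₁ : Set SpherePt)
    (hΔ₀ : D.IsHull F (D.SideSet F u v p C 0) Δ₀)
    (hΔ₁ : D.IsHull F (D.SideSet F u v p C 1) Δ₁) :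
    Δ₀ ∩ Δ₁ = D.arc u v ∪ {D.vtx u, D.vtx v} := by
  obtain ⟨f, hf⟩ : F.Nonempty := by
    obtain ⟨q, hq, rfl⟩ := hFC.1
    exact ⟨q, mem_connectedComponentIn hq⟩
  have hD : D.ConvexAway (sphereChart f) := hFC.convexAway hf
  obtain ⟨w₀, hw₀⟩ := GoodDrawing.exists_onSide_of_two_lt_ncard huv h₀
  obtain ⟨w₁, hw₁⟩ := GoodDrawing.exists_onSide_of_two_lt_ncard huv h₁
  obtain ⟨ε, hε₀, hε₁⟩ := hD.exists_sideSet_subset_halfPlane hFC.1 hf huv hC hw₀ hw₁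
  rw [union_eq_left.2 (pair_subset (D.vtx_mem_arc_left huv) (D.vtx_mem_arc_right huv))]
  refine Subset.antisymm (fun z hz => ?_) (subset_inter
    (hD.arc_subset_of_isHull hf hΔ₀ (Or.inl (Or.inl rfl)) (Or.inl (Or.inr rfl)) huv)
    (hD.arc_subset_of_isHull hf hΔ₁ (Or.inl (Or.inl rfl)) (Or.inl (Or.inr rfl)) huv))
  obtain ⟨a, ha, b, hb, c, hc, habc, habcz⟩ := hD.exists_notMem_outside_of_isHull hf hΔ₀ hz.1
  obtain ⟨r, hr, s, hs, t, ht, hrst, hrstz⟩ := hD.exists_notMem_outside_of_isHull hf hΔ₁ hz.2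
  exact hD.mem_arc_of_notMem_outside huv (hε₀ ha) (hε₀ hb) (hε₀ hc) (hε₁ hr) (hε₁ hs) (hε₁ ht)
    habc hrst habcz hrstz

end
end

section
/- Let n ≥ 1 and let G be a simple graph with vertex set {1, 2, …, n}. Suppose that there are no four vertices i < j < k < ℓ such that ik, iℓ, and jℓ are all edges of G. Then the number of edges of G is at most 3n⌈log₂ n⌉. -/
/-!
Call an edge `il` with `i < l` *doubling from the left* if it is at least twice as long as every
shorter edge `ik` with `i < k < l`, and *doubling from the right* if it is at least twice as long as
every shorter edge `jl` with `i < j < l`. The lengths of the edges doubling from the left at a fixed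
left endpoint lie in `[1, n)` and at least double from one to the next, so there are at most
`⌈log₂ n⌉` of them; likewise on the right. An edge `il` that is neither has edges `ik` and `jl`
covering more than half of it each, so that `j < k`, and `i < j < k < l` is the forbidden pattern.
Hence there are at most `2n⌈log₂ n⌉` edges.
-/

open Finset

theorem log_lt_log_of_mul_le {b x y : ℕ} (hb : 1 < b) (hx : x ≠ 0) (hxy : b * x ≤ y) :
    Nat.log b x < Nat.log b y := by
  calc Nat.log b x < Nat.log b x + 1 := Nat.lt_succ_self _
    _ = Nat.log b (x * b) := (Nat.log_mul_base hb hx).symm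
    _ ≤ Nat.log b y := Nat.log_mono_right (by rwa [mul_comm])

theorem log_lt_clog {b m n : ℕ} (hb : 1 < b) (hm : m ≠ 0) (hmn : m < n) :
    Nat.log b m < Nat.clog b n :=
  Nat.log_lt_of_lt_pow hm (hmn.trans_le (Nat.le_pow_clog hb n))

theorem ncard_le_card_mul_clog_of_mul_le {α β : Type*} [Fintype β] {b n : ℕ} (hb : 1 < b)
    {s : Set α} (p : α → β) (d : α → ℕ) (hd₀ : ∀ x ∈ s, d x ≠ 0)
    (hdn : ∀ x ∈ s, d x < n)
    (hs : ∀ x ∈ s, ∀ y ∈ s, p x = p y → x ≠ y → b * d x ≤ d y ∨ b * d y ≤ d x) :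
    s.ncard ≤ Fintype.card β * Nat.clog b n := by
  let t : Finset (β × ℕ) := univ ×ˢ range (Nat.clog b n)
  have hmaps : ∀ x ∈ s, (p x, Nat.log b (d x)) ∈ (t : Set (β × ℕ)) := fun x hx => by
    simpa [t] using log_lt_clog hb (hd₀ x hx) (hdn x hx)
  have hinj : Set.InjOn (fun x => (p x, Nat.log b (d x))) s := by
    intro x hx y hy hxy
    obtain ⟨hp, hlog⟩ := Prod.mk.inj hxy
    by_contra hne
    rcases hs x hx y hy hp hne with hle | hle
    · exact (log_lt_log_of_mul_le hb (hd₀ x hx) hle).ne hlog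
    · exact (log_lt_log_of_mul_le hb (hd₀ y hy) hle).ne' hlog
  calc s.ncard ≤ (t : Set (β × ℕ)).ncard :=
        Set.ncard_le_ncard_of_injOn _ hmaps hinj t.finite_toSet
    _ = Fintype.card β * Nat.clog b n := by
        rw [Set.ncard_coe_finset, card_product, card_univ, card_range]

theorem ncard_edgeSet_eq_ncard_lt_and_adj {V : Type*} [LinearOrder V] (G : SimpleGraph V) :
    G.edgeSet.ncard = {e : V × V | e.1 < e.2 ∧ G.Adj e.1 e.2}.ncard := by
  have himage : G.edgeSet = (fun e => s(e.1, e.2)) '' {e : V × V | e.1 < e.2 ∧ G.Adj e.1 e.2} := by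
    ext e
    induction e with | _ x y
    constructor
    · intro hxy
      rcases (SimpleGraph.Adj.ne hxy).lt_or_gt with hlt | hgt
      · exact ⟨(x, y), ⟨hlt, hxy⟩, rfl⟩
      · exact ⟨(y, x), ⟨hgt, SimpleGraph.Adj.symm hxy⟩, Sym2.eq_swap⟩
    · rintro ⟨e, ⟨-, hadj⟩, he⟩
      exact he ▸ hadj
  have hinj : Set.InjOn (fun e => s(e.1, e.2)) {e : V × V | e.1 < e.2 ∧ G.Adj e.1 e.2} := by
    rintro ⟨a, b⟩ ⟨hab, -⟩ ⟨c, d⟩ ⟨hcd, -⟩ heq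
    rcases Sym2.eq_iff.mp heq with ⟨rfl, rfl⟩ | ⟨rfl, rfl⟩
    · rfl
    · exact absurd hab hcd.not_gt
  rw [himage, hinj.ncard_image]

section LinearOrder

variable {V : Type*} [LinearOrder V] [LocallyFiniteOrder V]

theorem card_Ico_ne_zero {i l : V} (hil : i < l) : #(Ico i l) ≠ 0 :=
  card_ne_zero.mpr (nonempty_Ico.mpr hil)

theorem card_Ico_lt_card [Fintype V] (i l : V) : #(Ico i l) < Fintype.card V :=
  card_lt_univ_of_notMem right_notMem_Ico

theorem lt_of_card_Ico_lt_two_mul {i j k l : V} (hij : i ≤ j) (hkl : k ≤ l)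
    (hk : #(Ico i l) < 2 * #(Ico i k)) (hj : #(Ico i l) < 2 * #(Ico j l)) : j < k := by
  by_contra! hkj
  have hdisj : Disjoint (Ico i k) (Ico j l) :=
    (Ico_disjoint_Ico_consecutive i k l).mono_right (Ico_subset_Ico_left hkj)
  have hsub : Ico i k ∪ Ico j l ⊆ Ico i l :=
    union_subset (Ico_subset_Ico_right hkl) (Ico_subset_Ico_left hij)
  have hcard : #(Ico i k) + #(Ico j l) ≤ #(Ico i l) :=
    card_union_of_disjoint hdisj ▸ card_le_card hsub
  omega

/-- The pair `il` is an edge with `i < l` that is at least twice as long as every shorter edge with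
the same left endpoint `i`. The length of `il` is `#(Ico i l)`, which is `l - i` on `Fin n`. -/
def DoublingFromLeft (G : SimpleGraph V) (i l : V) : Prop :=
  i < l ∧ G.Adj i l ∧ ∀ k, i < k → k < l → G.Adj i k → 2 * #(Ico i k) ≤ #(Ico i l)

/-- The pair `il` is an edge with `i < l` that is at least twice as long as every shorter edge with
the same right endpoint `l`, lengths being measured as in `DoublingFromLeft`. -/
def DoublingFromRight (G : SimpleGraph V) (i l : V) : Prop :=
  i < l ∧ G.Adj i l ∧ ∀ j, i < j → j < l → G.Adj j l → 2 * #(Ico j l) ≤ #(Ico i l)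

theorem ncard_doublingFromLeft_le [Fintype V] (G : SimpleGraph V) :
    {e : V × V | DoublingFromLeft G e.1 e.2}.ncard ≤
      Fintype.card V * Nat.clog 2 (Fintype.card V) := by
  refine ncard_le_card_mul_clog_of_mul_le one_lt_two Prod.fst (fun e => #(Ico e.1 e.2))
    (fun e he => card_Ico_ne_zero he.1) (fun e _ => card_Ico_lt_card e.1 e.2) ?_
  rintro ⟨i, k⟩ ⟨hik, hadj_k, hk⟩ ⟨_, l⟩ ⟨hil, hadj_l, hl⟩ rfl hne
  have hkl : k ≠ l := fun h => hne (by rw [h])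
  rcases hkl.lt_or_gt with hlt | hgt
  · exact Or.inl (hl k hik hlt hadj_k)
  · exact Or.inr (hk l hil hgt hadj_l)

theorem ncard_doublingFromRight_le [Fintype V] (G : SimpleGraph V) :
    {e : V × V | DoublingFromRight G e.1 e.2}.ncard ≤
      Fintype.card V * Nat.clog 2 (Fintype.card V) := by
  refine ncard_le_card_mul_clog_of_mul_le one_lt_two Prod.snd (fun e => #(Ico e.1 e.2))
    (fun e he => card_Ico_ne_zero he.1) (fun e _ => card_Ico_lt_card e.1 e.2) ?_
  rintro ⟨i, l⟩ ⟨hil, hadj_i, hi⟩ ⟨j, _⟩ ⟨hjl, hadj_j, hj⟩ rfl hne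
  have hij : i ≠ j := fun h => hne (by rw [h])
  rcases hij.lt_or_gt with hlt | hgt
  · exact Or.inr (hi j hlt hjl hadj_j)
  · exact Or.inl (hj i hgt hil hadj_i)

theorem doublingFromLeft_or_doublingFromRight {G : SimpleGraph V}
    (h : ¬∃ i j k l : V, i < j ∧ j < k ∧ k < l ∧ G.Adj i k ∧ G.Adj i l ∧ G.Adj j l)
    {i l : V} (hil : i < l) (hadj : G.Adj i l) :
    DoublingFromLeft G i l ∨ DoublingFromRight G i l := by
  by_contra! ⟨hleft, hright⟩
  obtain ⟨k, -, hkl, hik_adj, hk⟩ :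
      ∃ k, i < k ∧ k < l ∧ G.Adj i k ∧ #(Ico i l) < 2 * #(Ico i k) := by
    simpa [DoublingFromLeft, hil, hadj] using hleft
  obtain ⟨j, hij, -, hjl_adj, hj⟩ :
      ∃ j, i < j ∧ j < l ∧ G.Adj j l ∧ #(Ico i l) < 2 * #(Ico j l) := by
    simpa [DoublingFromRight, hil, hadj] using hright
  have hjk : j < k := lt_of_card_Ico_lt_two_mul hij.le hkl.le hk hj
  exact h ⟨i, j, k, l, hij, hjk, hkl, hik_adj, hadj, hjl_adj⟩

theorem barany_furedi_edge_bound_general [Fintype V] (G : SimpleGraph V)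
    (h : ¬∃ i j k l : V, i < j ∧ j < k ∧ k < l ∧ G.Adj i k ∧ G.Adj i l ∧ G.Adj j l) :
    G.edgeSet.ncard ≤ 2 * Fintype.card V * Nat.clog 2 (Fintype.card V) := by
  let L : Set (V × V) := {e | DoublingFromLeft G e.1 e.2}
  let R : Set (V × V) := {e | DoublingFromRight G e.1 e.2}
  have hcover : {e : V × V | e.1 < e.2 ∧ G.Adj e.1 e.2} ⊆ L ∪ R := fun _ he =>
    doublingFromLeft_or_doublingFromRight h he.1 he.2
  calc G.edgeSet.ncard = {e : V × V | e.1 < e.2 ∧ G.Adj e.1 e.2}.ncard :=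
        ncard_edgeSet_eq_ncard_lt_and_adj G
    _ ≤ (L ∪ R).ncard := Set.ncard_le_ncard hcover
    _ ≤ L.ncard + R.ncard := Set.ncard_union_le L R
    _ ≤ Fintype.card V * Nat.clog 2 (Fintype.card V) +
          Fintype.card V * Nat.clog 2 (Fintype.card V) :=
        add_le_add (ncard_doublingFromLeft_le G) (ncard_doublingFromRight_le G)
    _ = 2 * Fintype.card V * Nat.clog 2 (Fintype.card V) := by ring

end LinearOrder

/-- **Bárány–Füredi Lemma 8.1.** If a simple graph on the linearly ordered vertex set
`{1, …, n}` has no four vertices `i < j < k < ℓ` with `ik`, `iℓ`, `jℓ` all edges, then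
it has at most `3n⌈log₂ n⌉` edges. -/
theorem barany_furedi_edge_bound (n : ℕ) (hn : 1 ≤ n) (G : SimpleGraph (Fin n))
    (h : ¬∃ i j k l : Fin n, i < j ∧ j < k ∧ k < l ∧ G.Adj i k ∧ G.Adj i l ∧ G.Adj j l) :
    G.edgeSet.ncard ≤ 3 * n * Nat.clog 2 n := by
  have hle : G.edgeSet.ncard ≤ 2 * n * Nat.clog 2 n := by
    simpa only [Fintype.card_fin] using barany_furedi_edge_bound_general G h
  exact hle.trans (by gcongr; norm_num)
end
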